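/- arXiv:1203.1955 — 2 statements merged into one kernel-verified Lean document; each statement's English description precedes it below -/
import Mathlib

section
/- Let R be a Cohen-Macaulay, complete, equicharacteristic commutative noetherian local ring with perfect residue field. Let X be any class of finitely generated R-modules with CM_0(R) ⊆ X ⊆ CM(R), and let Y be any class of finitely generated R-modules containing CM_0(R). Then V(⋂_{i>0, M ∈ X, N ∈ Y} Ann_R Ext_R^i(M,N)) = Sing R, i.e., a prime ideal p of R contains all the annihilators Ann_R Ext_R^i(M,N) (i > 0, M ∈ X, N ∈ Y) if and only if R_p is not regular. -/
open CategoryTheory IsLocalRing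

noncomputable section

/-- The `i`-th Tor module of two `R`-modules, as an object of `ModuleCat R`. -/
def TorMod (R : Type) [CommRing R] (i : ℕ) (M N : ModuleCat.{0} R) : ModuleCat.{0} R :=
  ((Tor (ModuleCat.{0} R) i).obj M).obj N

/-- The `i`-th Ext module of two `R`-modules, as an object of `ModuleCat R`. -/
def ExtMod (R : Type) [CommRing R] (i : ℕ) (M N : ModuleCat.{0} R) : ModuleCat.{0} R :=
  ((Ext R (ModuleCat.{0} R) i).obj (Opposite.op M)).obj N

/-- Integer-indexed Tor: `Tor_n = 0` for `n < 0`. -/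
def TorZ (R : Type) [CommRing R] (n : ℤ) (M N : ModuleCat.{0} R) : ModuleCat.{0} R :=
  if 0 ≤ n then TorMod R n.toNat M N else ModuleCat.of R PUnit

/-- Integer-indexed Ext: `Ext^n = 0` for `n < 0`. -/
def ExtZ (R : Type) [CommRing R] (n : ℤ) (M N : ModuleCat.{0} R) : ModuleCat.{0} R :=
  if 0 ≤ n then ExtMod R n.toNat M N else ModuleCat.of R PUnit

/-- The depth of a module `N` over a local ring `S`, defined as the infimum of the set of
integers `i` such that `Ext^i(k, N) ≠ 0`, where `k` is the residue field of `S`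
(`⊤` if no such `i` exists). -/
def moduleDepth (S : Type) [CommRing S] [IsLocalRing S] (N : Type) [AddCommGroup N]
    [Module S N] : ℕ∞ :=
  sInf {i : ℕ∞ | ∃ j : ℕ, i = (j : ℕ∞) ∧
    Nontrivial (ExtMod S j (ModuleCat.of S (ResidueField S)) (ModuleCat.of S N))}

/-- A local ring is regular if it is noetherian and its maximal ideal can be generated by
(Krull dimension of `S`)-many elements. -/
def IsRegularLocal (S : Type) [CommRing S] [IsLocalRing S] : Prop :=
  IsNoetherianRing S ∧ ∃ s : Finset S, Ideal.span (s : Set S) = maximalIdeal S ∧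
    (s.card : WithBot ℕ∞) = ringKrullDim S

/-- A local ring is Cohen-Macaulay if its depth (as a module over itself) equals its
Krull dimension. -/
def IsCMLocalRing (R : Type) [CommRing R] [IsLocalRing R] : Prop :=
  (moduleDepth R R : WithBot ℕ∞) = ringKrullDim R

/-- A module `M` over a local ring `R` is maximal Cohen-Macaulay if
`depth M_p ≥ dim R_p` for every prime ideal `p` of `R`. -/
def IsMCMModule (R : Type) [CommRing R] [IsLocalRing R] (M : Type) [AddCommGroup M]
    [Module R M] : Prop :=
  ∀ (p : Ideal R) [p.IsPrime],
    ringKrullDim (Localization.AtPrime p) ≤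
      (moduleDepth (Localization.AtPrime p) (LocalizedModule p.primeCompl M) : WithBot ℕ∞)

/-- Membership in `CM(R)`: finitely generated maximal Cohen-Macaulay modules. -/
def MemCM (R : Type) [CommRing R] [IsLocalRing R] (M : ModuleCat.{0} R) : Prop :=
  Module.Finite R M ∧ IsMCMModule R M

/-- Membership in `CM₀(R)`: finitely generated maximal Cohen-Macaulay modules that are
locally free on the punctured spectrum. -/
def MemCM0 (R : Type) [CommRing R] [IsLocalRing R] (M : ModuleCat.{0} R) : Prop :=
  Module.Finite R M ∧ IsMCMModule R M ∧
    ∀ (p : Ideal R) [p.IsPrime], p ≠ maximalIdeal R →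
      Module.Free (Localization.AtPrime p) (LocalizedModule p.primeCompl M)

/-- The singular locus of `R`: primes `p` such that `R_p` is not regular. -/
def singularLocus (R : Type) [CommRing R] : Set (PrimeSpectrum R) :=
  {p | ¬ IsRegularLocal (Localization.AtPrime p.asIdeal)}

/-- The nonfree locus of a module `M`: primes `p` such that `M_p` is not a free
`R_p`-module. -/
def nonfreeLocus (R : Type) [CommRing R] (M : Type) [AddCommGroup M] [Module R M] :
    Set (PrimeSpectrum R) :=
  {p | ¬ Module.Free (Localization.AtPrime p.asIdeal)
        (LocalizedModule p.asIdeal.primeCompl M)}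

/-- `K` is a first syzygy of `N` in a minimal free resolution: there is a surjection
`f : R^n → N` with `ker f ⊆ m·R^n` and `K ≅ ker f`. -/
def IsMinimalSyzygy1 (R : Type) [CommRing R] [IsLocalRing R] (N K : ModuleCat.{0} R) : Prop :=
  ∃ (n : ℕ) (f : (Fin n → R) →ₗ[R] N), Function.Surjective f ∧
    LinearMap.ker f ≤ (maximalIdeal R) • (⊤ : Submodule R (Fin n → R)) ∧
    Nonempty (K ≃ₗ[R] LinearMap.ker f)

/-- `K` is a `d`-th syzygy of `N` in a minimal free resolution. -/
def IsMinimalSyzygy (R : Type) [CommRing R] [IsLocalRing R] :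
    ℕ → ModuleCat.{0} R → ModuleCat.{0} R → Prop
  | 0, N, K => Nonempty ((K : Type) ≃ₗ[R] N)
  | d + 1, N, K => ∃ L : ModuleCat.{0} R, IsMinimalSyzygy1 R N L ∧ IsMinimalSyzygy R d L K

/-- A module is indecomposable if it is nonzero and is not isomorphic to the direct sum of
two nonzero modules. -/
def IndecomposableModule (R : Type) [CommRing R] (M : Type) [AddCommGroup M] [Module R M] :
    Prop :=
  Nontrivial M ∧ ∀ (A B : Type) [AddCommGroup A] [Module R A] [AddCommGroup B] [Module R B],
    Nonempty (M ≃ₗ[R] A × B) → (Subsingleton A ∨ Subsingleton B)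

/-!
If some `a ∉ p` annihilates `Ext¹` on `CM₀(R)`, then it annihilates `Ext^i(L, -)` for `i > dim R`
and `L` of finite length, since high syzygies of `L` lie in `CM₀(R)`. Dévissage along generators of
the maximal ideal, together with Krull's intersection theorem, extends this to `Ext^i(R ⧸ p, W)` for
finitely generated `W`, at the cost of a power of `a`. After inverting `a`, a syzygy of `R ⧸ p`
becomes projective, so the residue field of `R_p` has finite projective dimension and `R_p` is
regular.

Conversely, let `R_p` be regular, and let `k` be a coefficient field of `R`. The `k`-derivations
`R → κ(p)` with values in a finitely generated `R`-submodule form a vector space of dimension at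
most `dim R`: those killing generators of `p R_p` factor through `κ(p)`, which is finite over the
fraction field of a power series ring in `dim R ⧸ p` variables over the perfect field `k`. One can
therefore choose a system of parameters `x` on which no nonzero derivation of this kind vanishes.
Then `R` is finite over `A = k⟦x⟧`, and `Ω[R⁄A]` is annihilated by some `s ∉ p`. A power of `s` lies
in the Noether different of `R` over `A`, which annihilates `Ext^i(M, -)`, `i > 0`, for every
`A`-projective `M`, in particular for every maximal Cohen-Macaulay `M`.
-/

universe u

/-! ### Annihilators of Ext -/

section ExtMod

lemma mem_annihilator_homology_iff {R : Type u} [CommRing R]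
    (S : ShortComplex (ModuleCat.{u} R)) (r : R) :
    r ∈ Module.annihilator R S.homology ↔ ∀ z : S.X₂, S.g z = 0 → ∃ y : S.X₁, S.f y = r • z := by
  rw [S.moduleCatHomologyIso.toLinearEquiv.annihilator_eq, Module.mem_annihilator]
  have smul_mk_eq_zero_iff (z : LinearMap.ker S.g.hom) :
      (Submodule.Quotient.mk (r • z) :
          LinearMap.ker S.g.hom ⧸ LinearMap.range S.moduleCatToCycles) = 0 ↔
        ∃ y : S.X₁, S.f y = r • z.1 := by
    rw [Submodule.Quotient.mk_eq_zero]
    exact exists_congr fun _ ↦ Subtype.ext_iff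
  constructor
  · exact fun h z hz ↦ (smul_mk_eq_zero_iff ⟨z, hz⟩).1 (h (Submodule.Quotient.mk ⟨z, hz⟩))
  · intro h x
    obtain ⟨z, rfl⟩ := Submodule.Quotient.mk_surjective _ x
    exact (smul_mk_eq_zero_iff z).2 (h z.1 z.2)

lemma mem_annihilator_cohomology_iff {R : Type u} [CommRing R]
    (K : CochainComplex (ModuleCat.{u} R) ℕ) (n : ℕ) (r : R) :
    r ∈ Module.annihilator R (K.homology n) ↔
      ∀ z : K.X n, K.d n (n + 1) z = 0 →
        ∃ y : K.X ((ComplexShape.up ℕ).prev n), K.d ((ComplexShape.up ℕ).prev n) n y = r • z := by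
  have hnext : (ComplexShape.up ℕ).next n = n + 1 := CochainComplex.next ℕ n
  refine (mem_annihilator_homology_iff (K.sc n) r).trans (forall_congr' fun z ↦ ?_)
  change K.d n _ z = 0 → _ ↔ _
  rw [hnext]
  rfl

variable {R : Type} [CommRing R] {M : ModuleCat.{0} R} (P : ProjectiveResolution M)
  (N : ModuleCat.{0} R)

lemma annihilator_linearYonedaObj_homology_zero :
    Module.annihilator R ((P.complex.linearYonedaObj R N).homology 0) =
      Module.annihilator R (Abelian.Ext M N 0) := by
  ext r
  rw [mem_annihilator_cohomology_iff, Module.mem_annihilator]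
  let π : P.complex.X 0 ⟶ M := P.π.f 0
  have hπ : P.complex.d 1 0 ≫ π = 0 := P.complex_d_comp_π_f_zero
  have hd : (P.complex.linearYonedaObj R N).d ((ComplexShape.up ℕ).prev 0) 0 = 0 :=
    HomologicalComplex.shape _ _ _ (by simp)
  constructor
  · intro H e
    apply (Abelian.Ext.linearEquiv₀ (R := R)).injective
    rw [map_smul, map_zero]
    set f := Abelian.Ext.linearEquiv₀ (R := R) e
    obtain ⟨y, hy⟩ := H (π ≫ f) (by
      change P.complex.d 1 0 ≫ π ≫ f = 0
      rw [← Category.assoc, hπ, Limits.zero_comp])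
    rw [hd] at hy
    have hrf : r • (π ≫ f) = 0 := hy.symm
    rw [← Linear.comp_smul] at hrf
    have : Epi π := inferInstanceAs (Epi (P.π.f 0))
    exact (cancel_epi π).1 (hrf.trans Limits.comp_zero.symm)
  · intro H z hz
    refine ⟨0, ?_⟩
    obtain ⟨f, hf⟩ : ∃ f : M ⟶ N, π ≫ f = z := ⟨P.exact₀.desc z hz, P.exact₀.g_desc z hz⟩
    have hrf := H ((Abelian.Ext.linearEquiv₀ (R := R)).symm f)
    rw [← map_smul, LinearEquiv.map_eq_zero_iff] at hrf
    have hrz : r • (π ≫ f) = 0 := by rw [← Linear.comp_smul, hrf, Limits.comp_zero]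
    rw [hf] at hrz
    rw [map_zero]
    exact hrz.symm

lemma smul_extMk {n : ℕ} (r : R) (f : P.complex.X n ⟶ N) (hf : P.complex.d (n + 1) n ≫ f = 0) :
    r • P.extMk f (n + 1) rfl hf = P.extMk (r • f) (n + 1) rfl (by simp [hf]) := by
  rw [Abelian.Ext.smul_eq_comp_mk₀, ProjectiveResolution.extMk_comp_mk₀]
  congr 1

lemma annihilator_linearYonedaObj_homology_succ (n : ℕ) :
    Module.annihilator R ((P.complex.linearYonedaObj R N).homology (n + 1)) =
      Module.annihilator R (Abelian.Ext M N (n + 1)) := by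
  ext r
  rw [mem_annihilator_cohomology_iff, Module.mem_annihilator, CochainComplex.prev_nat_succ]
  constructor
  · intro H e
    obtain ⟨f, hf, rfl⟩ := P.extMk_surjective e (n + 2) rfl
    rw [smul_extMk, P.extMk_eq_zero_iff _ _ _ _ n rfl]
    exact H f hf
  · intro H z hz
    exact (P.extMk_eq_zero_iff _ _ _ _ n rfl).1
      ((smul_extMk P N r z hz).symm.trans (H (P.extMk z (n + 2) rfl hz)))

lemma annihilator_extMod (n : ℕ) (M N : ModuleCat.{0} R) :
    Module.annihilator R (ExtMod R n M N) = Module.annihilator R (Abelian.Ext M N n) := by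
  let P := ProjectiveResolution.of M
  let extIso : ExtMod R n M N ≅ (P.complex.linearYonedaObj R N).homology n := P.isoExt n N
  rw [extIso.toLinearEquiv.annihilator_eq]
  cases n with
  | zero => exact annihilator_linearYonedaObj_homology_zero P N
  | succ n => exact annihilator_linearYonedaObj_homology_succ P N n

lemma nontrivial_extMod_iff (n : ℕ) (M N : ModuleCat.{0} R) :
    Nontrivial (ExtMod R n M N) ↔ Nontrivial (Abelian.Ext M N n) := by
  rw [← not_iff_not, not_nontrivial_iff_subsingleton, not_nontrivial_iff_subsingleton,
    ← Module.annihilator_eq_top_iff (R := R), annihilator_extMod, Module.annihilator_eq_top_iff]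

end ExtMod

section Devissage

variable {R : Type u} [CommRing R]

lemma le_radical_annihilator_submodule {I : Ideal R} {N : Type*} [AddCommGroup N] [Module R N]
    (h : I ≤ (Module.annihilator R N).radical) (G : Submodule R N) :
    I ≤ (Module.annihilator R G).radical :=
  h.trans (Ideal.radical_mono (G.subtype.annihilator_le_of_injective G.injective_subtype))

lemma le_radical_annihilator_quotient {I : Ideal R} {N : Type*} [AddCommGroup N] [Module R N]
    (h : I ≤ (Module.annihilator R N).radical) (G : Submodule R N) :
    I ≤ (Module.annihilator R (N ⧸ G)).radical :=
  h.trans (Ideal.radical_mono (G.mkQ.annihilator_le_of_surjective G.mkQ_surjective))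

lemma exists_submodule_pow_mem_annihilator_isSMulRegular_quotient (y : R) (N : Type*)
    [AddCommGroup N] [Module R N] [IsNoetherian R N] :
    ∃ G : Submodule R N, (∃ c : ℕ, y ^ c ∈ Module.annihilator R G) ∧
      IsSMulRegular (N ⧸ G) y := by
  let torsion : ℕ →o Submodule R N :=
    ⟨fun c ↦ LinearMap.ker (LinearMap.lsmul R N (y ^ c)), by
      intro a b hab n hn
      obtain ⟨e, rfl⟩ := Nat.exists_eq_add_of_le hab
      rw [LinearMap.mem_ker, LinearMap.lsmul_apply] at hn ⊢
      rw [add_comm, pow_add, mul_smul, hn, smul_zero]⟩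
  obtain ⟨c, hc⟩ := monotone_stabilizes_iff_noetherian.2 ‹_› torsion
  refine ⟨torsion c, ⟨c, Module.mem_annihilator.2 fun g ↦ Subtype.ext g.2⟩, ?_⟩
  rw [isSMulRegular_iff_right_eq_zero_of_smul]
  intro n hn
  obtain ⟨n, rfl⟩ := Submodule.Quotient.mk_surjective _ n
  rw [← Submodule.Quotient.mk_smul, Submodule.Quotient.mk_eq_zero] at hn
  rw [Submodule.Quotient.mk_eq_zero, hc (c + 1) c.le_succ]
  change y ^ c • y • n = 0 at hn
  change y ^ (c + 1) • n = 0
  rw [pow_succ, mul_smul, hn]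

lemma mul_mem_annihilator_ext {S : ShortComplex (ModuleCat.{u} R)} (hS : S.ShortExact)
    {W : ModuleCat.{u} R} {i : ℕ} {s t : R} (hs : s ∈ Module.annihilator R (Abelian.Ext S.X₁ W i))
    (ht : t ∈ Module.annihilator R (Abelian.Ext S.X₃ W i)) :
    s * t ∈ Module.annihilator R (Abelian.Ext S.X₂ W i) := by
  rw [Module.mem_annihilator] at hs ht ⊢
  intro e
  have hse : (Abelian.Ext.mk₀ S.f).comp (s • e) (zero_add i) = 0 := by
    rw [Abelian.Ext.comp_smul, hs]
  obtain ⟨e₃, he₃⟩ := Abelian.Ext.contravariant_sequence_exact₂ hS W (s • e) hse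
  rw [mul_comm, mul_smul, ← he₃, ← Abelian.Ext.comp_smul, ht, Abelian.Ext.comp_zero]

lemma mul_mem_annihilator_ext_of_quotient {N : ModuleCat.{u} R} (G : Submodule R N)
    {W : ModuleCat.{u} R} {i : ℕ} {s t : R}
    (hs : s ∈ Module.annihilator R (Abelian.Ext (ModuleCat.of R G) W i))
    (ht : t ∈ Module.annihilator R (Abelian.Ext (ModuleCat.of R (N ⧸ G)) W i)) :
    s * t ∈ Module.annihilator R (Abelian.Ext N W i) := by
  let S : ShortComplex (ModuleCat.{u} R) :=
    ShortComplex.mk (X₂ := N) (ModuleCat.ofHom G.subtype) (ModuleCat.ofHom G.mkQ)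
      (by ext x; simp)
  have hS : S.ShortExact := ModuleCat.shortComplex_shortExact S
    (LinearMap.exact_subtype_mkQ G) G.injective_subtype G.mkQ_surjective
  exact mul_mem_annihilator_ext hS hs ht

variable [IsNoetherianRing R] [IsLocalRing R]

-- `s • Ext^i(N, W)` lies in `y ^ c • Ext^i(N, W)` for all `c`, so Krull's intersection theorem
-- applies.
lemma mem_annihilator_ext_of_isSMulRegular {N W : ModuleCat.{u} R} [Module.Finite R N]
    [Module.Finite R W] {i : ℕ} {s y : R} (hy : y ∈ maximalIdeal R) (hreg : IsSMulRegular N y)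
    (hs : ∀ c : ℕ, s ∈ Module.annihilator R
      (Abelian.Ext (ModuleCat.of R (QuotSMulTop (y ^ c) N)) W (i + 1))) :
    s ∈ Module.annihilator R (Abelian.Ext N W i) := by
  rw [Module.mem_annihilator]
  intro e
  have mem_pow_smul (c : ℕ) :
      s • e ∈ maximalIdeal R ^ c • (⊤ : Submodule R (Abelian.Ext N W i)) := by
    have hS := (hreg.pow c).smulShortComplex_shortExact
    obtain ⟨e', he'⟩ := Abelian.Ext.contravariant_sequence_exact₁ hS W (n₀ := i) (n₁ := i + 1)
      (s • e) (add_comm 1 i)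
      ((Abelian.Ext.comp_smul _ _ _ _).trans (Module.mem_annihilator.1 (hs c) _))
    have mk₀_comp (x : Abelian.Ext N W i) :
        (Abelian.Ext.mk₀ (y ^ c • 𝟙 N)).comp x (zero_add i) = y ^ c • x := by
      rw [Abelian.Ext.mk₀_smul, Abelian.Ext.smul_comp, Abelian.Ext.mk₀_id_comp]
    rw [show s • e = y ^ c • (show Abelian.Ext N W i from e') from he'.symm.trans (mk₀_comp e')]
    exact Submodule.smul_mem_smul (Ideal.pow_mem_pow hy c) trivial
  have krull := Ideal.iInf_pow_smul_eq_bot_of_isLocalRing (M := Abelian.Ext N W i)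
    (maximalIdeal R) Ideal.IsPrime.ne_top'
  rw [← Submodule.mem_bot R, ← krull, Submodule.mem_iInf]
  exact mem_pow_smul

lemma pow_mem_annihilator_ext_of_torsion {W : ModuleCat.{u} R} [Module.Finite R W] (D : Set ℕ)
    {s : R} (zs : List R) (hzs : ∀ z ∈ zs, z ∈ maximalIdeal R) (I : Ideal R)
    (hs : ∀ N : ModuleCat.{u} R, Module.Finite R N →
      I ⊔ Ideal.ofList zs ≤ (Module.annihilator R N).radical →
      ∀ i ∈ D, s ∈ Module.annihilator R (Abelian.Ext N W i))
    (N : ModuleCat.{u} R) [Module.Finite R N] (hN : I ≤ (Module.annihilator R N).radical) (i : ℕ)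
    (hi : ∀ j ≤ zs.length, i + j ∈ D) :
    s ^ 2 ^ zs.length ∈ Module.annihilator R (Abelian.Ext N W i) := by
  induction zs generalizing I N i with
  | nil => simpa using hs N ‹_› (by simpa using hN) i (hi 0 le_rfl)
  | cons z zs ih =>
    simp only [List.forall_mem_cons, List.length_cons] at hzs hi ⊢
    have ih_torsion := ih hzs.2 (I ⊔ Ideal.span {z})
      (by simpa only [Ideal.ofList_cons, sup_assoc] using hs)
    have le_radical (L : Type u) [AddCommGroup L] [Module R L]
        (hI : I ≤ (Module.annihilator R L).radical) {c : ℕ} (hc : z ^ c ∈ Module.annihilator R L) :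
        I ⊔ Ideal.span {z} ≤ (Module.annihilator R L).radical :=
      sup_le hI ((Ideal.span_singleton_le_iff_mem _).2 ⟨c, hc⟩)
    obtain ⟨G, ⟨c, hc⟩, hG⟩ := exists_submodule_pow_mem_annihilator_isSMulRegular_quotient z N
    rw [pow_succ 2, mul_two, pow_add]
    apply mul_mem_annihilator_ext_of_quotient G
    · have : Module.Finite R (ModuleCat.of R G) := inferInstanceAs (Module.Finite R G)
      exact ih_torsion (ModuleCat.of R G)
        (le_radical G (le_radical_annihilator_submodule hN G) hc) i fun j hj ↦ hi j (by lia)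
    · have : Module.Finite R (ModuleCat.of R (N ⧸ G)) := inferInstanceAs (Module.Finite R (N ⧸ G))
      refine mem_annihilator_ext_of_isSMulRegular hzs.1 hG fun c ↦ ?_
      have : Module.Finite R (ModuleCat.of R (QuotSMulTop (z ^ c) (N ⧸ G))) :=
        inferInstanceAs (Module.Finite R (QuotSMulTop (z ^ c) (N ⧸ G)))
      refine ih_torsion (ModuleCat.of R (QuotSMulTop (z ^ c) (N ⧸ G)))
        (le_radical (QuotSMulTop (z ^ c) (N ⧸ G)) ?_ (QuotSMulTop.mem_annihilator _ (z ^ c)))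
        (i + 1) fun j hj ↦ ?_
      · exact le_radical_annihilator_quotient (le_radical_annihilator_quotient hN G) _
      · rw [add_assoc, add_comm 1]
        exact hi (j + 1) (by lia)

end Devissage

/-! ### Depth -/

/-- `depth M ≥ n` for a module `M` over a local ring, in its homological form
`Ext^i(k, M) = 0` for all `i < n`. The zero module satisfies this for every `n`. -/
def DepthGE (S : Type u) [CommRing S] [IsLocalRing S] (M : Type u) [AddCommGroup M] [Module S M]
    (n : ℕ) : Prop :=
  ∀ i < n, Subsingleton (Abelian.Ext (ModuleCat.of S (ResidueField S)) (ModuleCat.of S M) i)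

lemma le_moduleDepth_iff_depthGE {S : Type} [CommRing S] [IsLocalRing S] {M : Type}
    [AddCommGroup M] [Module S M] {n : ℕ} : (n : ℕ∞) ≤ moduleDepth S M ↔ DepthGE S M n := by
  rw [moduleDepth, le_sInf_iff]
  constructor
  · intro h i hi
    rw [← not_nontrivial_iff_subsingleton, ← nontrivial_extMod_iff]
    exact fun hne ↦ (Nat.cast_lt.2 hi).not_ge (h i ⟨i, rfl, hne⟩)
  · rintro h _ ⟨j, rfl, hne⟩
    by_contra hlt
    rw [nontrivial_extMod_iff] at hne
    exact not_nontrivial_iff_subsingleton.2 (h j (Nat.cast_lt.1 (not_le.1 hlt))) hne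

lemma ringKrullDim_le_moduleDepth_iff_depthGE {S : Type} [CommRing S] [IsLocalRing S] {M : Type}
    [AddCommGroup M] [Module S M] {n : ℕ} (hn : ringKrullDim S = n) :
    ringKrullDim S ≤ (moduleDepth S M : WithBot ℕ∞) ↔ DepthGE S M n := by
  rw [hn, ← le_moduleDepth_iff_depthGE]
  exact WithBot.coe_le_coe

lemma subsingleton_ext_of_subsingleton_left {S : Type u} [CommRing S] (N M : ModuleCat.{u} S)
    [Subsingleton N] (i : ℕ) : Subsingleton (Abelian.Ext N M i) := by
  have : HasProjectiveDimensionLT N 0 :=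
    (ModuleCat.isZero_of_subsingleton N).hasProjectiveDimensionLT_zero
  exact HasProjectiveDimensionLT.subsingleton N 0 i i.zero_le M

lemma subsingleton_ext_of_subsingleton_right {S : Type u} [CommRing S] (N M : ModuleCat.{u} S)
    [Subsingleton M] (i : ℕ) : Subsingleton (Abelian.Ext N M i) := by
  have : HasInjectiveDimensionLT M 0 :=
    (ModuleCat.isZero_of_subsingleton M).hasInjectiveDimensionLT_zero
  exact HasInjectiveDimensionLT.subsingleton M 0 i i.zero_le N

section Local

variable {S : Type u} [CommRing S] [IsLocalRing S]

lemma support_residueField : Module.support S (ResidueField S) =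
    PrimeSpectrum.zeroLocus (maximalIdeal S) := by
  have annihilator_quotient : Module.annihilator S (ResidueField S) = maximalIdeal S :=
    Ideal.annihilator_quotient
  rw [Module.support_eq_zeroLocus, annihilator_quotient]

lemma maximalIdeal_smul_top_lt_top (M : Type*) [AddCommGroup M] [Module S M] [Module.Finite S M]
    [Nontrivial M] : maximalIdeal S • (⊤ : Submodule S M) < ⊤ :=
  lt_top_iff_ne_top.2 (Submodule.top_ne_ideal_smul_of_le_jacobson_annihilator
    (maximalIdeal_le_jacobson _)).symm

lemma DepthGE.quotSMulTop {M : Type u} [AddCommGroup M] [Module S M] {x : S}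
    (hx : IsSMulRegular M x) {n : ℕ} (h : DepthGE S M (n + 1)) :
    DepthGE S (QuotSMulTop x M) n := by
  intro i hi
  have hS := IsSMulRegular.smulShortComplex_shortExact (M := ModuleCat.of S M) hx
  have vanish₂ := h i (by lia)
  have vanish₁ := h (i + 1) (by lia)
  refine subsingleton_of_forall_eq 0 fun e ↦ ?_
  obtain ⟨e', rfl⟩ := Abelian.Ext.covariant_sequence_exact₃ _ hS e rfl (vanish₁.elim _ _)
  rw [show e' = 0 from vanish₂.elim _ _, Abelian.Ext.zero_comp]
  rfl

variable [IsNoetherianRing S]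

lemma DepthGE.of_isWeaklyRegular {M : Type u} [AddCommGroup M] [Module S M] [Module.Finite S M]
    {xs : List S} (hxs : ∀ x ∈ xs, x ∈ maximalIdeal S)
    (h : RingTheory.Sequence.IsWeaklyRegular M xs) : DepthGE S M xs.length := by
  intro i hi
  rcases subsingleton_or_nontrivial M with hM | hM
  · exact subsingleton_ext_of_subsingleton_right _ (ModuleCat.of S M) i
  · exact ModuleCat.subsingleton_ext_of_exists_isRegular (maximalIdeal S) _
      support_residueField.le _ (maximalIdeal_smul_top_lt_top M) xs hxs
      ((isRegular_iff_isWeaklyRegular_of_subset_maximalIdeal hxs).2 h) i hi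

lemma DepthGE.subsingleton_ext {W : ModuleCat.{u} S} [Module.Finite S W] {n : ℕ}
    (h : DepthGE S W n) (N : ModuleCat.{u} S) [Module.Finite S N]
    (hN : maximalIdeal S ≤ (Module.annihilator S N).radical) {i : ℕ} (hi : i < n) :
    Subsingleton (Abelian.Ext N W i) := by
  rcases subsingleton_or_nontrivial W with hW | hW
  · exact subsingleton_ext_of_subsingleton_right N W i
  rcases subsingleton_or_nontrivial N with _ | _
  · exact subsingleton_ext_of_subsingleton_left N W i
  have depth_sensitivity := (ModuleCat.exists_isRegular_tfae (maximalIdeal S) n W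
    (maximalIdeal_smul_top_lt_top W)).out 2 0
  refine depth_sensitivity.1 ⟨ModuleCat.of S (ResidueField S),
    inferInstanceAs (Nontrivial (ResidueField S)),
    inferInstanceAs (Module.Finite S (ResidueField S)), support_residueField, h⟩ N ‹_› ‹_› ?_ i hi
  rw [Module.support_eq_zeroLocus, ← PrimeSpectrum.zeroLocus_radical]
  exact PrimeSpectrum.zeroLocus_anti_mono_ideal hN

lemma isSMulRegular_of_depthGE {z : S} {zs : List S} (hzs : ∀ y ∈ zs, y ∈ maximalIdeal S)
    {I : Ideal S} (hI : maximalIdeal S ≤ (I ⊔ Ideal.ofList (z :: zs)).radical) {W : Type u}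
    [AddCommGroup W] [Module S W] [Module.Finite S W] (hW : I ≤ (Module.annihilator S W).radical)
    (hdepth : DepthGE S W (zs.length + 1)) : IsSMulRegular W z := by
  rw [isSMulRegular_iff_ker_lsmul_eq_bot, eq_bot_iff]
  set G := LinearMap.ker (LinearMap.lsmul S W z)
  have : Module.Finite S (ModuleCat.of S W) := ‹_›
  have : Module.Finite S (ModuleCat.of S G) := inferInstanceAs (Module.Finite S G)
  have hzG : z ∈ Module.annihilator S G := Module.mem_annihilator.2 fun g ↦ Subtype.ext g.2
  have one_mem := pow_mem_annihilator_ext_of_torsion (W := ModuleCat.of S W)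
    {i | i < zs.length + 1} (s := 1) zs hzs (I ⊔ Ideal.span {z})
    (fun N _ hN i hi ↦ by
      rw [sup_assoc, ← Ideal.ofList_cons, ← Ideal.radical_le_radical_iff] at hN
      have := DepthGE.subsingleton_ext (W := ModuleCat.of S W) hdepth N (hI.trans hN) hi
      exact Module.mem_annihilator.2 fun e ↦ this.elim _ _)
    (ModuleCat.of S G)
    (sup_le (le_radical_annihilator_submodule hW G)
      ((Ideal.span_singleton_le_iff_mem _).2 (Ideal.le_radical hzG)))
    0 (fun j hj ↦ by simpa [Nat.lt_succ_iff] using hj)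
  have subtype_eq_zero :=
    Module.mem_annihilator.1 one_mem (Abelian.Ext.mk₀ (ModuleCat.ofHom G.subtype))
  rw [one_pow, one_smul, Abelian.Ext.mk₀_eq_zero_iff] at subtype_eq_zero
  intro g hg
  exact congrArg (fun f ↦ f.hom ⟨g, hg⟩) subtype_eq_zero

lemma isWeaklyRegular_of_depthGE {zs : List S} (hzs : ∀ z ∈ zs, z ∈ maximalIdeal S)
    {I : Ideal S} (hI : maximalIdeal S ≤ (I ⊔ Ideal.ofList zs).radical) {W : Type u}
    [AddCommGroup W] [Module S W] [Module.Finite S W] (hW : I ≤ (Module.annihilator S W).radical)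
    (hdepth : DepthGE S W zs.length) : RingTheory.Sequence.IsWeaklyRegular W zs := by
  induction zs generalizing I W with
  | nil => exact RingTheory.Sequence.IsWeaklyRegular.nil S W
  | cons z zs ih =>
    rw [List.forall_mem_cons] at hzs
    have hreg : IsSMulRegular W z := isSMulRegular_of_depthGE hzs.2 hI hW hdepth
    refine .cons hreg (ih hzs.2 (I := I ⊔ Ideal.span {z}) ?_ ?_ (hdepth.quotSMulTop hreg))
    · rwa [sup_assoc, ← Ideal.ofList_cons]
    · refine sup_le (le_radical_annihilator_quotient hW _)
        ((Ideal.span_singleton_le_iff_mem _).2 (Ideal.le_radical ?_))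
      exact QuotSMulTop.mem_annihilator W z

end Local

section Height

variable {R : Type*} [CommRing R]

lemma height_add_one_le_height_sup_span_singleton (I : Ideal R) {x : R}
    (hx : ∀ q ∈ I.minimalPrimes, x ∉ q) : I.height + 1 ≤ (I ⊔ Ideal.span {x}).height := by
  rw [(I ⊔ Ideal.span {x}).height_eq_inf_minimalPrimes]
  refine le_iInf₂ fun J hJ ↦ ?_
  have hJ_prime : J.IsPrime := hJ.1.1
  obtain ⟨q, hq, hqJ⟩ := Ideal.exists_minimalPrimes_le (le_sup_left.trans hJ.1.2)
  have hq_prime : q.IsPrime := hq.1.1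
  have hxJ : x ∈ J := hJ.1.2 (Ideal.mem_sup_right (Ideal.mem_span_singleton_self x))
  have hlt : q < J := lt_of_le_of_ne hqJ fun e ↦ hx q hq (e ▸ hxJ)
  calc I.height + 1 ≤ q.height + 1 := by gcongr; exact hq.1.2
    _ ≤ J.height := Ideal.height_add_one_le_of_lt_of_isPrime hlt

lemma maximalIdeal_le_radical_of_le_minimalPrime [IsLocalRing R] {I q : Ideal R}
    (hq : q ∈ I.minimalPrimes) (hle : maximalIdeal R ≤ q) : maximalIdeal R ≤ I.radical := by
  rw [Ideal.radical_eq_sInf]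
  exact le_sInf fun J hJ ↦
    hle.trans (hq.2 hJ.symm ((le_maximalIdeal hJ.2.ne_top).trans hle))

variable [IsNoetherianRing R]

lemma exists_mem_forall_notMem_minimalPrimes {I J : Ideal R}
    (h : ∀ q ∈ I.minimalPrimes, ¬ J ≤ q) : ∃ x ∈ J, ∀ q ∈ I.minimalPrimes, x ∉ q := by
  by_contra! hc
  obtain ⟨q, hq, hJq⟩ :=
    (J.subset_union_prime_finite (I.finite_minimalPrimes_of_isNoetherianRing R) (f := id) 0 0
      fun q hq _ _ ↦ hq.1.1).1 fun x hx ↦ by simpa using hc x hx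
  exact h q hq hJq

lemma exists_list_length_eq_height (p : Ideal R) [p.IsPrime] :
    ∃ xs : List R, (∀ x ∈ xs, x ∈ p) ∧ xs.length = p.height ∧
      (Ideal.ofList xs).height = p.height := by
  obtain ⟨J, hJp, hrank, hheight⟩ :=
    Ideal.exists_spanRank_eq_and_height_eq p (Ideal.IsPrime.ne_top ‹_›)
  have hfg : Submodule.FG J := IsNoetherian.noetherian J
  let xs := hfg.finite_generators.toFinset.toList
  have hspan : Ideal.ofList xs = J := by
    rw [Ideal.ofList, show {x | x ∈ xs} = J.generators by ext x; simp [xs]]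
    exact Submodule.span_generators J
  refine ⟨xs, fun x hx ↦ hJp (hspan ▸ Ideal.subset_span hx), ?_, hspan ▸ hheight⟩
  rw [Finset.length_toList, ← Set.ncard_eq_toFinset_card _ hfg.finite_generators,
    hfg.generators_ncard]
  rw [Submodule.fg_iff_spanRank_eq_spanFinrank.mpr hfg] at hrank
  simpa using congrArg Cardinal.toENat hrank

variable [IsLocalRing R]

lemma maximalIdeal_le_radical_of_height_le {I : Ideal R}
    (h : (maximalIdeal R).height ≤ I.height) : maximalIdeal R ≤ I.radical := by
  rw [Ideal.radical_eq_sInf]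
  refine le_sInf fun q ⟨hIq, hq⟩ ↦ ?_
  exact (Ideal.eq_of_le_of_height_le _ (le_maximalIdeal hq.ne_top)
    (h.trans (Ideal.height_mono hIq))).ge

lemma exists_list_maximalIdeal_le_radical_sup (I : Ideal R) (k : ℕ)
    (hk : (maximalIdeal R).height ≤ I.height + k) :
    ∃ ys : List R, ys.length = k ∧ (∀ y ∈ ys, y ∈ maximalIdeal R) ∧
      maximalIdeal R ≤ (I ⊔ Ideal.ofList ys).radical := by
  induction k generalizing I with
  | zero => exact ⟨[], rfl, by simp, by
      simpa using maximalIdeal_le_radical_of_height_le (by simpa using hk)⟩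
  | succ k ih =>
    by_cases hI : maximalIdeal R ≤ I.radical
    · refine ⟨List.replicate (k + 1) 0, List.length_replicate, fun y hy ↦ ?_,
        hI.trans (Ideal.radical_mono le_sup_left)⟩
      exact List.eq_of_mem_replicate hy ▸ zero_mem _
    · obtain ⟨x, hxm, hx⟩ := exists_mem_forall_notMem_minimalPrimes fun q hq hle ↦
        hI (maximalIdeal_le_radical_of_le_minimalPrime hq hle)
      obtain ⟨ys, hlength, hmem, hrad⟩ := ih (I ⊔ Ideal.span {x}) <| calc
        (maximalIdeal R).height ≤ I.height + 1 + k := by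
          simpa only [Nat.cast_succ, add_assoc, add_comm (1 : ℕ∞)] using hk
        _ ≤ _ := by gcongr; exact height_add_one_le_height_sup_span_singleton I hx
      refine ⟨x :: ys, by rw [List.length_cons, hlength], List.forall_mem_cons.2 ⟨hxm, hmem⟩, ?_⟩
      rwa [Ideal.ofList_cons, ← sup_assoc]

end Height

section Localization

-- A parameter sequence of `p` extends to one of the maximal ideal, which is weakly regular.
lemma DepthGE.localizedModule {R : Type u} [CommRing R] [IsNoetherianRing R] [IsLocalRing R]
    {d : ℕ} (hd : (maximalIdeal R).height = d) {M : Type u} [AddCommGroup M] [Module R M]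
    [Module.Finite R M] (hM : DepthGE R M d) (p : Ideal R) [p.IsPrime] {h : ℕ}
    (hh : p.height = h) :
    DepthGE (Localization.AtPrime p) (LocalizedModule p.primeCompl M) h := by
  obtain ⟨xs, hxp, hlength, hheight⟩ := exists_list_length_eq_height p
  rw [hh] at hlength hheight
  have hpm : p ≤ maximalIdeal R := le_maximalIdeal (Ideal.IsPrime.ne_top ‹_›)
  have hle : h ≤ d := by exact_mod_cast hh ▸ hd ▸ Ideal.height_mono hpm
  obtain ⟨ys, hys_length, hys, hrad⟩ :=
    exists_list_maximalIdeal_le_radical_sup (Ideal.ofList xs) (d - h) <| by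
      rw [hheight, hd]
      exact_mod_cast (Nat.add_sub_of_le hle).ge
  rw [Nat.cast_inj] at hlength
  have hreg : RingTheory.Sequence.IsWeaklyRegular M (xs ++ ys) := by
    refine isWeaklyRegular_of_depthGE (I := ⊥) (fun z hz ↦ ?_) ?_ bot_le ?_
    · exact (List.mem_append.1 hz).elim (fun hz ↦ hpm (hxp z hz)) (hys z)
    · rwa [bot_sup_eq, Ideal.ofList_append]
    · rwa [List.length_append, hlength, hys_length, Nat.add_sub_of_le hle]
  have hreg_loc := ((RingTheory.Sequence.isWeaklyRegular_append_iff M xs ys).1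
    hreg).1.of_isLocalizedModule (Localization.AtPrime p) p.primeCompl
      (LocalizedModule.mkLinearMap p.primeCompl M)
  have hdepth := DepthGE.of_isWeaklyRegular (fun x hx ↦ ?_) hreg_loc
  · rwa [List.length_map, hlength] at hdepth
  · obtain ⟨y, hy, rfl⟩ := List.mem_map.1 hx
    rw [← Localization.AtPrime.map_eq_maximalIdeal]
    exact Ideal.mem_map_of_mem _ (hxp y hy)

lemma isMCMModule_of_depthGE {R : Type} [CommRing R] [IsNoetherianRing R] [IsLocalRing R] {d : ℕ}
    (hd : ringKrullDim R = d) {M : Type} [AddCommGroup M] [Module R M]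
    [Module.Finite R M] (hM : DepthGE R M d) : IsMCMModule R M := by
  have height_eq : (maximalIdeal R).height = d :=
    WithBot.coe_injective (maximalIdeal_height_eq_ringKrullDim.trans hd)
  intro p hp
  obtain ⟨h, hh⟩ := ENat.ne_top_iff_exists.1 (Ideal.height_ne_top_of_isPrime (I := p))
  refine (ringKrullDim_le_moduleDepth_iff_depthGE ?_).2 (hM.localizedModule height_eq p hh.symm)
  rw [IsLocalization.AtPrime.ringKrullDim_eq_height p, ← hh]
  rfl

end Localization

/-! ### Syzygies -/

section Syzygy

variable {R : Type u} [CommRing R]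

lemma exists_surjective_fin (N : FGModuleCat.{u} R) :
    ∃ F : Σ n : ℕ, (Fin n → R) →ₗ[R] N.obj, Function.Surjective F.2 := by
  obtain ⟨n, f, hf⟩ := Module.Finite.exists_fin' R N
  exact ⟨⟨n, f⟩, hf⟩

/-- The chosen short exact sequence `0 → K → Rⁿ → N → 0` that defines the syzygy of `N`. -/
def syzygyComplex (N : FGModuleCat.{u} R) : ShortComplex (ModuleCat.{u} R) :=
  (exists_surjective_fin N).choose.2.shortComplexKer

lemma shortExact_syzygyComplex (N : FGModuleCat.{u} R) : (syzygyComplex N).ShortExact :=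
  LinearMap.shortExact_shortComplexKer (exists_surjective_fin N).choose_spec

instance projective_syzygyComplex_X₂ (N : FGModuleCat.{u} R) : Projective (syzygyComplex N).X₂ :=
  inferInstanceAs (Projective (ModuleCat.of R (Fin _ → R)))

variable [IsNoetherianRing R]

/-- The first syzygy of a finitely generated module, computed from a chosen (not necessarily
minimal) free cover. -/
def syzygy (N : FGModuleCat.{u} R) : FGModuleCat.{u} R :=
  ⟨(syzygyComplex N).X₁,
    inferInstanceAs (Module.Finite R (LinearMap.ker (exists_surjective_fin N).choose.2))⟩

lemma mem_annihilator_ext_of_syzygy {N : FGModuleCat.{u} R} {W : ModuleCat.{u} R} {a : R} {i : ℕ}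
    (h : a ∈ Module.annihilator R (Abelian.Ext (syzygy N).obj W i)) :
    a ∈ Module.annihilator R (Abelian.Ext N.obj W (i + 1)) := by
  rw [Module.mem_annihilator] at h ⊢
  intro e
  obtain ⟨e', rfl⟩ := Abelian.Ext.contravariant_sequence_exact₃ (shortExact_syzygyComplex N) W e
    (Abelian.Ext.eq_zero_of_projective _) (add_comm 1 i)
  exact (Abelian.Ext.comp_smul _ _ _ _).symm.trans
    (by rw [show a • e' = 0 from h e', Abelian.Ext.comp_zero]; rfl)

lemma mem_annihilator_ext_syzygy {N : FGModuleCat.{u} R} {W : ModuleCat.{u} R} {a : R} {i : ℕ}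
    (h : a ∈ Module.annihilator R (Abelian.Ext N.obj W (i + 2))) :
    a ∈ Module.annihilator R (Abelian.Ext (syzygy N).obj W (i + 1)) := by
  rw [Module.mem_annihilator] at h ⊢
  intro e
  have hae : (shortExact_syzygyComplex N).extClass.comp (a • e) (add_comm 1 (i + 1)) = 0 :=
    (Abelian.Ext.comp_smul _ _ _ _).trans (h _)
  obtain ⟨e', he'⟩ :=
    Abelian.Ext.contravariant_sequence_exact₁ (shortExact_syzygyComplex N) W _ _ hae
  rw [Abelian.Ext.eq_zero_of_projective e', Abelian.Ext.comp_zero] at he'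
  exact he'.symm

lemma mem_annihilator_ext_of_iterate_syzygy {W : ModuleCat.{u} R} {a : R} {i : ℕ} (m : ℕ)
    {N : FGModuleCat.{u} R}
    (h : a ∈ Module.annihilator R (Abelian.Ext (syzygy^[m] N).obj W i)) :
    a ∈ Module.annihilator R (Abelian.Ext N.obj W (i + m)) := by
  induction m generalizing N with
  | zero => exact h
  | succ m ih => exact mem_annihilator_ext_of_syzygy (ih h)

lemma mem_annihilator_ext_iterate_syzygy {W : ModuleCat.{u} R} {a : R} (m : ℕ)
    {N : FGModuleCat.{u} R} (h : a ∈ Module.annihilator R (Abelian.Ext N.obj W (m + 1))) :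
    a ∈ Module.annihilator R (Abelian.Ext (syzygy^[m] N).obj W 1) := by
  induction m generalizing N with
  | zero => exact h
  | succ m ih => exact ih (mem_annihilator_ext_syzygy h)

-- Every class in `Ext^(i+1)(M, W)` factors through the class of the syzygy sequence of `M`.
lemma mem_annihilator_ext_of_ext_syzygy {M : FGModuleCat.{u} R} {a : R}
    (h : a ∈ Module.annihilator R (Abelian.Ext M.obj (syzygy M).obj 1)) (W : ModuleCat.{u} R)
    (i : ℕ) : a ∈ Module.annihilator R (Abelian.Ext M.obj W (i + 1)) := by
  rw [Module.mem_annihilator] at h ⊢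
  intro e
  obtain ⟨e', rfl⟩ := Abelian.Ext.contravariant_sequence_exact₃ (shortExact_syzygyComplex M) W e
    (Abelian.Ext.eq_zero_of_projective _) (add_comm 1 i)
  have smul_extClass : a • (shortExact_syzygyComplex M).extClass = 0 := h _
  exact (Abelian.Ext.smul_comp _ _ _ _).symm.trans
    (by rw [smul_extClass, Abelian.Ext.zero_comp]; rfl)

end Syzygy

section SyzygyDepth

variable {S : Type u} [CommRing S] [IsLocalRing S] {d : ℕ}

lemma DepthGE.pi (h : DepthGE S S d) (n : ℕ) : DepthGE S (Fin n → S) d := by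
  intro i hi
  let K := ModuleCat.of S (ResidueField S)
  let F : Fin n → ModuleCat S := fun _ ↦ ModuleCat.of S S
  have : Subsingleton (∀ j, Abelian.Ext K (F j) i) := @Pi.instSubsingleton _ _ fun _ ↦ h i hi
  have : Subsingleton ((Abelian.extFunctorObj K i).obj (⨁ F)) :=
    (Abelian.Ext.addEquivBiproduct K (Limits.biproduct.isBilimit F) i).injective.subsingleton
  exact ((Abelian.extFunctorObj K i).mapIso
    (ModuleCat.biproductIsoPi F)).addCommGroupIsoToAddEquiv.symm.injective.subsingleton

variable [IsNoetherianRing S]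

lemma DepthGE.syzygy (h : DepthGE S S d) {N : FGModuleCat.{u} S} {m : ℕ} (hm : m < d)
    (hN : DepthGE S N.obj m) : DepthGE S (syzygy N).obj (m + 1) := by
  intro i hi
  have hS := shortExact_syzygyComplex N
  have vanish₂ := h.pi (exists_surjective_fin N).choose.1 i (by lia)
  refine subsingleton_of_forall_eq 0 fun e ↦ ?_
  have comp_eq_zero : e.comp (Abelian.Ext.mk₀ (syzygyComplex N).f) (add_zero i) = 0 :=
    vanish₂.elim _ _
  cases i with
  | zero =>
    have := hS.mono_f
    exact Abelian.Ext.postcomp_mk₀_injective_of_mono _ (syzygyComplex N).f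
      (comp_eq_zero.trans (map_zero _).symm)
  | succ i =>
    obtain ⟨e', rfl⟩ := Abelian.Ext.covariant_sequence_exact₁ _ hS e comp_eq_zero rfl
    rw [show e' = 0 from (hN i (by lia)).elim _ _, Abelian.Ext.zero_comp]
    rfl

lemma DepthGE.iterate_syzygy (h : DepthGE S S d) (N : FGModuleCat.{u} S) {m : ℕ} (hm : m ≤ d) :
    DepthGE S (_root_.syzygy^[m] N).obj m := by
  induction m with
  | zero => exact fun i hi ↦ absurd hi i.not_lt_zero
  | succ m ih =>
    rw [Function.iterate_succ_apply']
    exact h.syzygy hm (ih (by lia))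

end SyzygyDepth

section LocalProjectiveDimension

variable {R : Type u} [CommRing R] (p : Ideal R) [p.IsPrime]

/-- The localization `M_p` has projective dimension `< n` over `R_p`. -/
abbrev HasLocalProjDimLT (M : ModuleCat.{u} R) (n : ℕ) : Prop :=
  HasProjectiveDimensionLT ((ModuleCat.localizedModuleFunctor p.primeCompl).obj M) n

variable {p}

lemma HasLocalProjDimLT.mono {M : ModuleCat.{u} R} {m n : ℕ} (h : HasLocalProjDimLT p M m)
    (hmn : m ≤ n) : HasLocalProjDimLT p M n :=
  have := h
  hasProjectiveDimensionLT_of_ge _ m n hmn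

lemma hasLocalProjDimLT_of_projective (M : ModuleCat.{u} R) [Projective M] :
    HasLocalProjDimLT p M 1 :=
  ModuleCat.localizedModule_hasProjectiveDimensionLE 0 p.primeCompl M

lemma localizedModuleFunctor_map_smul_id (M : ModuleCat.{u} R) (a : R) :
    (ModuleCat.localizedModuleFunctor p.primeCompl).map (a • 𝟙 M) =
      algebraMap R (Localization p.primeCompl) a • 𝟙 _ := by
  have map_smul : (ModuleCat.localizedModuleMap p.primeCompl (a • 𝟙 M)).hom =
      a • (ModuleCat.localizedModuleMap p.primeCompl (𝟙 M)).hom :=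
    (IsLocalizedModule.mapExtendScalars p.primeCompl (M.localizedModuleMkLinearMap p.primeCompl)
      (M.localizedModuleMkLinearMap p.primeCompl) (Localization p.primeCompl)).map_smul a _
  have map_id : ModuleCat.localizedModuleMap p.primeCompl (𝟙 M) = 𝟙 _ :=
    (ModuleCat.localizedModuleFunctor p.primeCompl).map_id M
  ext x
  change (ModuleCat.localizedModuleMap p.primeCompl (a • 𝟙 M)).hom x = _
  rw [map_smul, map_id]
  exact (algebraMap_smul (A := Localization p.primeCompl) a
    (show M.localizedModule p.primeCompl from x)).symm

lemma shortExact_map_syzygyComplex (N : FGModuleCat.{u} R) :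
    ((syzygyComplex N).map (ModuleCat.localizedModuleFunctor p.primeCompl)).ShortExact :=
  (shortExact_syzygyComplex N).map_of_exact _

variable [IsNoetherianRing R] {N : FGModuleCat.{u} R}

lemma HasLocalProjDimLT.syzygy (h : HasLocalProjDimLT p N.obj 1) :
    HasLocalProjDimLT p (syzygy N).obj 1 :=
  (shortExact_map_syzygyComplex N).hasProjectiveDimensionLT_X₁ 1
    (hasLocalProjDimLT_of_projective _) (h.mono one_le_two)

lemma HasLocalProjDimLT.iterate_syzygy (h : HasLocalProjDimLT p N.obj 1) (m : ℕ) :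
    HasLocalProjDimLT p (_root_.syzygy^[m] N).obj 1 := by
  induction m with
  | zero => exact h
  | succ m ih =>
    rw [Function.iterate_succ_apply']
    exact ih.syzygy

lemma HasLocalProjDimLT.of_syzygy {n : ℕ} (h : HasLocalProjDimLT p (_root_.syzygy N).obj n) :
    HasLocalProjDimLT p N.obj (n + 1) :=
  (shortExact_map_syzygyComplex N).hasProjectiveDimensionLT_X₃ n h
    ((hasLocalProjDimLT_of_projective _).mono n.succ_pos)

lemma HasLocalProjDimLT.of_iterate_syzygy {n : ℕ} (m : ℕ)
    (h : HasLocalProjDimLT p (_root_.syzygy^[m] N).obj n) :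
    HasLocalProjDimLT p N.obj (n + m) := by
  induction m generalizing N with
  | zero => exact h
  | succ m ih => exact of_syzygy (ih h)

-- Multiplication by `a` on `N` factors through the free cover; it is invertible over `R_p`.
lemma hasLocalProjDimLT_one_of_mem_annihilator_ext {a : R} (ha : a ∉ p)
    (h : a ∈ Module.annihilator R (Abelian.Ext N.obj (syzygy N).obj 1)) :
    HasLocalProjDimLT p N.obj 1 := by
  have smul_extClass : (Abelian.Ext.mk₀ (a • 𝟙 (syzygyComplex N).X₃)).comp
      (shortExact_syzygyComplex N).extClass (zero_add 1) = 0 := by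
    rw [Abelian.Ext.mk₀_smul, Abelian.Ext.smul_comp, Abelian.Ext.mk₀_id_comp]
    exact Module.mem_annihilator.1 h _
  obtain ⟨g', hg'⟩ := Abelian.Ext.covariant_sequence_exact₃ _ (shortExact_syzygyComplex N) _ _
    smul_extClass
  obtain ⟨g, rfl⟩ := (Abelian.Ext.mk₀_bijective _ _).2 g'
  rw [Abelian.Ext.mk₀_comp_mk₀] at hg'
  have hg : g ≫ (syzygyComplex N).g = a • 𝟙 _ := (Abelian.Ext.mk₀_bijective _ _).1 hg'
  let L := ModuleCat.localizedModuleFunctor p.primeCompl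
  have hLg : L.map g ≫ L.map (syzygyComplex N).g =
      algebraMap R (Localization p.primeCompl) a • 𝟙 (L.obj (syzygyComplex N).X₃) := by
    rw [← L.map_comp, hg]
    exact localizedModuleFunctor_map_smul_id _ a
  obtain ⟨v, hv⟩ := IsLocalization.map_units (Localization p.primeCompl) (⟨a, ha⟩ : p.primeCompl)
  have := hasLocalProjDimLT_of_projective (p := p) (syzygyComplex N).X₂
  refine (Retract.mk (Y := L.obj (syzygyComplex N).X₂)
    ((v⁻¹).val • L.map g) (L.map (syzygyComplex N).g) ?_).hasProjectiveDimensionLT 1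
  rw [Linear.smul_comp, hLg, smul_smul, ← hv, Units.inv_mul, one_smul]

end LocalProjectiveDimension

/-! ### A local ring whose residue field has finite projective dimension is regular -/

section ModRegularElement

open TensorProduct

variable {S : Type u} [CommRing S] {x : S}

lemma lTensor_quotient_injective_of_isSMulRegular {A B C : Type u} [AddCommGroup A] [Module S A]
    [AddCommGroup B] [Module S B] [AddCommGroup C] [Module S C] {f : A →ₗ[S] B} {g : B →ₗ[S] C}
    (hf : Function.Injective f) (hfg : Function.Exact f g) (hC : IsSMulRegular C x) :
    Function.Injective (f.lTensor (S ⧸ Ideal.span {x})) := by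
  have exact_zero_f : Function.Exact (0 : PUnit →ₗ[S] A) f :=
    (LinearMap.exact_zero_iff_injective PUnit f).2 hf
  have map_injective : Function.Injective (QuotSMulTop.map x f) := by
    have := QuotSMulTop.map_first_exact_on_four_term_exact_of_isSMulRegular_last
      exact_zero_f hfg hC
    rwa [map_zero, LinearMap.exact_zero_iff_injective] at this
  have naturality := congrArg DFunLike.coe (QuotSMulTop.equivQuotTensor_naturality x f)
  refine (QuotSMulTop.equivQuotTensor x A).toEquiv.injective_comp _ |>.1 ?_
  exact naturality.subst (motive := Function.Injective)
    ((QuotSMulTop.equivQuotTensor x B).injective.comp map_injective)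

lemma shortExact_baseChange_quotient {B C : Type u} [AddCommGroup B] [Module S B]
    [AddCommGroup C] [Module S C] {g : B →ₗ[S] C} (hg : Function.Surjective g)
    (hC : IsSMulRegular C x) :
    (ShortComplex.mk (ModuleCat.ofHom ((LinearMap.ker g).subtype.baseChange (S ⧸ Ideal.span {x})))
      (ModuleCat.ofHom (g.baseChange (S ⧸ Ideal.span {x})))
      (by rw [← ModuleCat.ofHom_comp, ← LinearMap.baseChange_comp, LinearMap.comp_ker_subtype,
        LinearMap.baseChange_zero]; rfl)).ShortExact :=
  have hker := LinearMap.exact_subtype_ker_map g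
  ModuleCat.shortComplex_shortExact _ (lTensor_exact (S ⧸ Ideal.span {x}) hker hg)
    (lTensor_quotient_injective_of_isSMulRegular Subtype.val_injective hker hC)
    (LinearMap.lTensor_surjective (S ⧸ Ideal.span {x}) hg)

lemma hasProjectiveDimensionLT_baseChange_quotient (hx : IsSMulRegular S x) (n : ℕ)
    (M : ModuleCat.{u} S) (hM : IsSMulRegular M x) (h : HasProjectiveDimensionLT M (n + 1)) :
    HasProjectiveDimensionLT
      (ModuleCat.of (S ⧸ Ideal.span {x}) ((S ⧸ Ideal.span {x}) ⊗[S] M)) (n + 1) := by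
  induction n generalizing M with
  | zero =>
    have := (IsProjective.iff_projective M).2 (projective_iff_hasProjectiveDimensionLT_one.2 h)
    exact projective_iff_hasProjectiveDimensionLT_one.1
      (ModuleCat.projective_of_categoryTheory_projective _)
  | succ n ih =>
    let g : (M →₀ S) →ₗ[S] M := Finsupp.linearCombination S id
    have hg : Function.Surjective g := Finsupp.linearCombination_id_surjective S M
    have hker : HasProjectiveDimensionLT (ModuleCat.of S (LinearMap.ker g)) (n + 1) :=
      ((LinearMap.shortExact_shortComplexKer hg).hasProjectiveDimensionLT_X₃_iff n
        (inferInstanceAs (Projective (ModuleCat.of S (M →₀ S))))).1 h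
    have isSMulRegular_finsupp : IsSMulRegular (M →₀ S) x := fun u v huv ↦
      Finsupp.ext fun i ↦ hx (DFunLike.congr_fun huv i)
    exact ((shortExact_baseChange_quotient hg hM).hasProjectiveDimensionLT_X₃_iff n
      (ModuleCat.projective_of_categoryTheory_projective _)).2 <|
      ih (ModuleCat.of S (LinearMap.ker g))
        (isSMulRegular_finsupp.of_injective (LinearMap.ker g).subtype Subtype.val_injective) hker

end ModRegularElement

section RegularElement

lemma annihilator_eq_bot_of_free (S M : Type u) [CommRing S] [AddCommGroup M] [Module S M]
    [Module.Free S M] [Nontrivial M] : Module.annihilator S M = ⊥ :=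
  Module.annihilator_eq_bot.2 inferInstance

variable {S : Type u} [CommRing S] [IsLocalRing S]

open TensorProduct in
lemma exists_surjective_ker_le_maximalIdeal (M : Type u) [AddCommGroup M] [Module S M]
    [Module.Finite S M] :
    ∃ (ι : Type u) (_ : Finite ι) (g : (ι →₀ S) →ₗ[S] M), Function.Surjective g ∧
      ∀ c ∈ LinearMap.ker g, ∀ i, c i ∈ maximalIdeal S := by
  let b := Module.Free.chooseBasis (ResidueField S) (ResidueField S ⊗[S] M)
  have mk_surjective : Function.Surjective (TensorProduct.mk S (ResidueField S) M 1) :=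
    TensorProduct.mk_surjective S M (ResidueField S) Ideal.Quotient.mk_surjective
  choose v hv using fun i ↦ mk_surjective (b i)
  refine ⟨_, inferInstance, Finsupp.linearCombination S v, ?_, fun c hc i ↦ ?_⟩
  · rw [← LinearMap.range_eq_top, Finsupp.range_linearCombination]
    exact span_eq_top_of_tmul_eq_basis v b hv
  · have sum_eq_zero : ∑ i, residue S (c i) • b i = 0 := by
      have h := congrArg (TensorProduct.mk S (ResidueField S) M 1) (LinearMap.mem_ker.1 hc)
      rw [map_zero, Finsupp.linearCombination_apply, Finsupp.sum_fintype _ _ (by simp), map_sum]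
        at h
      refine (Finset.sum_congr rfl fun i _ ↦ ?_).trans h
      rw [map_smul, hv]
      exact (algebraMap_smul (ResidueField S) (c i) (b i)).symm
    exact (residue_eq_zero_iff _).1
      (Fintype.linearIndependent_iff.1 b.linearIndependent _ sum_eq_zero i)

variable [IsNoetherianRing S]

-- The kernel of a minimal cover is killed by the socle element, so it is zero once it is free.
lemma projective_of_hasProjectiveDimensionLT_of_socle {a : S} (ha : a ≠ 0)
    (hsoc : ∀ y ∈ maximalIdeal S, a * y = 0) (n : ℕ) (M : Type u) [AddCommGroup M] [Module S M]
    [Module.Finite S M] (h : HasProjectiveDimensionLT (ModuleCat.of S M) (n + 1)) :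
    Module.Projective S M := by
  induction n generalizing M with
  | zero =>
    exact (IsProjective.iff_projective (R := S) M).2
      (projective_iff_hasProjectiveDimensionLT_one.2 h)
  | succ n ih =>
    obtain ⟨ι, _, g, hg, hker⟩ := exists_surjective_ker_le_maximalIdeal (S := S) M
    have : Module.Projective S (LinearMap.ker g) := ih (LinearMap.ker g) <|
      ((LinearMap.shortExact_shortComplexKer hg).hasProjectiveDimensionLT_X₃_iff n
        (inferInstanceAs (Projective (ModuleCat.of S (ι →₀ S))))).1 h
    have : Module.Free S (LinearMap.ker g) :=
      Module.free_of_flat_of_isLocalRing (R := S) (P := LinearMap.ker g)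
    have a_mem : a ∈ Module.annihilator S (LinearMap.ker g) := Module.mem_annihilator.2 fun c ↦
      Subtype.ext (Finsupp.ext fun i ↦ hsoc _ (hker c.1 c.2 i))
    have ker_eq_bot : LinearMap.ker g = ⊥ := by
      by_contra hne
      have := (Submodule.nontrivial_iff_ne_bot).2 hne
      exact ha ((annihilator_eq_bot_of_free S (LinearMap.ker g)).le a_mem)
    exact Module.Projective.of_equiv
      (LinearEquiv.ofBijective g ⟨LinearMap.ker_eq_bot.1 ker_eq_bot, hg⟩)

lemma maximalIdeal_notMem_associatedPrimes {n : ℕ} (hm : maximalIdeal S ≠ ⊥)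
    (h : HasProjectiveDimensionLT (ModuleCat.of S (ResidueField S)) n) :
    maximalIdeal S ∉ associatedPrimes S S := by
  intro hass
  obtain ⟨-, a, ha⟩ := isAssociatedPrime_iff.1 (AssociatedPrimes.mem_iff.1 hass)
  have mem_iff (y : S) : y ∈ maximalIdeal S ↔ a * y = 0 := by
    rw [ha, Submodule.mem_colon_singleton, smul_eq_mul, mul_comm, Submodule.mem_bot]
  have a_ne_zero : a ≠ 0 := fun h0 ↦
    (Ideal.ne_top_iff_one _).1 (maximalIdeal.isMaximal S).ne_top ((mem_iff 1).2 (by simp [h0]))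
  have : Module.Projective S (ResidueField S) :=
    projective_of_hasProjectiveDimensionLT_of_socle a_ne_zero (fun y ↦ (mem_iff y).1) n _
      (hasProjectiveDimensionLT_of_ge _ n (n + 1) n.le_succ)
  have : Module.Free S (ResidueField S) := Module.free_of_flat_of_isLocalRing
  apply hm
  rw [← Ideal.annihilator_quotient (I := maximalIdeal S)]
  exact annihilator_eq_bot_of_free S (ResidueField S)

lemma exists_isSMulRegular_notMem_sq {n : ℕ} (hm : maximalIdeal S ≠ ⊥)
    (h : HasProjectiveDimensionLT (ModuleCat.of S (ResidueField S)) n) :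
    ∃ x ∈ maximalIdeal S, x ∉ maximalIdeal S ^ 2 ∧ IsSMulRegular S x := by
  by_contra! hcon
  have cover : (maximalIdeal S : Set S) ⊆
      ⋃ q ∈ insert (maximalIdeal S ^ 2) (associatedPrimes S S), (q : Set S) := by
    intro x hx
    rw [Set.biUnion_insert, biUnion_associatedPrimes_eq_compl_regular]
    exact or_iff_not_imp_left.2 (hcon x hx)
  obtain ⟨q, rfl | hq, hle⟩ := (Ideal.subset_union_prime_finite
    ((associatedPrimes.finite S S).insert _) (maximalIdeal S ^ 2) (maximalIdeal S ^ 2)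
    fun q hq hne _ ↦ IsAssociatedPrime.isPrime (hq.resolve_left hne)).1 cover
  · exact hm (Submodule.eq_bot_of_le_smul_of_le_jacobson_bot (maximalIdeal S) (maximalIdeal S)
      (IsNoetherian.noetherian _) (hle.trans_eq (pow_two _)) (maximalIdeal_le_jacobson _))
  · exact maximalIdeal_notMem_associatedPrimes hm h <| (maximalIdeal.isMaximal S).eq_of_le
      (IsAssociatedPrime.isPrime hq).ne_top hle ▸ hq

end RegularElement

section Serre

open TensorProduct

variable {S : Type u} [CommRing S] [IsLocalRing S] {x : S}

lemma isLocalRing_quotient_span_singleton (hxm : x ∈ maximalIdeal S) :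
    IsLocalRing (S ⧸ Ideal.span {x}) :=
  have : Nontrivial (S ⧸ Ideal.span {x}) := Ideal.Quotient.nontrivial_iff.2 <|
    ((Ideal.span_singleton_le_iff_mem _).2 hxm).trans_lt
      (lt_top_iff_ne_top.2 (maximalIdeal.isMaximal S).ne_top) |>.ne
  .of_surjective' (Ideal.Quotient.mk (Ideal.span {x})) Ideal.Quotient.mk_surjective

lemma isLocalHom_algebraMap_quotient (I : Ideal S) [IsLocalRing (S ⧸ I)] :
    IsLocalHom (algebraMap S (S ⧸ I)) :=
  IsLocalHom.of_surjective _ Ideal.Quotient.mk_surjective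

lemma exists_residueField_quotient_linearMap_tensor (hxm : x ∈ maximalIdeal S)
    [IsLocalRing (S ⧸ Ideal.span {x})] :
    ∃ i : ResidueField (S ⧸ Ideal.span {x}) →ₗ[S ⧸ Ideal.span {x}]
      (S ⧸ Ideal.span {x}) ⊗[S] maximalIdeal S, i 1 = 1 ⊗ₜ[S] ⟨x, hxm⟩ := by
  let S' := S ⧸ Ideal.span {x}
  let x' : maximalIdeal S := ⟨x, hxm⟩
  have := isLocalHom_algebraMap_quotient (Ideal.span {x})
  refine ⟨Submodule.liftQ (maximalIdeal S')
    (LinearMap.toSpanSingleton S' _ ((1 : S') ⊗ₜ[S] x')) fun y hy ↦ ?_,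
    one_smul S' ((1 : S') ⊗ₜ[S] x')⟩
  obtain ⟨y, rfl⟩ := Ideal.Quotient.mk_surjective y
  have hym : y ∈ maximalIdeal S := (maximalIdeal_comap (algebraMap S S')).le hy
  have smul_comm_mem : y • x' = x • (⟨y, hym⟩ : maximalIdeal S) := Subtype.ext (mul_comm y x)
  have x_smul_one : x • (1 : S') = 0 := (Algebra.algebraMap_eq_smul_one x).symm.trans
    (Ideal.Quotient.eq_zero_iff_mem.2 (Ideal.mem_span_singleton_self x))
  calc algebraMap S S' y • ((1 : S') ⊗ₜ[S] x') = (1 : S') ⊗ₜ[S] (y • x') := by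
        rw [algebraMap_smul, TensorProduct.tmul_smul]
    _ = 0 := by rw [smul_comm_mem, ← TensorProduct.smul_tmul, x_smul_one, TensorProduct.zero_tmul]

lemma exists_maximalIdeal_linearMap_residueField (hxm : x ∈ maximalIdeal S)
    (hx2 : x ∉ maximalIdeal S ^ 2) :
    ∃ l : maximalIdeal S →ₗ[S] ResidueField S, l ⟨x, hxm⟩ = 1 := by
  have hne : (maximalIdeal S).toCotangent ⟨x, hxm⟩ ≠ 0 := fun h0 ↦
    hx2 ((Ideal.toCotangent_eq_zero _ _).1 h0)
  obtain ⟨f, hf⟩ :=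
    Module.Projective.exists_dual_eq_one (ResidueField S) (V := CotangentSpace S) hne
  exact ⟨f.restrictScalars S ∘ₗ (maximalIdeal S).toCotangent, hf⟩

-- Over `S' = S ⧸ (x)` the residue field is a direct summand of `S' ⊗ m`, spanned by `1 ⊗ x`.
lemma nonempty_retract_residueField_quotient_tensor (hxm : x ∈ maximalIdeal S)
    (hx2 : x ∉ maximalIdeal S ^ 2) [IsLocalRing (S ⧸ Ideal.span {x})] :
    Nonempty (Retract
      (ModuleCat.of (S ⧸ Ideal.span {x}) (ResidueField (S ⧸ Ideal.span {x})))
      (ModuleCat.of _ ((S ⧸ Ideal.span {x}) ⊗[S] maximalIdeal S))) := by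
  let S' := S ⧸ Ideal.span {x}
  have := isLocalHom_algebraMap_quotient (Ideal.span {x})
  obtain ⟨i, hi⟩ := exists_residueField_quotient_linearMap_tensor hxm
  obtain ⟨l, hl⟩ := exists_maximalIdeal_linearMap_residueField hxm hx2
  let r : S' ⊗[S] maximalIdeal S →ₗ[S'] ResidueField S' :=
    ((Algebra.linearMap (ResidueField S) (ResidueField S')).restrictScalars S ∘ₗ
      l).liftBaseChange S'
  have hr : r (1 ⊗ₜ ⟨x, hxm⟩) = 1 := by simp [r, hl]
  have hri : r ∘ₗ i = LinearMap.id := by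
    ext y
    obtain ⟨y, rfl⟩ := residue_surjective y
    have residue_eq : residue S' y = y • (1 : ResidueField S') := by
      rw [Algebra.smul_def, mul_one, ResidueField.algebraMap_eq]
    rw [residue_eq, map_smul, LinearMap.comp_apply, hi, hr, LinearMap.id_apply]
  exact ⟨⟨ModuleCat.ofHom i, ModuleCat.ofHom r, by
    rw [← ModuleCat.ofHom_comp, hri, ModuleCat.ofHom_id]⟩⟩

lemma hasProjectiveDimensionLT_residueField_quotient (hxm : x ∈ maximalIdeal S)
    (hx2 : x ∉ maximalIdeal S ^ 2) (hx : IsSMulRegular S x) [IsLocalRing (S ⧸ Ideal.span {x})]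
    {n : ℕ} (h : HasProjectiveDimensionLT (ModuleCat.of S (ResidueField S)) (n + 2)) :
    HasProjectiveDimensionLT (ModuleCat.of (S ⧸ Ideal.span {x})
      (ResidueField (S ⧸ Ideal.span {x}))) (n + 1) := by
  have shortExact : (ShortComplex.mk (ModuleCat.ofHom (maximalIdeal S).subtype)
      (ModuleCat.ofHom (Submodule.mkQ (maximalIdeal S))) (by
        ext y; exact Ideal.Quotient.eq_zero_iff_mem.2 y.2)).ShortExact :=
    ModuleCat.shortComplex_shortExact _ (LinearMap.exact_subtype_mkQ _) Subtype.val_injective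
      (Submodule.mkQ_surjective _)
  have hmax : HasProjectiveDimensionLT (ModuleCat.of S (maximalIdeal S)) (n + 1) :=
    (shortExact.hasProjectiveDimensionLT_X₃_iff n
      (inferInstanceAs (Projective (ModuleCat.of S S)))).1 h
  have := hasProjectiveDimensionLT_baseChange_quotient hx n (ModuleCat.of S (maximalIdeal S))
    (hx.of_injective (maximalIdeal S).subtype Subtype.val_injective) hmax
  exact (nonempty_retract_residueField_quotient_tensor hxm hx2).some.hasProjectiveDimensionLT _

variable [IsNoetherianRing S]

lemma spanFinrank_maximalIdeal_le_quotient_add_one [IsLocalRing (S ⧸ Ideal.span {x})] :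
    (maximalIdeal S).spanFinrank ≤ (maximalIdeal (S ⧸ Ideal.span {x})).spanFinrank + 1 := by
  classical
  have := isLocalHom_algebraMap_quotient (Ideal.span {x})
  have mk_surjective := Ideal.Quotient.mk_surjective (I := Ideal.span {x})
  obtain ⟨t, ht_card, ht⟩ := (IsNoetherian.noetherian
    (maximalIdeal (S ⧸ Ideal.span {x}))).exists_span_finset_card_eq_spanFinrank
  let s : Finset S := t.image (Function.surjInv mk_surjective)
  have image_s : Ideal.Quotient.mk (Ideal.span {x}) '' s = t := by
    rw [Finset.coe_image, Set.image_image]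
    simp only [Function.surjInv_eq, Set.image_id']
  have span_insert : Ideal.span (insert x s : Finset S) = maximalIdeal S := by
    have map_span : (Ideal.span s).map (Ideal.Quotient.mk (Ideal.span {x})) =
        maximalIdeal (S ⧸ Ideal.span {x}) := by
      rw [Ideal.map_span, image_s]
      exact ht
    rw [← maximalIdeal_comap (algebraMap S (S ⧸ Ideal.span {x})), ← map_span,
      Ideal.Quotient.algebraMap_eq, Ideal.comap_map_of_surjective' _ mk_surjective, Ideal.mk_ker,
      Finset.coe_insert, Ideal.span_insert, sup_comm]
  calc (maximalIdeal S).spanFinrank ≤ (insert x s).card := by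
        rw [← span_insert, ← Set.ncard_coe_finset]
        exact Submodule.spanFinrank_span_le_ncard_of_finite (Finset.finite_toSet _)
    _ ≤ s.card + 1 := Finset.card_insert_le _ _
    _ ≤ (maximalIdeal (S ⧸ Ideal.span {x})).spanFinrank + 1 :=
        ht_card ▸ Nat.add_le_add_right Finset.card_image_le 1

lemma isRegularLocalRing_of_quotient_span_singleton (hxm : x ∈ maximalIdeal S)
    (hx : IsSMulRegular S x) [IsRegularLocalRing (S ⧸ Ideal.span {x})] : IsRegularLocalRing S := by
  refine IsRegularLocalRing.of_spanFinrank_maximalIdeal_le S ?_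
  rw [← ringKrullDim_quotient_span_singleton_succ_eq_ringKrullDim hx hxm,
    ← (isRegularLocalRing_iff _).1 ‹_›]
  exact_mod_cast spanFinrank_maximalIdeal_le_quotient_add_one

variable (S) in
lemma exists_ringKrullDim_eq_natCast : ∃ d : ℕ, ringKrullDim S = d := by
  obtain ⟨d, hd⟩ := ENat.ne_top_iff_exists.1 (Ideal.height_ne_top_of_isPrime (I := maximalIdeal S))
  exact ⟨d, by rw [← maximalIdeal_height_eq_ringKrullDim, ← hd]; rfl⟩

theorem isRegularLocalRing_of_hasProjectiveDimensionLT_residueField (n : ℕ)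
    (h : HasProjectiveDimensionLT (ModuleCat.of S (ResidueField S)) n) : IsRegularLocalRing S := by
  obtain ⟨d, hd⟩ := exists_ringKrullDim_eq_natCast S
  induction d using Nat.strong_induction_on generalizing S n with
  | _ d ih =>
    obtain hm | hm := eq_or_ne (maximalIdeal S) ⊥
    · refine IsRegularLocalRing.of_spanFinrank_maximalIdeal_le S ?_
      simp only [hm, Submodule.spanFinrank_bot, Nat.cast_zero]
      exact ringKrullDim_nonneg_of_nontrivial
    obtain ⟨x, hxm, hx2, hx⟩ := exists_isSMulRegular_notMem_sq hm h
    have := isLocalRing_quotient_span_singleton hxm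
    obtain ⟨d', hd'⟩ := exists_ringKrullDim_eq_natCast (S ⧸ Ideal.span {x})
    have d'_succ : d' + 1 = d := by
      have := ringKrullDim_quotient_span_singleton_succ_eq_ringKrullDim hx hxm
      rw [hd', hd] at this
      exact_mod_cast this
    have := ih d' (by lia) (n + 1) (hasProjectiveDimensionLT_residueField_quotient hxm hx2 hx
      (hasProjectiveDimensionLT_of_ge _ n (n + 2) (by lia))) hd'
    exact isRegularLocalRing_of_quotient_span_singleton hxm hx

end Serre

/-! ### Annihilators of `Ext` that are not contained in `p` force `R_p` to be regular -/

section LocalProjectiveDimension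

variable {R : Type u} [CommRing R] {p : Ideal R} [p.IsPrime]

lemma HasLocalProjDimLT.residueField {n : ℕ} (h : HasLocalProjDimLT p (ModuleCat.of R (R ⧸ p)) n) :
    HasProjectiveDimensionLT (ModuleCat.of (Localization.AtPrime p)
      (ResidueField (Localization.AtPrime p))) n := by
  have localized_eq : Submodule.localized' (Localization.AtPrime p) p.primeCompl
      (Algebra.linearMap R (Localization.AtPrime p)) (p : Submodule R R) =
      maximalIdeal (Localization.AtPrime p) := by
    rw [Ideal.localized'_eq_map]
    exact Localization.AtPrime.map_eq_maximalIdeal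
  let localizedEquiv := (IsLocalizedModule.linearEquiv p.primeCompl
    (LocalizedModule.mkLinearMap p.primeCompl (R ⧸ p))
    ((p : Submodule R R).toLocalizedQuotient' (Localization.AtPrime p) p.primeCompl
      (Algebra.linearMap R (Localization.AtPrime p)))).extendScalarsOfIsLocalization
        p.primeCompl (Localization.AtPrime p)
  let shrinkEquiv : Shrink.{u} (LocalizedModule p.primeCompl (R ⧸ p)) ≃ₗ[Localization.AtPrime p]
      LocalizedModule p.primeCompl (R ⧸ p) := Shrink.linearEquiv _ _
  exact @hasProjectiveDimensionLT_of_iso _ _ _ _ _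
    (shrinkEquiv ≪≫ₗ localizedEquiv ≪≫ₗ Submodule.quotEquivOfEq _ _ localized_eq).toModuleIso n h

lemma HasLocalProjDimLT.free {M : FGModuleCat.{u} R} (h : HasLocalProjDimLT p M.obj 1) :
    Module.Free (Localization.AtPrime p) (LocalizedModule p.primeCompl M.obj) := by
  have := M.property
  have : Module.Projective (Localization.AtPrime p)
      (Shrink.{u} (LocalizedModule p.primeCompl M.obj)) :=
    (IsProjective.iff_projective (R := Localization.AtPrime p) _).2
      (projective_iff_hasProjectiveDimensionLT_one.2 h)
  have : Module.Projective (Localization.AtPrime p) (LocalizedModule p.primeCompl M.obj) :=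
    Module.Projective.of_equiv (Shrink.linearEquiv (Localization.AtPrime p) _)
  have : Module.Finite (Localization.AtPrime p) (LocalizedModule p.primeCompl M.obj) :=
    Module.Finite.of_isLocalizedModule p.primeCompl
      (LocalizedModule.mkLinearMap p.primeCompl M.obj)
  exact Module.free_of_flat_of_isLocalRing

lemma hasLocalProjDimLT_of_subsingleton {M : ModuleCat.{u} R}
    [Subsingleton (LocalizedModule p.primeCompl M)] (n : ℕ) : HasLocalProjDimLT p M n :=
  have : Subsingleton (Shrink.{u} (LocalizedModule p.primeCompl M)) :=
    (equivShrink _).symm.subsingleton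
  have := (ModuleCat.isZero_iff_subsingleton.2 this :
    Limits.IsZero ((ModuleCat.localizedModuleFunctor p.primeCompl).obj M))
  HasLocalProjDimLT.mono this.hasProjectiveDimensionLT_zero n.zero_le

lemma subsingleton_localizedModule_of_le_radical {I : Ideal R} (hI : ¬ I ≤ p) {M : Type u}
    [AddCommGroup M] [Module R M] (hM : I ≤ (Module.annihilator R M).radical) :
    Subsingleton (LocalizedModule p.primeCompl M) := by
  obtain ⟨z, hzI, hzp⟩ := Set.not_subset.1 hI
  obtain ⟨c, hc⟩ := hM hzI
  rw [IsLocalizedModule.subsingleton_iff p.primeCompl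
    (LocalizedModule.mkLinearMap p.primeCompl M)]
  exact fun y ↦ ⟨z ^ c, fun h ↦ hzp (Ideal.IsPrime.mem_of_pow_mem ‹_› c h),
    Module.mem_annihilator.1 hc y⟩

end LocalProjectiveDimension

section RegularOfAnnihilator

lemma isRegularLocal_iff {S : Type} [CommRing S] [IsLocalRing S] :
    IsRegularLocal S ↔ IsRegularLocalRing S := by
  constructor
  · rintro ⟨_, s, hs, hcard⟩
    refine IsRegularLocalRing.of_spanFinrank_maximalIdeal_le S ?_
    rw [← hcard, ← hs, ← Set.ncard_coe_finset]
    exact_mod_cast Submodule.spanFinrank_span_le_ncard_of_finite s.finite_toSet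
  · intro h
    obtain ⟨s, hcard, hs⟩ :=
      (IsNoetherian.noetherian (maximalIdeal S)).exists_span_finset_card_eq_spanFinrank
    exact ⟨inferInstance, s, hs, by rw [hcard, (isRegularLocalRing_iff S).1 h]⟩

variable {R : Type} [CommRing R] [IsNoetherianRing R] [IsLocalRing R]

lemma memCM0_iterate_syzygy {d : ℕ} (hd : ringKrullDim R = d) (hR : DepthGE R R d)
    {L : FGModuleCat.{0} R} (hL : maximalIdeal R ≤ (Module.annihilator R L.obj).radical) (m : ℕ) :
    MemCM0 R (syzygy^[d + m] L).obj := by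
  have := (syzygy^[d + m] L).property
  refine ⟨this, isMCMModule_of_depthGE hd ?_, fun q hq hqm ↦ ?_⟩
  · rw [Function.iterate_add_apply]
    exact hR.iterate_syzygy _ le_rfl
  · have not_le : ¬ maximalIdeal R ≤ q := fun hle ↦
      hqm ((maximalIdeal.isMaximal R).eq_of_le hq.ne_top hle).symm
    have := subsingleton_localizedModule_of_le_radical not_le hL
    exact ((hasLocalProjDimLT_of_subsingleton 1).iterate_syzygy _).free

lemma mem_annihilator_ext_of_maximalIdeal_torsion {d : ℕ} (hd : ringKrullDim R = d)
    (hR : DepthGE R R d) {a : R}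
    (ha : ∀ M N : ModuleCat.{0} R, MemCM0 R M → MemCM0 R N →
      a ∈ Module.annihilator R (Abelian.Ext M N 1))
    (W N : ModuleCat.{0} R) [Module.Finite R N]
    (hN : maximalIdeal R ≤ (Module.annihilator R N).radical) {i : ℕ} (hi : d < i) :
    a ∈ Module.annihilator R (Abelian.Ext N W i) := by
  obtain ⟨j, rfl⟩ := Nat.exists_eq_add_of_lt hi
  let L := FGModuleCat.of R N
  have syzygy_mem : MemCM0 R (syzygy (syzygy^[d] L)).obj := by
    rw [← Function.iterate_succ_apply' syzygy d L]
    exact memCM0_iterate_syzygy (L := L) hd hR hN 1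
  have := mem_annihilator_ext_of_iterate_syzygy d (mem_annihilator_ext_of_ext_syzygy
    (ha _ _ (memCM0_iterate_syzygy (L := L) hd hR hN 0) syzygy_mem) W j)
  rwa [show j + 1 + d = d + j + 1 by lia] at this

theorem isRegularLocalRing_localization_of_mem_annihilator_ext (hCM : IsCMLocalRing R)
    {p : Ideal R} [p.IsPrime] {a : R} (hap : a ∉ p)
    (ha : ∀ M N : ModuleCat.{0} R, MemCM0 R M → MemCM0 R N →
      a ∈ Module.annihilator R (Abelian.Ext M N 1)) :
    IsRegularLocalRing (Localization.AtPrime p) := by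
  obtain ⟨d, hd⟩ := exists_ringKrullDim_eq_natCast R
  have hR : DepthGE R R d := (ringKrullDim_le_moduleDepth_iff_depthGE hd).1 hCM.ge
  obtain ⟨T, hT⟩ := IsNoetherian.noetherian (maximalIdeal R)
  have ofList_eq : Ideal.ofList T.toList = maximalIdeal R := by
    simpa [Ideal.ofList] using! hT
  let N : FGModuleCat R := FGModuleCat.of R (R ⧸ p)
  have pow_mem := pow_mem_annihilator_ext_of_torsion {i | d < i} T.toList
    (fun z hz ↦ ofList_eq ▸ Ideal.subset_span hz) ⊥
    (fun M _ hM i hi ↦ mem_annihilator_ext_of_maximalIdeal_torsion hd hR ha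
      (syzygy^[d + 1] N).obj M (ofList_eq ▸ bot_sup_eq (Ideal.ofList T.toList) ▸ hM) hi)
    N.obj bot_le (d + 1) (by intro j _; exact Nat.lt_add_right j d.lt_succ_self)
  have pow_mem_syzygy := mem_annihilator_ext_iterate_syzygy d pow_mem
  rw [Function.iterate_succ_apply'] at pow_mem_syzygy
  have localProjDim := (hasLocalProjDimLT_one_of_mem_annihilator_ext
    (fun h ↦ hap (Ideal.IsPrime.mem_of_pow_mem ‹_› _ h)) pow_mem_syzygy).of_iterate_syzygy d
  exact isRegularLocalRing_of_hasProjectiveDimensionLT_residueField _ localProjDim.residueField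

end RegularOfAnnihilator

/-! ### Coefficient fields -/

section CoefficientField

variable (R : Type*) [CommRing R] [IsLocalRing R] [IsAdicComplete (maximalIdeal R) R]

/-- The Teichmüller lift from the perfection of `R ⧸ I` to an `I`-adically complete ring `R`; in
characteristic `p` it is additive. -/
def teichmullerRingHom {R : Type*} [CommRing R] (p : ℕ) [Fact p.Prime] [CharP R p] (I : Ideal R)
    [IsAdicComplete I R] [CharP (R ⧸ I) p] : Perfection (R ⧸ I) p →+* R :=
  { Perfection.teichmuller₀ p I with
    map_add' x y := Perfection.teichmuller₀_spec fun n ↦ by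
      refine ⟨(Perfection.coeff _ p n x).out + (Perfection.coeff _ p n y).out, by simp, ?_⟩
      rw [add_pow_char_pow]
      exact (Perfection.teichmuller₀_sModEq (by simp)).symm.add
        (Perfection.teichmuller₀_sModEq (by simp)).symm }

lemma exists_section_residue_of_charP (p : ℕ) [Fact p.Prime] [CharP R p]
    [PerfectField (ResidueField R)] :
    ∃ σ : ResidueField R →+* R, ∀ x, residue R (σ x) = x := by
  have : CharP (ResidueField R) p := (CharP.charP_iff_prime_eq_zero Fact.out).2 <| by
    rw [← map_natCast (residue R), CharP.cast_eq_zero, map_zero]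
  have : CharP (R ⧸ maximalIdeal R) p := this
  have : ExpChar (ResidueField R) p := .prime Fact.out
  have : PerfectRing (ResidueField R) p := PerfectField.toPerfectRing p
  refine ⟨(teichmullerRingHom p (maximalIdeal R)).comp
    (Perfection.lift p (ResidueField R) (R ⧸ maximalIdeal R) (.id (ResidueField R))), fun x ↦ ?_⟩
  exact Perfection.mk_teichmuller₀ (I := maximalIdeal R) _

lemma exists_section_residue_of_algebra_rat [Algebra ℚ R] :
    ∃ σ : ResidueField R →+* R, ∀ x, residue R (σ x) = x := by
  obtain ⟨s, hs⟩ := exists_isTranscendenceBasis ℚ (ResidueField R)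
  have : Algebra.IsAlgebraic (IntermediateField.adjoin ℚ (Set.range ((↑) : s → ResidueField R)))
      (ResidueField R) := IntermediateField.isAlgebraic_adjoin_iff_top.2 hs.isAlgebraic
  have : Algebra.FormallySmooth ℚ (ResidueField R) :=
    Algebra.FormallySmooth.of_algebraicIndependent_of_isSeparable hs.1
  obtain ⟨σ, hσ⟩ := Algebra.FormallySmooth.exists_mkₐ_comp_eq_of_isAdicComplete (R := ℚ)
    (A := ResidueField R) (I := maximalIdeal R)
    (AlgHom.id ℚ (ResidueField R) : ResidueField R →ₐ[ℚ] R ⧸ maximalIdeal R)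
  exact ⟨σ, fun x ↦ DFunLike.congr_fun hσ x⟩

lemma exists_section_residue (hequi : ∃ F : Subring R, IsField F)
    [PerfectField (ResidueField R)] :
    ∃ σ : ResidueField R →+* R, ∀ x, residue R (σ x) = x := by
  obtain ⟨F, hF⟩ := hequi
  let := hF.toField
  obtain ⟨p, hp⟩ := CharP.exists F
  have : CharP R p := charP_of_injective_ringHom (f := F.subtype) F.subtype_injective p
  rcases CharP.char_is_prime_or_zero F p with prime | rfl
  · have : Fact p.Prime := ⟨prime⟩
    exact exists_section_residue_of_charP R p
  · have : CharZero F := CharP.charP_to_charZero F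
    let : Algebra ℚ R := (F.subtype.comp (algebraMap ℚ F)).toAlgebra
    exact exists_section_residue_of_algebra_rat R

end CoefficientField

/-! ### Formal power series rings -/

section PowerSeries

open MvPowerSeries

variable {σ : Type*}

lemma mem_span_image_X_of_coeff_eq_zero {A : Type*} [CommRing A] (s : Finset σ)
    (f : MvPowerSeries σ A) (hf : ∀ m : σ →₀ ℕ, (∀ i ∈ s, m i = 0) → coeff m f = 0) :
    f ∈ Ideal.span (X '' (s : Set σ)) := by
  classical
  induction s using Finset.induction_on generalizing f with
  | empty =>
    have : f = 0 := by ext m; exact hf m (by simp)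
    exact this ▸ zero_mem _
  | insert i s _ ih =>
    let g : MvPowerSeries σ A := fun m ↦ if m i = 0 then coeff m f else 0
    have coeff_g (m : σ →₀ ℕ) : coeff m g = if m i = 0 then coeff m f else 0 := rfl
    have hX : X i ∣ f - g := X_dvd_iff.2 fun m hm ↦ by rw [map_sub, coeff_g, if_pos hm, sub_self]
    have hg : g ∈ Ideal.span (X '' (s : Set σ)) := ih g fun m hm ↦ by
      rw [coeff_g]
      split_ifs with hmi
      · exact hf m (Finset.forall_mem_insert _ _ _ |>.2 ⟨hmi, hm⟩)
      · rfl
    rw [Finset.coe_insert, Set.image_insert_eq, Ideal.span_insert, ← sub_add_cancel f g]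
    exact Submodule.add_mem_sup (Ideal.mem_span_singleton.2 hX) hg

lemma ker_constantCoeff_eq_span_range_X {A : Type*} [CommRing A] [Finite σ] :
    RingHom.ker (constantCoeff (σ := σ) (R := A)) = Ideal.span (Set.range X) := by
  have := Fintype.ofFinite σ
  refine le_antisymm (fun f hf ↦ ?_) (Ideal.span_le.2 ?_)
  · rw [← Set.image_univ, ← Finset.coe_univ]
    refine mem_span_image_X_of_coeff_eq_zero _ f fun m hm ↦ ?_
    obtain rfl : m = 0 := Finsupp.ext fun i ↦ hm i (Finset.mem_univ i)
    exact hf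
  · rintro _ ⟨i, rfl⟩
    exact constantCoeff_X i

lemma coeff_smul_pow_char {A : Type*} [CommRing A] (p : ℕ) [hp : Fact p.Prime] [CharP A p]
    [Finite σ] (g : MvPowerSeries σ A) (m : σ →₀ ℕ) : coeff (p • m) (g ^ p) = coeff m g ^ p := by
  rw [← map_frobenius_expand p hp.out.ne_zero, coeff_map, coeff_expand_smul, frobenius_def]

lemma coeff_pow_char_of_not_dvd {A : Type*} [CommRing A] (p : ℕ) [hp : Fact p.Prime] [CharP A p]
    [Finite σ] (g : MvPowerSeries σ A) {m : σ →₀ ℕ} {i : σ} (h : ¬ p ∣ m i) :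
    coeff m (g ^ p) = 0 := by
  rw [← map_frobenius_expand p hp.out.ne_zero, coeff_map,
    coeff_expand_of_not_dvd p hp.out.ne_zero _ h, map_zero]

lemma exists_eq_sum_pow_char_mul_prod_X_pow {A : Type*} [CommRing A] (p : ℕ) [hp : Fact p.Prime]
    [CharP A p] [PerfectRing A p] [Fintype σ] [DecidableEq σ] (f : MvPowerSeries σ A) :
    ∃ g : (σ → Fin p) → MvPowerSeries σ A, f = ∑ α, g α ^ p * ∏ i, X i ^ (α i : ℕ) := by
  let exponent (α : σ → Fin p) : σ →₀ ℕ := Finsupp.equivFunOnFinite.symm fun i ↦ (α i : ℕ)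
  have prod_X (α : σ → Fin p) :
      ∏ i, (X i : MvPowerSeries σ A) ^ (α i : ℕ) = monomial (exponent α) 1 := by
    simp [monomial_eq', Finsupp.prod_fintype, exponent]
  let g (α : σ → Fin p) : MvPowerSeries σ A := fun m ↦
    (frobeniusEquiv A p).symm (coeff (p • m + exponent α) f)
  have coeff_g_pow (α m) : coeff (p • m) (g α ^ p) = coeff (p • m + exponent α) f :=
    (coeff_smul_pow_char p _ m).trans ((frobeniusEquiv A p).apply_symm_apply _)
  refine ⟨g, MvPowerSeries.ext fun m ↦ ?_⟩
  simp_rw [prod_X, map_sum, coeff_mul_monomial, mul_one]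
  let remainder : σ → Fin p := fun i ↦ ⟨m i % p, Nat.mod_lt _ hp.out.pos⟩
  let quotient : σ →₀ ℕ := Finsupp.equivFunOnFinite.symm fun i ↦ m i / p
  have hm : p • quotient + exponent remainder = m := by
    ext i
    simp [quotient, exponent, remainder, Nat.div_add_mod]
  rw [Finset.sum_eq_single remainder, if_pos (hm ▸ le_add_self),
    show m - exponent remainder = p • quotient by rw [← hm, add_tsub_cancel_right],
    coeff_g_pow, hm]
  · intro α _ hα
    split_ifs with hle
    · obtain ⟨i, hi⟩ := Function.ne_iff.1 hα
      refine coeff_pow_char_of_not_dvd p _ (i := i) fun hd ↦ hi (Fin.ext ?_)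
      have : (α i : ℕ) ≡ m i [MOD p] := (Nat.modEq_iff_dvd' (hle i)).2 hd
      exact (Nat.mod_eq_of_lt (α i).2).symm.trans this
    · rfl
  · simp

lemma exists_algHom_mvPowerSeries_apply_X {k R : Type*} [CommRing k] [CommRing R] [Algebra k R]
    [Finite σ] {I : Ideal R} [IsAdicComplete I R] {x : σ → R} (hx : ∀ i, x i ∈ I) :
    ∃ φ : MvPowerSeries σ k →ₐ[k] R, ∀ i, φ (X i) = x i := by
  let eval : MvPolynomial σ k →ₐ[k] R := MvPolynomial.aeval x
  have le_comap : MvPolynomial.idealOfVars σ k ≤ I.comap eval := by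
    rw [MvPolynomial.idealOfVars, Ideal.span_le]
    rintro _ ⟨i, rfl⟩
    simpa [eval] using hx i
  have pow_le_comap (n : ℕ) : MvPolynomial.idealOfVars σ k ^ n ≤ (I ^ n).comap eval :=
    (Ideal.pow_right_mono le_comap n).trans (Ideal.le_comap_pow _ _)
  let evalMod (n : ℕ) : MvPowerSeries σ k →ₐ[k] R ⧸ I ^ n :=
    (Ideal.quotientMapₐ _ eval (pow_le_comap n)).comp
      ((truncTotalAlgHom σ k n).restrictScalars k)
  have compatible {m n : ℕ} (hle : m ≤ n) :
      (Ideal.Quotient.factorₐ k (Ideal.pow_le_pow_right hle)).comp (evalMod n) = evalMod m := by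
    ext f
    refine Ideal.Quotient.eq.2 ?_
    rw [RingHom.coe_coe, ← map_sub]
    exact pow_le_comap m (truncTotal_sub_truncTotal_mem_pow_idealOfVars hle le_rfl f)
  refine ⟨IsAdicComplete.liftAlgHom I evalMod compatible, fun i ↦ ?_⟩
  refine IsHausdorff.eq_iff_smodEq (I := I).2 fun n ↦ ?_
  rw [smul_eq_mul, Ideal.mul_top, SModEq.idealQuotientMk]
  calc Ideal.Quotient.mk (I ^ n) (IsAdicComplete.liftAlgHom I evalMod compatible (X i))
    _ = evalMod n (algebraMap (MvPolynomial σ k) _ (MvPolynomial.X i)) :=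
      (IsAdicComplete.mk_liftAlgHom I evalMod compatible n (X i)).trans
        (congrArg _ (MvPolynomial.coe_X i).symm)
    _ = Ideal.Quotient.mk (I ^ n) (eval (MvPolynomial.X i)) :=
      congrArg (Ideal.quotientMapₐ _ eval (pow_le_comap n))
        ((truncTotalAlgHom σ k n).commutes (MvPolynomial.X i))
    _ = Ideal.Quotient.mk (I ^ n) (x i) := by rw [MvPolynomial.aeval_X]

end PowerSeries

/-! ### Finite modules over complete rings -/

section FiniteOverComplete

variable {A : Type*} [CommRing A] {I : Ideal A}

lemma mem_smul_top_pi_iff {ι : Type*} [Finite ι] {y : ι → A} :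
    y ∈ I • (⊤ : Submodule A (ι → A)) ↔ ∀ i, y i ∈ I := by
  have := Fintype.ofFinite ι
  refine ⟨fun hy i ↦ ?_, fun hy ↦ ?_⟩
  · have h := Submodule.mem_map_of_mem (f := LinearMap.proj (R := A) (φ := fun _ : ι ↦ A) i) hy
    rw [Submodule.map_smul''] at h
    simpa using smul_mono_right I (le_top (a := Submodule.map _ _)) h
  · classical
    rw [pi_eq_sum_univ' y]
    exact Submodule.sum_mem _ fun i _ ↦ Submodule.smul_mem_smul (hy i) trivial

lemma isPrecomplete_pi [IsPrecomplete I A] (ι : Type*) [Finite ι] :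
    IsPrecomplete I (ι → A) := by
  refine ⟨fun f hf ↦ ?_⟩
  simp only [SModEq.sub_mem, mem_smul_top_pi_iff, Pi.sub_apply] at hf ⊢
  have (i : ι) : ∃ L : A, ∀ n, f n i - L ∈ I ^ n := by
    simpa [SModEq.sub_mem] using IsPrecomplete.prec' (I := I) (fun n ↦ f n i)
      fun hmn ↦ by simpa [SModEq.sub_mem] using hf hmn i
  choose L hL using this
  exact ⟨L, fun n i ↦ hL i n⟩

lemma eq_top_of_fg_of_sup_smul_top_eq_top [IsPrecomplete I A] {N : Type*} [AddCommGroup N]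
    [Module A N] [IsHausdorff I N] {T : Submodule A N} (hT : T.FG)
    (h : T ⊔ I • ⊤ = ⊤) : T = ⊤ := by
  obtain ⟨n, u, rfl⟩ := Submodule.fg_iff_exists_fin_generating_family.1 hT
  have := isPrecomplete_pi (I := I) (Fin n)
  rw [← Fintype.range_linearCombination A u, LinearMap.range_eq_top]
  refine surjective_of_mkQ_comp_surjective (I := I) ?_
  rw [← LinearMap.range_eq_top, LinearMap.range_comp, Fintype.range_linearCombination,
    ← Submodule.comap_injective_of_surjective (Submodule.mkQ_surjective _) |>.eq_iff,
    Submodule.comap_map_eq, Submodule.ker_mkQ, h, Submodule.comap_top]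

variable {R : Type*} [CommRing R] [IsLocalRing R] [Algebra A R]

lemma exists_fg_sup_pow_smul_top_eq_top [IsNoetherianRing R]
    (hsurj : Function.Surjective (residue R ∘ algebraMap A R)) (N : Type*) [AddCommGroup N]
    [Module R N] [Module.Finite R N] [Module A N] [IsScalarTower A R N] (l : ℕ) :
    ∃ T : Submodule A N, T.FG ∧
      T ⊔ (maximalIdeal R ^ l • (⊤ : Submodule R N)).restrictScalars A = ⊤ := by
  induction l with
  | zero => exact ⟨⊥, Submodule.fg_bot, by simp⟩
  | succ l ih =>
    obtain ⟨T, hT, hsup⟩ := ih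
    obtain ⟨V, hV⟩ := IsNoetherian.noetherian (maximalIdeal R ^ l • ⊤ : Submodule R N)
    refine ⟨T ⊔ Submodule.span A V, hT.sup (Submodule.fg_span V.finite_toSet), ?_⟩
    rw [eq_top_iff, ← hsup, sup_assoc]
    refine sup_le_sup_left (fun y hy ↦ ?_) T
    rw [Submodule.restrictScalars_mem, ← hV] at hy
    induction hy using Submodule.span_induction with
    | mem v hv => exact Submodule.mem_sup_left (Submodule.subset_span hv)
    | zero => exact zero_mem _
    | add y z _ _ hy hz => exact add_mem hy hz
    | smul r y hy' hy =>
      obtain ⟨a, ha⟩ := hsurj (residue R r)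
      have hra : r - algebraMap A R a ∈ maximalIdeal R := Ideal.Quotient.eq.1 ha.symm
      rw [← sub_add_cancel r (algebraMap A R a), add_smul, algebraMap_smul]
      refine add_mem (Submodule.mem_sup_right ?_) (Submodule.smul_mem _ a hy)
      rw [Submodule.restrictScalars_mem, pow_succ', mul_smul]
      exact Submodule.smul_mem_smul hra (hV ▸ hy')

lemma finite_of_surjective_residue_of_le_radical [IsPrecomplete I A] [IsNoetherianRing R]
    (hsurj : Function.Surjective (residue R ∘ algebraMap A R))
    (hI : I.map (algebraMap A R) ≤ maximalIdeal R) (N : Type*) [AddCommGroup N]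
    [Module R N] [Module.Finite R N] [Module A N] [IsScalarTower A R N]
    (hN : maximalIdeal R ≤ (I.map (algebraMap A R) ⊔ Module.annihilator R N).radical) :
    Module.Finite A N := by
  have : IsHausdorff I N := .of_map hI
  obtain ⟨l, hl⟩ := Ideal.exists_pow_le_of_le_radical_of_fg hN (IsNoetherian.noetherian _)
  obtain ⟨T, hT, hsup⟩ := exists_fg_sup_pow_smul_top_eq_top hsurj N l
  have hle : (maximalIdeal R ^ l • (⊤ : Submodule R N)).restrictScalars A ≤ I • ⊤ := by
    rw [← Submodule.restrictScalars_top A R N, ← Ideal.smul_restrictScalars]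
    refine (Submodule.smul_mono_left hl).trans ?_
    rw [Submodule.sup_smul, Submodule.annihilator_top.symm, Submodule.annihilator_smul, sup_bot_eq]
  rw [Module.finite_def, ← eq_top_of_fg_of_sup_smul_top_eq_top hT
    (top_le_iff.1 (hsup ▸ sup_le_sup_left hle T))]
  exact hT

end FiniteOverComplete

/-! ### Maximal Cohen-Macaulay modules over finite extensions of regular rings are free -/

section FreeOfMCM

lemma subsingleton_of_exact_of_isWeaklyRegular {A K F M : Type*} [CommRing A] [IsLocalRing A]
    [AddCommGroup K] [Module A K] [Module.Finite A K] [AddCommGroup F] [Module A F]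
    [AddCommGroup M] [Module A M] {xs : List A} (hxs : Ideal.ofList xs = maximalIdeal A)
    (hM : RingTheory.Sequence.IsWeaklyRegular M xs) {f : K →ₗ[A] F} {g : F →ₗ[A] M}
    (hf : Function.Injective f) (hfg : Function.Exact f g) (hg : Function.Surjective g)
    (hrange : LinearMap.range f ≤ maximalIdeal A • ⊤) : Subsingleton K := by
  have exact := RingTheory.Sequence.map_first_exact_on_four_term_right_exact_of_isSMulRegular_last
    ((LinearMap.exact_zero_iff_injective PUnit f).2 hf) hfg hg hM
  have top_le : (⊤ : Submodule A K) ≤ maximalIdeal A • ⊤ := fun c _ ↦ by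
    rw [← hxs, ← Submodule.Quotient.mk_eq_zero]
    obtain ⟨w, hw⟩ := (exact (Submodule.Quotient.mk c)).1 <| by
      rw [Submodule.mapQ_apply, Submodule.Quotient.mk_eq_zero, hxs]
      exact hrange ⟨c, rfl⟩
    obtain ⟨w, rfl⟩ := Submodule.Quotient.mk_surjective _ w
    rw [← hw, Submodule.mapQ_apply, LinearMap.zero_apply, Submodule.Quotient.mk_zero]
  rw [← Submodule.subsingleton_iff A, ← subsingleton_iff_bot_eq_top]
  exact (Submodule.eq_bot_of_le_smul_of_le_jacobson_bot (maximalIdeal A) _ Module.Finite.fg_top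
    top_le (maximalIdeal_le_jacobson _)).symm

lemma free_of_isWeaklyRegular_of_ofList_eq_maximalIdeal {A M : Type u} [CommRing A]
    [IsLocalRing A] [IsNoetherianRing A] [AddCommGroup M] [Module A M] [Module.Finite A M]
    {xs : List A} (hxs : Ideal.ofList xs = maximalIdeal A)
    (hM : RingTheory.Sequence.IsWeaklyRegular M xs) : Module.Free A M := by
  obtain ⟨ι, _, g, hg, hker⟩ := exists_surjective_ker_le_maximalIdeal (S := A) M
  have ker_le : LinearMap.ker g ≤ maximalIdeal A • ⊤ := fun c hc ↦ by
    rw [← c.sum_single]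
    refine Submodule.sum_mem _ fun i _ ↦ ?_
    rw [← mul_one (c i), ← smul_eq_mul, ← Finsupp.smul_single]
    exact Submodule.smul_mem_smul (hker c hc i) trivial
  have : Subsingleton (LinearMap.ker g) :=
    subsingleton_of_exact_of_isWeaklyRegular hxs hM (Submodule.subtype_injective _)
      (LinearMap.exact_subtype_ker_map g) hg (by rwa [Submodule.range_subtype])
  have ker_eq_bot : LinearMap.ker g = ⊥ := Submodule.subsingleton_iff_eq_bot.1 this
  exact .of_equiv (LinearEquiv.ofBijective g ⟨LinearMap.ker_eq_bot.1 ker_eq_bot, hg⟩)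

lemma isWeaklyRegular_of_isMCMModule {R M : Type} [CommRing R] [IsNoetherianRing R]
    [IsLocalRing R] [AddCommGroup M] [Module R M] [Module.Finite R M] (hM : IsMCMModule R M)
    {xs : List R} (hxs : ∀ x ∈ xs, x ∈ maximalIdeal R) (hd : ringKrullDim R = xs.length)
    (hrad : maximalIdeal R ≤ (Ideal.ofList xs).radical) :
    RingTheory.Sequence.IsWeaklyRegular M xs := by
  let m := maximalIdeal R
  let Rm := Localization.AtPrime m
  have map_eq : m.map (algebraMap R Rm) = maximalIdeal Rm :=
    Localization.AtPrime.map_eq_maximalIdeal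
  have dim_eq : ringKrullDim Rm = (xs.map (algebraMap R Rm)).length := by
    rw [IsLocalization.AtPrime.ringKrullDim_eq_height m, List.length_map, ← hd,
      IsLocalRing.maximalIdeal_height_eq_ringKrullDim]
  have regular : RingTheory.Sequence.IsWeaklyRegular (LocalizedModule m.primeCompl M)
      (xs.map (algebraMap R Rm)) := by
    refine isWeaklyRegular_of_depthGE (fun z hz ↦ ?_) (I := ⊥) ?_ bot_le
      ((ringKrullDim_le_moduleDepth_iff_depthGE dim_eq).1 (hM m))
    · obtain ⟨x, hx, rfl⟩ := List.mem_map.1 hz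
      exact map_eq ▸ Ideal.mem_map_of_mem _ (hxs x hx)
    · rw [bot_sup_eq, ← Ideal.map_ofList, ← map_eq]
      exact (Ideal.map_mono hrad).trans (Ideal.map_radical_le _)
  have : IsLocalization m.primeCompl R := .self fun s hs ↦ by simpa [m] using! hs
  have := isLocalizedModule_id m.primeCompl M R
  let e : M ≃ₗ[R] LocalizedModule m.primeCompl M := IsLocalizedModule.linearEquiv m.primeCompl
    LinearMap.id (LocalizedModule.mkLinearMap m.primeCompl M)
  rw [RingTheory.Sequence.isWeaklyRegular_map_algebraMap_iff] at regular
  exact (e.isWeaklyRegular_congr xs).2 regular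

lemma maximalIdeal_le_radical_map_maximalIdeal (A R : Type*) [CommRing A] [IsLocalRing A]
    [CommRing R] [IsLocalRing R] [Algebra A R] [Algebra.IsIntegral A R] :
    maximalIdeal R ≤ ((maximalIdeal A).map (algebraMap A R)).radical := by
  rw [Ideal.radical_eq_sInf]
  refine le_sInf fun q ⟨hle, _⟩ ↦ ?_
  have : (q.comap (algebraMap A R)).IsMaximal :=
    (maximalIdeal.isMaximal A).eq_of_le (Ideal.comap_ne_top _ (Ideal.IsPrime.ne_top ‹_›))
      (Ideal.map_le_iff_le_comap.1 hle) ▸ maximalIdeal.isMaximal A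
  exact (IsLocalRing.eq_maximalIdeal (Ideal.isMaximal_of_isIntegral_of_isMaximal_comap q this)).ge

lemma ofList_ofFn_X_eq_maximalIdeal (k : Type*) [Field k] (n : ℕ) :
    Ideal.ofList (List.ofFn (MvPowerSeries.X : Fin n → MvPowerSeries (Fin n) k)) =
      maximalIdeal (MvPowerSeries (Fin n) k) := by
  simp only [Ideal.ofList, List.mem_ofFn', Set.ofPred_mem_eq, ← ker_constantCoeff_eq_span_range_X]
  ext f
  rw [RingHom.mem_ker, mem_maximalIdeal, mem_nonunits_iff, MvPowerSeries.isUnit_iff_constantCoeff,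
    isUnit_iff_ne_zero, not_not]

lemma free_of_isMCMModule {A R M : Type} [CommRing A] [IsLocalRing A] [IsNoetherianRing A]
    [CommRing R] [IsLocalRing R] [Algebra A R] [Module.Finite A R] [AddCommGroup M] [Module R M]
    [Module.Finite R M] [Module A M] [IsScalarTower A R M] {xs : List A}
    (hxs : Ideal.ofList xs = maximalIdeal A) (hd : ringKrullDim R = xs.length)
    (hM : IsMCMModule R M) : Module.Free A M := by
  have : IsNoetherianRing R := .of_finite A R
  have : Module.Finite A M := .trans R M
  refine free_of_isWeaklyRegular_of_ofList_eq_maximalIdeal hxs ?_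
  rw [← RingTheory.Sequence.isWeaklyRegular_map_algebraMap_iff R]
  refine isWeaklyRegular_of_isMCMModule hM (fun x hx ↦ ?_) (by rwa [List.length_map]) ?_
  · obtain ⟨a, ha, rfl⟩ := List.mem_map.1 hx
    rw [← Ideal.mem_comap, eq_maximalIdeal
      (Ideal.isMaximal_comap_of_isIntegral_of_isMaximal (R := A) (maximalIdeal R)), ← hxs]
    exact Ideal.subset_span ha
  · rw [← Ideal.map_ofList, hxs]
    exact maximalIdeal_le_radical_map_maximalIdeal A R

end FreeOfMCM

/-! ### The Noether different annihilates Ext -/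

section NoetherDifferent

open TensorProduct

variable {A R M F : Type*} [CommRing A] [CommRing R] [Algebra A R] [AddCommGroup M] [Module R M]
  [Module A M] [IsScalarTower A R M] [AddCommGroup F] [Module R F] [Module A F]
  [IsScalarTower A R F]

/-- The action of `R ⊗[A] R` on the `A`-linear map `τ : M → F` by composition with
multiplications: `a ⊗ b` sends `τ` to `m ↦ a • τ (b • m)`. -/
def tensorSandwich (τ : M →ₗ[A] F) : R ⊗[A] R →ₗ[A] (M →ₗ[A] F) :=
  TensorProduct.lift <| LinearMap.mk₂ A
    (fun a b ↦ Algebra.lsmul A A F a ∘ₗ τ ∘ₗ Algebra.lsmul A A M b)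
    (fun _ _ _ ↦ by ext; simp) (fun _ _ _ ↦ by ext; simp) (fun _ _ _ ↦ by ext; simp)
    (fun c a _ ↦ by ext; simp [smul_comm a c])

namespace tensorSandwich

variable (τ : M →ₗ[A] F)

@[simp]
lemma apply_tmul (a b : R) (m : M) : tensorSandwich τ (a ⊗ₜ b) m = a • τ (b • m) := rfl

lemma mul_one_tmul (r : R) (x : R ⊗[A] R) (m : M) :
    tensorSandwich τ (x * 1 ⊗ₜ r) m = tensorSandwich τ x (r • m) := by
  induction x with
  | zero => simp
  | tmul a b => simp [mul_smul]
  | add x y hx hy => simp [add_mul, hx, hy]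

lemma mul_tmul_one (r : R) (x : R ⊗[A] R) (m : M) :
    tensorSandwich τ (x * r ⊗ₜ 1) m = r • tensorSandwich τ x m := by
  induction x with
  | zero => simp
  | tmul a b => simp [mul_comm a, mul_smul]
  | add x y hx hy => simp [add_mul, hx, hy]

lemma map_apply_of_rightInverse {π : F →ₗ[R] M} (hτ : Function.RightInverse τ π) (x : R ⊗[A] R)
    (m : M) : π (tensorSandwich τ x m) = Algebra.TensorProduct.lmul' A (S := R) x • m := by
  induction x with
  | zero => simp
  | tmul a b => simp [hτ _, mul_smul]
  | add x y hx hy => simp [add_smul, hx, hy]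

end tensorSandwich

lemma exists_linearMap_comp_eq_smul_of_mul_eq_zero {π : F →ₗ[R] M} {τ : M →ₗ[A] F}
    (hτ : Function.RightInverse τ π) {δ : R ⊗[A] R}
    (hδ : ∀ x ∈ KaehlerDifferential.ideal A R, δ * x = 0) :
    ∃ g : M →ₗ[R] F, ∀ m, π (g m) = Algebra.TensorProduct.lmul' A (S := R) δ • m := by
  refine ⟨{ tensorSandwich τ δ with map_smul' r m := ?_ },
    tensorSandwich.map_apply_of_rightInverse τ hτ δ⟩
  have comm := hδ _ (KaehlerDifferential.one_smul_sub_smul_one_mem_ideal A r)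
  rw [mul_sub, sub_eq_zero] at comm
  exact (tensorSandwich.mul_one_tmul τ r δ m).symm.trans
    (comm ▸ tensorSandwich.mul_tmul_one τ r δ m)

lemma exists_forall_mul_eq_zero_and_sub_pow_mem {B : Type*} [CommRing B] {J : Ideal B} (hJ : J.FG)
    {t : B} (ht : ∀ x ∈ J, t * x ∈ J ^ 2) :
    ∃ (n : ℕ) (δ : B), (∀ x ∈ J, δ * x = 0) ∧ δ - t ^ n ∈ J := by
  have : Module.Finite B J := .of_fg hJ
  have range_le : LinearMap.range (algebraMap B (Module.End B J) t) ≤ J • ⊤ := by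
    rintro _ ⟨x, rfl⟩
    have map_eq : (J • ⊤ : Submodule B J).map J.subtype = J ^ 2 := by
      rw [Submodule.map_smul'', Submodule.map_top, Submodule.range_subtype, smul_eq_mul, pow_two]
    exact (J.subtype_injective.mem_set_image (s := (J • ⊤ : Submodule B J))).1
      (map_eq.ge (ht x x.2))
  obtain ⟨p, monic, -, coeff_mem, aeval_eq_zero⟩ :=
    LinearMap.exists_monic_and_natDegree_eq_and_coeff_mem_pow_and_aeval_eq_zero B _ J range_le
  refine ⟨p.natDegree, p.eval t, fun x hx ↦ ?_, ?_⟩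
  · rw [Polynomial.aeval_algebraMap_apply] at aeval_eq_zero
    exact congrArg Subtype.val (LinearMap.congr_fun aeval_eq_zero ⟨x, hx⟩)
  · rw [Polynomial.eval_eq_sum_range, Finset.sum_range_succ, monic.coeff_natDegree, one_mul,
      add_sub_cancel_right]
    refine Ideal.sum_mem _ fun i hi ↦ Ideal.mul_mem_right _ _ ?_
    exact Ideal.pow_le_self (Nat.sub_ne_zero_of_lt (Finset.mem_range.1 hi)) (coeff_mem i)

lemma tmul_one_mul_mem_ideal_sq {s : R} (hs : s ∈ Module.annihilator R Ω[R⁄A]) {x : R ⊗[A] R}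
    (hx : x ∈ KaehlerDifferential.ideal A R) :
    s ⊗ₜ 1 * x ∈ KaehlerDifferential.ideal A R ^ 2 := by
  refine (Ideal.toCotangent_eq_zero _ ((s ⊗ₜ[A] (1 : R)) • ⟨x, hx⟩)).1 ?_
  let ω : Ω[R⁄A] := KaehlerDifferential.fromIdeal A R ⟨x, hx⟩
  have smul_eq : (s ⊗ₜ[A] (1 : R)) • ω = s • ω := IsScalarTower.algebraMap_smul (R ⊗[A] R) s ω
  exact (map_smul _ _ _).trans (smul_eq.trans (Module.mem_annihilator.1 hs ω))

variable (A) in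
lemma exists_noetherDifferent_eq_pow [Algebra.FiniteType A R] {s : R}
    (hs : s ∈ Module.annihilator R Ω[R⁄A]) :
    ∃ (n : ℕ) (δ : R ⊗[A] R), (∀ x ∈ KaehlerDifferential.ideal A R, δ * x = 0) ∧
      Algebra.TensorProduct.lmul' A (S := R) δ = s ^ n := by
  obtain ⟨n, δ, mul_eq_zero, sub_mem⟩ := exists_forall_mul_eq_zero_and_sub_pow_mem
    (KaehlerDifferential.ideal_fg A R) fun x ↦ tmul_one_mul_mem_ideal_sq hs (x := x)
  refine ⟨n, δ, mul_eq_zero, ?_⟩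
  have : Algebra.TensorProduct.lmul' A (S := R) (δ - (s ⊗ₜ 1) ^ n) = 0 := sub_mem
  simpa [sub_eq_zero] using this

end NoetherDifferent

section KillsExt

variable {R : Type u} [CommRing R]

lemma mem_annihilator_ext_of_factors_through_projective {M P : ModuleCat.{u} R} [Projective P]
    {a : R} {g : M →ₗ[R] P} {π : P →ₗ[R] M} (h : ∀ m, π (g m) = a • m) (N : ModuleCat.{u} R)
    (i : ℕ) : a ∈ Module.annihilator R (Abelian.Ext M N (i + 1)) := by
  refine Module.mem_annihilator.2 fun e ↦ ?_
  have factors : ModuleCat.ofHom g ≫ ModuleCat.ofHom π = a • 𝟙 M := by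
    ext m
    exact h m
  calc a • e = (Abelian.Ext.mk₀ (a • 𝟙 M)).comp e (zero_add _) := by
        rw [Abelian.Ext.mk₀_smul, Abelian.Ext.smul_comp, Abelian.Ext.mk₀_id_comp]
    _ = (Abelian.Ext.mk₀ (ModuleCat.ofHom g)).comp
          ((Abelian.Ext.mk₀ (ModuleCat.ofHom π)).comp e (zero_add _)) (zero_add _) := by
        rw [← factors, Abelian.Ext.mk₀_comp_mk₀_assoc]
    _ = 0 := by rw [Abelian.Ext.eq_zero_of_projective (Abelian.Ext.comp _ e _),
        Abelian.Ext.comp_zero]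

lemma exists_pow_mem_annihilator_ext_of_projective_restrictScalars (A : Type*) [CommRing A]
    [Algebra A R] [Algebra.FiniteType A R] {s : R} (hs : s ∈ Module.annihilator R Ω[R⁄A]) :
    ∃ n : ℕ, ∀ (M N : ModuleCat.{u} R) [Module A M] [IsScalarTower A R M] [Module.Projective A M]
      (i : ℕ), s ^ n ∈ Module.annihilator R (Abelian.Ext M N (i + 1)) := by
  obtain ⟨n, δ, mul_eq_zero, lmul_eq⟩ := exists_noetherDifferent_eq_pow A hs
  refine ⟨n, fun M N _ _ _ i ↦ ?_⟩
  let π : (M →₀ R) →ₗ[R] M := Finsupp.linearCombination R id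
  obtain ⟨τ, hτ⟩ := Module.projective_lifting_property (π.restrictScalars A) LinearMap.id
    (Finsupp.linearCombination_id_surjective R M)
  obtain ⟨g, hg⟩ := exists_linearMap_comp_eq_smul_of_mul_eq_zero (π := π) (τ := τ)
    (LinearMap.congr_fun hτ) mul_eq_zero
  have : Projective (ModuleCat.of R (M →₀ R)) :=
    ModuleCat.projective_of_free (Module.Free.chooseBasis R (M →₀ R))
  exact mem_annihilator_ext_of_factors_through_projective (P := ModuleCat.of R (M →₀ R))
    (g := g) (π := π) (fun m ↦ lmul_eq ▸ hg m) N i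

end KillsExt

/-! ### Generation of fields over their `p`-th powers -/

section PBasis

variable {κ : Type u} [Field κ] (p : ℕ) [Fact p.Prime] [CharP κ p]

lemma finrank_adjoin_singleton_of_pow_mem {F : Type*} [Field F] [Algebra F κ] {x : κ}
    (hx : x ∉ Set.range (algebraMap F κ)) (hxp : x ^ p ∈ Set.range (algebraMap F κ)) :
    Module.finrank F (IntermediateField.adjoin F {x}) = p := by
  have hp : p.Prime := Fact.out
  obtain ⟨a, ha⟩ := hxp
  have hirr : Irreducible (Polynomial.X ^ p - Polynomial.C a) :=
    X_pow_sub_C_irreducible_of_prime hp fun b hb ↦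
      hx ⟨b, frobenius_inj κ p (by simp only [frobenius_def, ← map_pow, hb, ha])⟩
  have hmonic := Polynomial.monic_X_pow_sub_C a hp.ne_zero
  have hroot : Polynomial.aeval x (Polynomial.X ^ p - Polynomial.C a) = 0 := by simp [ha]
  rw [IntermediateField.adjoin.finrank ⟨_, hmonic, by simpa using hroot⟩,
    ← minpoly.eq_of_irreducible_of_monic hirr hroot hmonic, Polynomial.natDegree_X_pow_sub_C]

lemma exists_finset_card_le_adjoin_eq_top {B : Type*} (f : B → κ) (n : ℕ) (F : Type u) [Field F]
    [Algebra F κ] [Module.Finite F κ] (hn : Module.finrank F κ ≤ p ^ n)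
    (hF : ∀ x : κ, x ^ p ∈ Set.range (algebraMap F κ))
    (hf : IntermediateField.adjoin F (Set.range f) = ⊤) :
    ∃ T : Finset B, T.card ≤ n ∧ IntermediateField.adjoin F (f '' T) = ⊤ := by
  classical
  induction n generalizing F with
  | zero =>
    have hrank : Module.finrank F κ = 1 := le_antisymm (by simpa using hn) Module.finrank_pos
    exact ⟨∅, by simp, by
      rw [Finset.coe_empty, Set.image_empty, IntermediateField.adjoin_empty,
        IntermediateField.bot_eq_top_iff_finrank_eq_one.2 hrank]⟩
  | succ n ih =>
    by_cases hfF : Set.range f ⊆ Set.range (algebraMap F κ)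
    · exact ⟨∅, by simp, by
        rw [Finset.coe_empty, Set.image_empty, IntermediateField.adjoin_empty, eq_comm, ← hf,
          IntermediateField.adjoin_eq_bot_iff]
        exact fun y hy ↦ IntermediateField.mem_bot.2 (hfF hy)⟩
    obtain ⟨_, ⟨b, rfl⟩, hb⟩ := Set.not_subset.1 hfF
    let L := IntermediateField.adjoin F {f b}
    have hL : Module.finrank L κ ≤ p ^ n := by
      have hmul := Module.finrank_mul_finrank F L κ
      rw [finrank_adjoin_singleton_of_pow_mem p hb (hF (f b))] at hmul
      rw [← hmul, pow_succ'] at hn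
      exact Nat.le_of_mul_le_mul_left hn (Fact.out : p.Prime).pos
    have hLf : IntermediateField.adjoin L (Set.range f) = ⊤ := by
      rw [← IntermediateField.restrictScalars_eq_top_iff (K := F),
        IntermediateField.adjoin_adjoin_left, eq_top_iff, ← hf]
      exact IntermediateField.adjoin.mono _ _ _ Set.subset_union_right
    obtain ⟨T, hT, hLT⟩ := ih L hL
      (fun y ↦ let ⟨c, hc⟩ := hF y; ⟨algebraMap F L c, hc⟩) hLf
    refine ⟨insert b T, (Finset.card_insert_le _ _).trans (Nat.succ_le_succ hT), ?_⟩
    rw [Finset.coe_insert, Set.image_insert_eq, Set.insert_eq,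
      ← IntermediateField.adjoin_adjoin_left, hLT, IntermediateField.restrictScalars_top]

lemma finrank_frobenius_fieldRange_eq (K : Subfield κ) [Module.Finite K κ] :
    Module.finrank (frobenius κ p).fieldRange κ = Module.finrank (frobenius K p).fieldRange K := by
  set φ := frobenius κ p
  have hmap : (frobenius K p).fieldRange.map K.subtype = K.map φ := by
    rw [RingHom.map_fieldRange, RingHom.frobenius_comm, ← RingHom.map_fieldRange,
      Subfield.fieldRange_subtype]
  have hκ : (K.map φ).relfinrank φ.fieldRange = Module.finrank K κ := by
    rw [RingHom.fieldRange_eq_map, Subfield.relfinrank_map_map, Subfield.relfinrank_top_right]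
  have hK : (K.map φ).relfinrank K = Module.finrank (frobenius K p).fieldRange K := by
    rw [← Subfield.relfinrank_top_right, ← Subfield.relfinrank_map_map _ _ K.subtype, hmap,
      ← RingHom.fieldRange_eq_map, Subfield.fieldRange_subtype]
  have hKφ : K.map φ ≤ φ.fieldRange := by
    rw [RingHom.fieldRange_eq_map]
    exact (Subfield.gc_map_comap φ).monotone_l le_top
  have hKK : K.map φ ≤ K := by
    rw [Subfield.map_le_iff_le_comap]
    exact fun x hx ↦ pow_mem hx p
  have hmul := (Subfield.relfinrank_mul_finrank_top hKφ).trans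
    (Subfield.relfinrank_mul_finrank_top hKK).symm
  rw [hκ, hK, mul_comm] at hmul
  exact Nat.eq_of_mul_eq_mul_right Module.finrank_pos hmul

lemma finite_frobenius_fieldRange (K : Subfield κ) [Module.Finite K κ]
    [Module.Finite (frobenius K p).fieldRange K] : Module.Finite (frobenius κ p).fieldRange κ :=
  Module.finite_of_finrank_pos <| by
    rw [finrank_frobenius_fieldRange_eq p K]
    exact Module.finrank_pos

-- A fraction `a / b` equals `a * b ^ (p - 1)` up to the `p`-th power `b ^ p`.
lemma span_frobenius_fieldRange_eq_top {A ι : Type*} [CommRing A] [Fintype ι] (f : A →+* κ)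
    (hf : Subfield.closure (Set.range f) = ⊤) (m : ι → A)
    (hm : ∀ a, ∃ g : ι → A, a = ∑ i, g i ^ p * m i) :
    Submodule.span (frobenius κ p).fieldRange (Set.range (f ∘ m)) = ⊤ := by
  have hpow : ∀ x : κ, x ^ p ∈ (frobenius κ p).fieldRange := fun x ↦ ⟨x, rfl⟩
  have hmem : ∀ a, f a ∈ Submodule.span (frobenius κ p).fieldRange (Set.range (f ∘ m)) := by
    intro a
    obtain ⟨g, hg⟩ := hm a
    rw [hg, map_sum]
    refine sum_mem fun i _ ↦ ?_
    rw [map_mul, map_pow]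
    exact Submodule.smul_mem _ (⟨_, hpow (f (g i))⟩ : (frobenius κ p).fieldRange)
      (Submodule.subset_span ⟨i, rfl⟩)
  refine eq_top_iff.2 fun x _ ↦ ?_
  have hx : x ∈ Subfield.closure (Set.range f) := hf ▸ Subfield.mem_top x
  rw [Subfield.mem_closure_iff, ← RingHom.coe_range, Subring.closure_eq] at hx
  obtain ⟨_, ⟨a, rfl⟩, _, ⟨b, rfl⟩, rfl⟩ := hx
  have hfrac : f a / f b = (f b)⁻¹ ^ p * f (a * b ^ (p - 1)) := by
    rcases eq_or_ne (f b) 0 with hb | hb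
    · simp [hb, (Fact.out : p.Prime).ne_zero]
    · rw [map_mul, map_pow, inv_pow, ← mul_pow_sub_one (Fact.out : p.Prime).ne_zero (f b)]
      field_simp
  rw [hfrac]
  exact Submodule.smul_mem _ (⟨_, hpow (f b)⁻¹⟩ : (frobenius κ p).fieldRange) (hmem _)

end PBasis

/-! ### Derivations into a residue field -/

section Derivations

lemma exists_derivation_quotient_comp_mk {k R M : Type*} [CommRing k] [CommRing R] [Algebra k R]
    [AddCommGroup M] [Module k M] [Module R M] (I : Ideal R) [Module (R ⧸ I) M]
    [IsScalarTower R (R ⧸ I) M] (D : Derivation k R M) (hD : ∀ r ∈ I, D r = 0) :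
    ∃ D' : Derivation k (R ⧸ I) M, ∀ r, D' (Ideal.Quotient.mk I r) = D r := by
  let f : R ⧸ I →ₗ[k] M := (I.restrictScalars k).liftQ D.toLinearMap hD
  have hf : ∀ r, f (Ideal.Quotient.mk I r) = D r := fun _ ↦ rfl
  refine ⟨Derivation.mk' f fun a b ↦ ?_, hf⟩
  obtain ⟨a, rfl⟩ := Ideal.Quotient.mk_surjective a
  obtain ⟨b, rfl⟩ := Ideal.Quotient.mk_surjective b
  rw [← map_mul, hf, hf, hf, D.leibniz, ← Ideal.Quotient.algebraMap_eq,
    IsScalarTower.algebraMap_smul, IsScalarTower.algebraMap_smul]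

lemma exists_derivation_comp_algebraMap_of_formallyEtale {k S T M : Type*} [CommRing k] [CommRing S]
    [CommRing T] [Algebra k S] [Algebra k T] [Algebra S T] [IsScalarTower k S T]
    [Algebra.FormallyEtale S T] [AddCommGroup M] [Module k M] [Module S M] [Module T M]
    [IsScalarTower S T M] [IsScalarTower k S M] [IsScalarTower k T M] (D : Derivation k S M) :
    ∃ D' : Derivation k T M, ∀ s, D' (algebraMap S T s) = D s := by
  refine ⟨(D.liftKaehlerDifferential.liftBaseChange T ∘ₗ
    (KaehlerDifferential.tensorKaehlerEquivOfFormallyEtale k S T).symm.toLinearMap).compDer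
      (KaehlerDifferential.D k T), fun s ↦ ?_⟩
  simp [KaehlerDifferential.tensorKaehlerEquivOfFormallyEtale_symm_D_algebraMap]

lemma exists_derivation_residueField_comp_algebraMap {k R : Type*} [CommRing k] [CommRing R]
    [Algebra k R] (p : Ideal R) [p.IsPrime] (D : Derivation k R p.ResidueField)
    (hD : ∀ r ∈ p, D r = 0) :
    ∃ D' : Derivation k p.ResidueField p.ResidueField, ∀ r, D' (algebraMap R _ r) = D r := by
  have := Algebra.FormallyEtale.of_isLocalization (Rₘ := p.ResidueField)
    (nonZeroDivisors (R ⧸ p))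
  obtain ⟨D₁, hD₁⟩ := exists_derivation_quotient_comp_mk p D hD
  obtain ⟨D₂, hD₂⟩ := exists_derivation_comp_algebraMap_of_formallyEtale (T := p.ResidueField) D₁
  exact ⟨D₂, fun r ↦ by rw [← hD₁, ← hD₂]; rfl⟩

lemma derivation_eq_zero_of_formallyUnramified {k K L : Type*} [CommRing k] [CommRing K]
    [CommRing L] [Algebra k L] [Algebra K L] [Algebra.FormallyUnramified K L]
    {D : Derivation k L L} (hD : ∀ c : K, D (algebraMap K L c) = 0) : D = 0 := by
  let D' : Derivation K L L := Derivation.mk'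
    { toFun := D, map_add' := map_add D, map_smul' := fun c y ↦ by simp [Algebra.smul_def, hD] }
    D.leibniz
  have hD' : D' = 0 := by
    rw [← D'.liftKaehlerDifferential_comp]
    ext y
    simp [Subsingleton.elim (KaehlerDifferential.D K L y) 0]
  ext y
  exact DFunLike.congr_fun hD' y

lemma derivation_apply_eq_zero_of_mem_closure {k κ : Type*} [CommRing k] [Field κ] [Algebra k κ]
    {D : Derivation k κ κ} {S : Set κ} (hD : ∀ x ∈ S, D x = 0) {x : κ}
    (hx : x ∈ Subfield.closure S) : D x = 0 := by
  induction hx using Subfield.closure_induction with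
  | mem x hx => exact hD x hx
  | one => exact D.map_one_eq_zero
  | add x y _ _ hx hy => rw [map_add, hx, hy, add_zero]
  | neg x _ hx => rw [map_neg, hx, neg_zero]
  | inv x _ hx => rw [D.leibniz_inv, hx, smul_zero]
  | mul x y _ _ hx hy => rw [D.leibniz, hx, hy, smul_zero, smul_zero, add_zero]

lemma adjoin_eq_top_of_closure_eq_top {F κ : Type*} [Field F] [Field κ] [Algebra F κ] {S : Set κ}
    (hS : Subfield.closure S = ⊤) : IntermediateField.adjoin F S = ⊤ := by
  refine eq_top_iff.2 fun x _ ↦ ?_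
  have hx : x ∈ Subfield.closure S := hS ▸ Subfield.mem_top x
  exact Subfield.closure_mono Set.subset_union_right hx

lemma finite_closure_range_algebraMap (A B κ : Type*) [CommRing A] [CommRing B] [Algebra A B]
    [Module.Finite A B] [Field κ] [Algebra A κ] [Algebra B κ] [IsScalarTower A B κ]
    [IsFractionRing B κ] : Module.Finite (Subfield.closure (Set.range (algebraMap A κ))) κ := by
  set K := Subfield.closure (Set.range (algebraMap A κ))
  have hAK : ∀ a, algebraMap A κ a ∈ K := fun a ↦ Subfield.subset_closure ⟨a, rfl⟩
  obtain ⟨s, hs⟩ := Module.Finite.fg_top (R := A) (M := B)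
  let L := IntermediateField.adjoin K (algebraMap B κ '' s)
  have isIntegral_algebraMap : ∀ b : B, IsIntegral K (algebraMap B κ b) := fun b ↦
    (Algebra.IsIntegral.isIntegral (R := A) b).map_of_comp_eq
      ((algebraMap A κ).codRestrict K hAK) (algebraMap B κ)
      (by ext a; exact IsScalarTower.algebraMap_apply A B κ a)
  have hL : L = ⊤ := by
    rw [← IntermediateField.toSubfield_inj, IntermediateField.top_toSubfield, eq_top_iff,
      ← IsFractionRing.closure_range_algebraMap B κ, Subfield.closure_le]
    rintro _ ⟨b, rfl⟩
    have hb : b ∈ Submodule.span A (s : Set B) := hs ▸ Submodule.mem_top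
    induction hb using Submodule.span_induction with
    | mem b hb => exact IntermediateField.subset_adjoin _ _ ⟨b, hb, rfl⟩
    | zero => rw [map_zero]; exact zero_mem L
    | add b c _ _ hb hc => rw [map_add]; exact add_mem hb hc
    | smul a b _ hb =>
      rw [Algebra.smul_def, map_mul, ← IsScalarTower.algebraMap_apply]
      exact mul_mem (L.algebraMap_mem ⟨_, hAK a⟩) hb
  have : Finite (algebraMap B κ '' s) := (s.finite_toSet.image _)
  have : Module.Finite K L := IntermediateField.finiteDimensional_adjoin <| by
    rintro _ ⟨b, -, rfl⟩
    exact isIntegral_algebraMap b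
  rw [hL] at this
  exact Module.Finite.equiv IntermediateField.topEquiv.toLinearEquiv

lemma exists_finset_adjoin_frobenius_fieldRange_eq_top (A B : Type*) {κ : Type u} [CommRing A]
    [CommRing B] [Algebra A B] [Module.Finite A B] [Field κ] [Algebra A κ] [Algebra B κ]
    [IsScalarTower A B κ] [IsFractionRing B κ] (p : ℕ) [Fact p.Prime] [CharP κ p] {ι : Type*}
    [Fintype ι] (m : ι → A) (hm : ∀ a, ∃ g : ι → A, a = ∑ i, g i ^ p * m i) {n : ℕ}
    (hn : Fintype.card ι ≤ p ^ n) :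
    ∃ T : Finset B, T.card ≤ n ∧
      IntermediateField.adjoin (frobenius κ p).fieldRange (algebraMap B κ '' T) = ⊤ := by
  set K := Subfield.closure (Set.range (algebraMap A κ))
  have : Module.Finite K κ := finite_closure_range_algebraMap A B κ
  let f : A →+* K := (algebraMap A κ).codRestrict K fun a ↦ Subfield.subset_closure ⟨a, rfl⟩
  have hf : Subfield.closure (Set.range f) = ⊤ := by
    refine eq_top_iff.2 fun ⟨x, hx⟩ _ ↦ ?_
    have hxmap : x ∈ (Subfield.closure (Set.range f)).map K.subtype := by
      rwa [RingHom.map_field_closure, ← Set.range_comp]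
    obtain ⟨y, hy, rfl⟩ := hxmap
    exact hy
  have hspan := span_frobenius_fieldRange_eq_top p f hf m hm
  have : Module.Finite (frobenius K p).fieldRange K :=
    .of_fg_top (hspan ▸ Submodule.fg_span (Set.finite_range _))
  have := finite_frobenius_fieldRange p K
  refine exists_finset_card_le_adjoin_eq_top p (algebraMap B κ) n _ ?_ (fun x ↦ ⟨⟨_, x, rfl⟩, rfl⟩)
    (adjoin_eq_top_of_closure_eq_top (IsFractionRing.closure_range_algebraMap B κ))
  rw [finrank_frobenius_fieldRange_eq p K]
  exact (finrank_le_of_span_eq_top hspan).trans hn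

lemma derivation_eq_zero_of_adjoin_frobenius_fieldRange_eq_top {k κ : Type*} [CommRing k] [Field κ]
    [Algebra k κ] (p : ℕ) [Fact p.Prime] [CharP κ p] {S : Set κ}
    (hS : IntermediateField.adjoin (frobenius κ p).fieldRange S = ⊤) {D : Derivation k κ κ}
    (hD : ∀ x ∈ S, D x = 0) : D = 0 := by
  ext x
  have hx : x ∈ IntermediateField.adjoin (frobenius κ p).fieldRange S := hS ▸ trivial
  refine derivation_apply_eq_zero_of_mem_closure (S := Set.range (algebraMap _ κ) ∪ S) ?_ hx
  rintro _ (⟨⟨_, y, rfl⟩, rfl⟩ | hx)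
  · change D (y ^ p) = 0
    rw [D.leibniz_pow, ← Nat.cast_smul_eq_nsmul κ, CharP.cast_eq_zero, zero_smul]
  · exact hD _ hx

section Bounded

variable (k R κ : Type*) [CommRing k] [CommRing R] [Algebra k R] [Field κ] [Algebra k κ]
  [Algebra R κ]

/-- The `k`-derivations from `R` to `κ` which vanish on `S` and take their values in a finitely
generated `R`-submodule of `κ`. When `R` is complete, the last condition replaces the continuity of
derivations: by Krull's intersection theorem it makes them commute with power series expansions. -/
def boundedDerivations (S : Set R) : Submodule κ (Derivation k R κ) where
  carrier := {D | (∃ T : Submodule R κ, T.FG ∧ ∀ r, D r ∈ T) ∧ ∀ x ∈ S, D x = 0}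
  zero_mem' := ⟨⟨⊥, Submodule.fg_bot, fun _ ↦ zero_mem _⟩, fun _ _ ↦ rfl⟩
  add_mem' := by
    rintro D E ⟨⟨T, hT, hDT⟩, hD⟩ ⟨⟨U, hU, hEU⟩, hE⟩
    exact ⟨⟨T ⊔ U, hT.sup hU, fun r ↦ Submodule.add_mem_sup (hDT r) (hEU r)⟩,
      fun x hx ↦ by rw [Derivation.add_apply, hD x hx, hE x hx, add_zero]⟩
  smul_mem' := by
    rintro c D ⟨⟨T, hT, hDT⟩, hD⟩
    exact ⟨⟨T.map (LinearMap.mulLeft R c), hT.map _, fun r ↦ ⟨D r, hDT r, rfl⟩⟩,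
      fun x hx ↦ by rw [Derivation.smul_apply, hD x hx, smul_zero]⟩

variable {k R κ}

lemma boundedDerivations_anti {S T : Set R} (h : S ⊆ T) :
    boundedDerivations k R κ T ≤ boundedDerivations k R κ S :=
  fun _ hD ↦ ⟨hD.1, fun x hx ↦ hD.2 x (h hx)⟩

end Bounded

end Derivations

section BoundedDerivations

lemma finite_and_finrank_boundedDerivations_le {k R κ : Type*} [CommRing k] [CommRing R]
    [Algebra k R] [Field κ] [Algebra k κ] [Algebra R κ] (T : Finset R)
    (hT : boundedDerivations k R κ T = ⊥) :
    Module.Finite κ (boundedDerivations k R κ ∅) ∧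
      Module.finrank κ (boundedDerivations k R κ ∅) ≤ T.card := by
  let ev : boundedDerivations k R κ ∅ →ₗ[κ] (T → κ) :=
    { toFun := fun D t ↦ D.1 t
      map_add' := fun _ _ ↦ rfl
      map_smul' := fun _ _ ↦ rfl }
  have hev : Function.Injective ev := by
    rw [injective_iff_map_eq_zero]
    refine fun D hD ↦ Subtype.ext ?_
    rw [ZeroMemClass.coe_zero, ← Submodule.mem_bot κ, ← hT]
    exact ⟨D.2.1, fun x hx ↦ congrFun hD ⟨x, hx⟩⟩
  exact ⟨.of_injective ev hev, by simpa using LinearMap.finrank_le_finrank_of_injective hev⟩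

lemma eq_zero_of_forall_mem_maximalIdeal_pow_smul {R M : Type*} [CommRing R] [IsNoetherianRing R]
    [IsLocalRing R] [AddCommGroup M] [Module R M] {T : Submodule R M} (hT : T.FG) {x : M}
    (hx : ∀ n, x ∈ maximalIdeal R ^ n • T) : x = 0 := by
  have : Module.Finite R T := .of_fg hT
  have hxT : x ∈ T := by simpa using hx 0
  suffices (⟨x, hxT⟩ : T) ∈ ⨅ n, maximalIdeal R ^ n • (⊤ : Submodule R T) by
    rw [Ideal.iInf_pow_smul_eq_bot_of_isLocalRing _ (maximalIdeal.isMaximal R).ne_top] at this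
    exact congrArg Subtype.val this
  rw [Submodule.mem_iInf]
  intro n
  exact (Submodule.mem_smul_top_iff _ T _).2 (hx n)

lemma derivation_apply_algebraMap_mvPowerSeries_eq_zero {k R κ σ : Type*} [Finite σ] [CommRing k]
    [CommRing R] [IsNoetherianRing R] [IsLocalRing R] [Algebra k R] [Field κ] [Algebra k κ]
    [Algebra R κ] [Algebra (MvPowerSeries σ k) R] [IsScalarTower k (MvPowerSeries σ k) R]
    (hX : ∀ i, algebraMap (MvPowerSeries σ k) R (.X i) ∈ maximalIdeal R) {S : Set R}
    {D : Derivation k R κ} (hD : D ∈ boundedDerivations k R κ S)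
    (hS : ∀ i, algebraMap (MvPowerSeries σ k) R (.X i) ∈ S) (f : MvPowerSeries σ k) :
    D (algebraMap _ R f) = 0 := by
  have := Fintype.ofFinite σ
  obtain ⟨⟨T, hT, hDT⟩, hDS⟩ := hD
  suffices ∀ n f, D (algebraMap (MvPowerSeries σ k) R f) ∈ maximalIdeal R ^ n • T from
    eq_zero_of_forall_mem_maximalIdeal_pow_smul hT fun n ↦ this n f
  intro n
  induction n with
  | zero => simpa using fun f ↦ hDT _
  | succ n ih =>
    intro f
    have hC : D (algebraMap (MvPowerSeries σ k) R (.C (MvPowerSeries.constantCoeff f))) = 0 := by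
      rw [MvPowerSeries.c_eq_algebraMap, ← IsScalarTower.algebraMap_apply, D.map_algebraMap]
    have hf : f - .C (MvPowerSeries.constantCoeff f) ∈
        Ideal.span (Set.range (MvPowerSeries.X : σ → MvPowerSeries σ k)) := by
      rw [← ker_constantCoeff_eq_span_range_X]
      simp
    obtain ⟨g, hg⟩ := Ideal.mem_span_range_iff_exists_fun.1 hf
    rw [← sub_zero (D _), ← hC, ← map_sub, ← map_sub, ← hg, map_sum, map_sum]
    refine sum_mem fun i _ ↦ ?_
    rw [map_mul, D.leibniz, hDS _ (hS i), smul_zero, zero_add, pow_succ', mul_smul]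
    exact Submodule.smul_mem_smul (hX i) (ih _)

section ResidueField

variable {k R σ : Type*} [Field k] [CommRing R] [Algebra k R] [Algebra (MvPowerSeries σ k) R]

lemma exists_finset_boundedDerivations_union_eq_bot_of_charP (ℓ : ℕ) [Fact ℓ.Prime] [CharP k ℓ]
    [PerfectRing k ℓ] [Fintype σ] (p : Ideal R) [p.IsPrime]
    [Module.Finite (MvPowerSeries σ k) (R ⧸ p)] :
    ∃ T : Finset R, T.card ≤ Fintype.card σ ∧
      boundedDerivations k R p.ResidueField (p ∪ T) = ⊥ := by
  classical
  have : CharP p.ResidueField ℓ := charP_of_injective_algebraMap (algebraMap k _).injective ℓ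
  let m : (σ → Fin ℓ) → MvPowerSeries σ k := fun α ↦ ∏ i, .X i ^ (α i : ℕ)
  have hm : ∀ f, ∃ g : (σ → Fin ℓ) → MvPowerSeries σ k, f = ∑ α, g α ^ ℓ * m α :=
    fun f ↦ exists_eq_sum_pow_char_mul_prod_X_pow ℓ f
  obtain ⟨T, hcard, hT⟩ := exists_finset_adjoin_frobenius_fieldRange_eq_top _ (R ⧸ p)
    (κ := p.ResidueField) ℓ m hm (n := Fintype.card σ) (by simp)
  refine ⟨T.image Quotient.out, Finset.card_image_le.trans hcard, eq_bot_iff.2 fun D hD ↦ ?_⟩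
  obtain ⟨D', hD'⟩ := exists_derivation_residueField_comp_algebraMap p D fun r hr ↦ hD.2 r (.inl hr)
  have hD'0 : D' = 0 := by
    refine derivation_eq_zero_of_adjoin_frobenius_fieldRange_eq_top ℓ hT ?_
    rintro _ ⟨t, ht, rfl⟩
    rw [← Ideal.Quotient.mk_out t, ← Ideal.Quotient.algebraMap_eq,
      ← IsScalarTower.algebraMap_apply, hD']
    exact hD.2 _ (.inr (Finset.mem_image_of_mem _ ht))
  ext r
  rw [← hD', hD'0, Derivation.zero_apply, Derivation.zero_apply]

variable [IsScalarTower k (MvPowerSeries σ k) R]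

lemma boundedDerivations_eq_bot_of_charZero [CharZero k] [Finite σ] [IsNoetherianRing R]
    [IsLocalRing R] (hX : ∀ i, algebraMap (MvPowerSeries σ k) R (.X i) ∈ maximalIdeal R)
    (p : Ideal R) [p.IsPrime] [Module.Finite (MvPowerSeries σ k) (R ⧸ p)] {S : Set R}
    (hpS : (p : Set R) ⊆ S) (hS : ∀ i, algebraMap (MvPowerSeries σ k) R (.X i) ∈ S) :
    boundedDerivations k R p.ResidueField S = ⊥ := by
  refine eq_bot_iff.2 fun D hD ↦ ?_
  obtain ⟨D', hD'⟩ := exists_derivation_residueField_comp_algebraMap p D fun r hr ↦ hD.2 r (hpS hr)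
  let K := Subfield.closure (Set.range (algebraMap (MvPowerSeries σ k) p.ResidueField))
  have : CharZero p.ResidueField := charZero_of_injective_algebraMap (algebraMap k _).injective
  have : Module.Finite K p.ResidueField := finite_closure_range_algebraMap _ (R ⧸ p) _
  have : Algebra.FormallyUnramified K p.ResidueField := .of_isSeparable K _
  have hD'0 : D' = 0 := derivation_eq_zero_of_formallyUnramified (K := K) fun c ↦ by
    refine derivation_apply_eq_zero_of_mem_closure ?_ c.2
    rintro _ ⟨f, rfl⟩
    rw [IsScalarTower.algebraMap_apply _ R, hD']
    exact derivation_apply_algebraMap_mvPowerSeries_eq_zero hX hD hS f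
  ext r
  rw [← hD', hD'0, Derivation.zero_apply, Derivation.zero_apply]

lemma exists_finset_boundedDerivations_union_eq_bot [PerfectField k] [Fintype σ]
    [IsNoetherianRing R] [IsLocalRing R]
    (hX : ∀ i, algebraMap (MvPowerSeries σ k) R (.X i) ∈ maximalIdeal R) (p : Ideal R) [p.IsPrime]
    [Module.Finite (MvPowerSeries σ k) (R ⧸ p)] :
    ∃ T : Finset R, T.card ≤ Fintype.card σ ∧
      boundedDerivations k R p.ResidueField (p ∪ T) = ⊥ := by
  classical
  obtain ⟨ℓ, hℓ⟩ := CharP.exists k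
  obtain hprime | rfl := CharP.char_is_prime_or_zero k ℓ
  · have : Fact ℓ.Prime := ⟨hprime⟩
    have : PerfectRing k ℓ := PerfectField.toPerfectRing ℓ
    exact exists_finset_boundedDerivations_union_eq_bot_of_charP ℓ p
  · have := CharP.charP_to_charZero k
    refine ⟨Finset.univ.image fun i ↦ algebraMap (MvPowerSeries σ k) R (.X i),
      Finset.card_image_le, boundedDerivations_eq_bot_of_charZero hX p Set.subset_union_left
        fun i ↦ .inr (Finset.mem_image_of_mem _ (Finset.mem_univ i))⟩

end ResidueField

end BoundedDerivations

/-! ### Bounded derivations at a regular prime -/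

section RegularPrime

lemma exists_finset_map_span_eq_of_isLocalization {R S : Type*} [CommRing R] [CommRing S]
    [Algebra R S] (M : Submonoid R) [IsLocalization M S] (s : Finset S) :
    ∃ W : Finset R, W.card ≤ s.card ∧
      (Ideal.span (W : Set R)).map (algebraMap R S) = Ideal.span s := by
  classical
  refine ⟨s.image fun y ↦ (IsLocalization.sec M y).1, Finset.card_image_le, ?_⟩
  rw [Ideal.map_span, Finset.coe_image, Set.image_image]
  have hsec (y : S) : algebraMap R S (IsLocalization.sec M y).1 =
      y * algebraMap R S (IsLocalization.sec M y).2 := (IsLocalization.sec_spec M y).symm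
  have hunit (y : S) := IsLocalization.map_units S (IsLocalization.sec M y).2
  refine le_antisymm (Ideal.span_le.2 ?_) (Ideal.span_le.2 fun y hy ↦ ?_)
  · rintro _ ⟨y, hy, rfl⟩
    simpa only [SetLike.mem_coe, hsec] using Ideal.mul_mem_right _ _ (Ideal.subset_span hy)
  · rw [SetLike.mem_coe, ← Ideal.mul_unit_mem_iff_mem _ (hunit y), ← hsec]
    exact Ideal.subset_span ⟨y, hy, rfl⟩

lemma exists_finset_map_span_eq_maximalIdeal {R : Type*} [CommRing R] (p : Ideal R) [p.IsPrime]
    [IsRegularLocalRing (Localization.AtPrime p)] :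
    ∃ W : Finset R, (W.card : ℕ∞) ≤ p.height ∧
      (Ideal.span (W : Set R)).map (algebraMap R (Localization.AtPrime p)) = maximalIdeal _ := by
  obtain ⟨s, hcard, hs⟩ := Submodule.FG.exists_span_set_encard_eq_spanFinrank
    (IsNoetherian.noetherian (maximalIdeal (Localization.AtPrime p)))
  lift s to Finset (Localization.AtPrime p) using Set.finite_of_encard_eq_coe hcard
  obtain ⟨W, hW, hmap⟩ := exists_finset_map_span_eq_of_isLocalization p.primeCompl s
  refine ⟨W, ?_, hmap.trans hs⟩
  rw [Set.encard_coe_eq_coe_finsetCard] at hcard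
  have hdim := IsRegularLocalRing.spanFinrank_maximalIdeal (R := Localization.AtPrime p)
  rw [IsLocalization.AtPrime.ringKrullDim_eq_height p] at hdim
  have : ((Submodule.spanFinrank (maximalIdeal (Localization.AtPrime p)) : ℕ) : ℕ∞) = p.height := by
    exact_mod_cast hdim
  rw [← this, ← hcard]
  exact_mod_cast hW

lemma boundedDerivations_union_le_of_map_span_eq_maximalIdeal {k R : Type*} [CommRing k]
    [CommRing R] [Algebra k R] (p : Ideal R) [p.IsPrime] {W : Set R} (hW : (Ideal.span W).map
      (algebraMap R (Localization.AtPrime p)) = maximalIdeal _) (T : Set R) :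
    boundedDerivations k R p.ResidueField (W ∪ T) ≤
      boundedDerivations k R p.ResidueField (p ∪ T) := by
  rintro D ⟨hbdd, hD⟩
  refine ⟨hbdd, ?_⟩
  have hmem (r : R) : algebraMap R (Localization.AtPrime p) r ∈
      (Ideal.span W).map (algebraMap R (Localization.AtPrime p)) ↔ r ∈ p := by
    rw [hW]
    exact IsLocalization.AtPrime.to_map_mem_maximal_iff _ p r
  have hspan : ∀ r ∈ Ideal.span W, D r = 0 := fun r hr ↦ by
    induction hr using Submodule.span_induction with
    | mem w hw => exact hD w (.inl hw)
    | zero => exact map_zero D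
    | add x y _ _ hx hy => rw [map_add, hx, hy, add_zero]
    | smul a x hx hDx =>
      have hxp : x ∈ p := (hmem x).1 (Ideal.mem_map_of_mem _ hx)
      rw [smul_eq_mul, D.leibniz, hDx, smul_zero, zero_add, Algebra.smul_def,
        Ideal.algebraMap_residueField_eq_zero.2 hxp, zero_mul]
  rintro r (hr | hr)
  · obtain ⟨s, hs, hsr⟩ := (IsLocalization.algebraMap_mem_map_algebraMap_iff p.primeCompl _ _ _).1
      ((hmem r).2 hr)
    have hDsr := hspan _ hsr
    rw [D.leibniz, Algebra.smul_def, Algebra.smul_def, Ideal.algebraMap_residueField_eq_zero.2 hr,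
      zero_mul, add_zero, mul_eq_zero, Ideal.algebraMap_residueField_eq_zero] at hDsr
    exact hDsr.resolve_left hs
  · exact hD r (.inr hr)

section PowerSeries

variable {k R σ : Type*} [CommRing k] [CommRing R] [Algebra k R] [IsLocalRing R] {x : σ → R}

lemma exists_algebra_mvPowerSeries_algebraMap_X [IsAdicComplete (maximalIdeal R) R] [Finite σ]
    (hx : ∀ i, x i ∈ maximalIdeal R) :
    ∃ _ : Algebra (MvPowerSeries σ k) R, IsScalarTower k (MvPowerSeries σ k) R ∧
      ∀ i, algebraMap (MvPowerSeries σ k) R (.X i) = x i := by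
  obtain ⟨φ, hφ⟩ := exists_algHom_mvPowerSeries_apply_X (k := k) hx
  let _ : Algebra (MvPowerSeries σ k) R := φ.toRingHom.toAlgebra
  exact ⟨_, .of_algebraMap_eq fun c ↦ (φ.commutes c).symm, hφ⟩

variable [IsNoetherianRing R] [Finite σ] [Algebra (MvPowerSeries σ k) R]
  [IsScalarTower k (MvPowerSeries σ k) R]

lemma finite_mvPowerSeries_of_le_radical (hk : Function.Surjective (residue R ∘ algebraMap k R))
    (hx : ∀ i, x i ∈ maximalIdeal R) (hX : ∀ i, algebraMap (MvPowerSeries σ k) R (.X i) = x i)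
    (N : Type*) [AddCommGroup N] [Module R N] [Module.Finite R N] [Module (MvPowerSeries σ k) N]
    [IsScalarTower (MvPowerSeries σ k) R N]
    (hN : maximalIdeal R ≤ (Ideal.span (Set.range x) ⊔ Module.annihilator R N).radical) :
    Module.Finite (MvPowerSeries σ k) N := by
  have hmap : (Ideal.span (Set.range MvPowerSeries.X)).map (algebraMap (MvPowerSeries σ k) R) =
      Ideal.span (Set.range x) := by
    rw [Ideal.map_span, ← Set.range_comp]
    exact congrArg (Ideal.span ∘ Set.range) (funext hX)
  refine finite_of_surjective_residue_of_le_radical (I := Ideal.span (Set.range .X))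
    (fun y ↦ ?_) ?_ N (hmap ▸ hN)
  · obtain ⟨c, rfl⟩ := hk y
    exact ⟨algebraMap k _ c, congrArg _ (IsScalarTower.algebraMap_apply _ _ R c).symm⟩
  · rw [hmap, Ideal.span_le]
    rintro _ ⟨i, rfl⟩
    exact hx i

end PowerSeries

lemma exists_finset_boundedDerivations_eq_bot {k R : Type*} [Field k] [PerfectField k] [CommRing R]
    [IsNoetherianRing R] [IsLocalRing R] [IsAdicComplete (maximalIdeal R) R] [Algebra k R]
    (hk : Function.Surjective (residue R ∘ algebraMap k R)) (p : Ideal R) [p.IsPrime]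
    [IsRegularLocalRing (Localization.AtPrime p)] :
    ∃ T : Finset R, (T.card : ℕ∞) ≤ (maximalIdeal R).height ∧
      boundedDerivations k R p.ResidueField T = ⊥ := by
  classical
  obtain ⟨W, hWcard, hW⟩ := exists_finset_map_span_eq_maximalIdeal p
  obtain ⟨e, he⟩ : ∃ e : ℕ, p.height + e = (maximalIdeal R).height := by
    have hpm : p ≤ maximalIdeal R := le_maximalIdeal Ideal.IsPrime.ne_top'
    obtain ⟨c, hc⟩ := exists_add_of_le (Ideal.height_mono hpm)
    have hfin : (maximalIdeal R).height ≠ ⊤ := Ideal.height_ne_top_of_isPrime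
    lift c to ℕ using fun h ↦ hfin (by rw [hc, h, add_top])
    exact ⟨c, hc.symm⟩
  obtain ⟨zs, rfl, hzs, hrad⟩ := exists_list_maximalIdeal_le_radical_sup p e he.ge
  have hget : ∀ i, zs.get i ∈ maximalIdeal R := fun i ↦ hzs _ (List.get_mem _ _)
  obtain ⟨_, _, hX⟩ := exists_algebra_mvPowerSeries_algebraMap_X (k := k) hget
  have : Module.Finite (MvPowerSeries (Fin zs.length) k) (R ⧸ p) := by
    refine finite_mvPowerSeries_of_le_radical hk hget hX (R ⧸ p) ?_
    rwa [Set.range_list_get, Ideal.annihilator_quotient, sup_comm]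
  obtain ⟨T, hTcard, hT⟩ := exists_finset_boundedDerivations_union_eq_bot
    (k := k) (fun i ↦ by rw [hX]; exact hget i) p
  refine ⟨W ∪ T, ?_, ?_⟩
  · rw [← he]
    grw [Finset.card_union_le, hTcard, Fintype.card_fin, Nat.cast_add, hWcard]
  · rw [Finset.coe_union, eq_bot_iff, ← hT]
    exact boundedDerivations_union_le_of_map_span_eq_maximalIdeal p hW T

end RegularPrime

/-! ### Choice of the parameters -/

section Parameters

lemma subsingleton_setOf_add_pow_mem {R : Type*} [CommRing R] [IsLocalRing R] {q : Ideal R}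
    [q.IsPrime] {x : R} (hx : x ∈ maximalIdeal R) (hxq : x ∉ q) (y : R) :
    {n : ℕ | y + x ^ n ∈ q}.Subsingleton := by
  suffices ∀ a b, a < b → y + x ^ a ∈ q → y + x ^ b ∉ q by
    intro a ha b hb
    by_contra hab
    exact (Ne.lt_or_gt hab).elim (fun h ↦ this a b h ha hb) fun h ↦ this b a h hb ha
  intro a b hab ha hb
  obtain ⟨c, rfl⟩ := Nat.exists_eq_add_of_lt hab
  have hmul : x ^ a * (1 - x ^ (c + 1)) ∈ q := by
    convert q.sub_mem ha hb using 1
    ring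
  have hunit : IsUnit (1 - x ^ (c + 1)) :=
    IsLocalRing.isUnit_one_sub_self_of_mem_nonunits _ (Ideal.pow_mem_of_mem _ hx _ c.succ_pos)
  exact hxq (Ideal.IsPrime.mem_of_pow_mem ‹_› a ((Ideal.mul_unit_mem_iff_mem q hunit).1 hmul))

lemma exists_add_pow_notMem_minimalPrimes {R : Type*} [CommRing R] [IsNoetherianRing R]
    [IsLocalRing R] {I : Ideal R} {x : R} (hx : x ∈ maximalIdeal R)
    (hxI : ∀ q ∈ I.minimalPrimes, x ∉ q) (y : R) :
    ∃ n, 0 < n ∧ ∀ q ∈ I.minimalPrimes, y + x ^ n ∉ q := by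
  have hfin : (⋃ q ∈ I.minimalPrimes, {n : ℕ | y + x ^ n ∈ q}).Finite :=
    (Ideal.finite_minimalPrimes_of_isNoetherianRing R I).biUnion fun q hq ↦
      have := hq.1.1
      (subsingleton_setOf_add_pow_mem hx (hxI q hq) y).finite
  obtain ⟨n, hn⟩ := (hfin.insert 0).exists_notMem
  rw [Set.mem_insert_iff, not_or] at hn
  exact ⟨n, Nat.pos_of_ne_zero hn.1, fun q hq hmem ↦ hn.2 (Set.mem_biUnion hq hmem)⟩

variable {k R κ : Type*} [CommRing k] [CommRing R] [IsNoetherianRing R] [IsLocalRing R]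
  [Algebra k R] [Field κ] [Algebra R κ] [Algebra k κ]

lemma exists_mem_maximalIdeal_derivation_apply_ne_zero
    (hk : Function.Surjective (residue R ∘ algebraMap k R)) {I : Ideal R}
    (hI : ∀ q ∈ I.minimalPrimes, ¬ maximalIdeal R ≤ q) {D : Derivation k R κ} (hD : D ≠ 0) :
    ∃ x ∈ maximalIdeal R, (∀ q ∈ I.minimalPrimes, x ∉ q) ∧ D x ≠ 0 := by
  obtain ⟨x, hxm, hx⟩ := exists_mem_forall_notMem_minimalPrimes hI
  by_cases hDx : D x = 0
  swap
  · exact ⟨x, hxm, hx, hDx⟩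
  obtain ⟨y, hym, hy⟩ : ∃ y ∈ maximalIdeal R, D y ≠ 0 := by
    by_contra! hDm
    refine hD (Derivation.ext fun r ↦ ?_)
    obtain ⟨c, hc⟩ := hk (residue R r)
    have hrc : D (r - algebraMap k R c) = 0 :=
      hDm _ ((residue_eq_zero_iff _).1 (by rw [map_sub, ← hc, Function.comp_apply, sub_self]))
    rwa [map_sub, D.map_algebraMap, sub_zero] at hrc
  obtain ⟨n, hn, hyx⟩ := exists_add_pow_notMem_minimalPrimes hxm hx y
  refine ⟨y + x ^ n, add_mem hym (Ideal.pow_mem_of_mem _ hxm n hn), hyx, ?_⟩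
  rwa [map_add, D.leibniz_pow, hDx, smul_zero, smul_zero, add_zero]

lemma exists_mem_maximalIdeal_finrank_boundedDerivations_insert_le
    (hk : Function.Surjective (residue R ∘ algebraMap k R)) {I : Ideal R}
    (hI : ∀ q ∈ I.minimalPrimes, ¬ maximalIdeal R ≤ q) (S : Set R)
    [Module.Finite κ (boundedDerivations k R κ S)] :
    ∃ x ∈ maximalIdeal R, (∀ q ∈ I.minimalPrimes, x ∉ q) ∧
      Module.finrank κ (boundedDerivations k R κ (insert x S)) ≤
        Module.finrank κ (boundedDerivations k R κ S) - 1 := by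
  have hle x : boundedDerivations k R κ (insert x S) ≤ boundedDerivations k R κ S :=
    boundedDerivations_anti (Set.subset_insert x S)
  by_cases hS : boundedDerivations k R κ S = ⊥
  · obtain ⟨x, hxm, hx⟩ := exists_mem_forall_notMem_minimalPrimes hI
    have hbot : boundedDerivations k R κ (insert x S) = ⊥ := le_bot_iff.1 ((hle x).trans_eq hS)
    exact ⟨x, hxm, hx, by rw [hbot, finrank_bot]; exact Nat.zero_le _⟩
  · obtain ⟨D, hD, hD0⟩ := Submodule.exists_mem_ne_zero_of_ne_bot hS
    obtain ⟨x, hxm, hx, hDx⟩ := exists_mem_maximalIdeal_derivation_apply_ne_zero hk hI hD0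
    have hlt : boundedDerivations k R κ (insert x S) < boundedDerivations k R κ S :=
      (hle x).lt_of_not_ge fun h ↦ hDx ((h hD).2 x (Set.mem_insert x S))
    exact ⟨x, hxm, hx, Nat.le_sub_one_of_lt (Submodule.finrank_lt_finrank_of_lt hlt)⟩

lemma exists_list_finrank_boundedDerivations_le
    (hk : Function.Surjective (residue R ∘ algebraMap k R))
    [Module.Finite κ (boundedDerivations k R κ ∅)] (j : ℕ) (hj : j ≤ (maximalIdeal R).height) :
    ∃ xs : List R, xs.length = j ∧ (∀ x ∈ xs, x ∈ maximalIdeal R) ∧ j ≤ (Ideal.ofList xs).height ∧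
      Module.finrank κ (boundedDerivations k R κ {x | x ∈ xs}) ≤
        Module.finrank κ (boundedDerivations k R κ ∅) - j := by
  induction j with
  | zero => exact ⟨[], rfl, by simp, by simp,
      Submodule.finrank_mono (boundedDerivations_anti (Set.empty_subset _))⟩
  | succ j ih =>
    obtain ⟨xs, hlen, hxs, hheight, hrank⟩ := ih (le_trans (by simp) hj)
    have hI : ∀ q ∈ (Ideal.ofList xs).minimalPrimes, ¬ maximalIdeal R ≤ q := fun q hq hle ↦ by
      classical
      have hcard := Ideal.height_le_card_of_mem_minimalPrimes_span_finset (s := xs.toFinset)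
        (by rwa [List.coe_toFinset])
      grw [← Ideal.height_mono hle, ← hj, List.toFinset_card_le, hlen] at hcard
      exact absurd (Nat.cast_le.1 hcard) (by lia)
    have : Module.Finite κ (boundedDerivations k R κ {x | x ∈ xs}) :=
      Submodule.finiteDimensional_of_le (boundedDerivations_anti (Set.empty_subset _))
    obtain ⟨x, hxm, hx, hrank'⟩ :=
      exists_mem_maximalIdeal_finrank_boundedDerivations_insert_le hk hI {x | x ∈ xs} (κ := κ)
    refine ⟨x :: xs, by rw [List.length_cons, hlen], List.forall_mem_cons.2 ⟨hxm, hxs⟩, ?_, ?_⟩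
    · rw [Ideal.ofList_cons, sup_comm, Nat.cast_succ]
      grw [hheight]
      exact height_add_one_le_height_sup_span_singleton _ hx
    · have hset : {y | y ∈ x :: xs} = insert x {y | y ∈ xs} := by ext; simp
      rw [hset]
      lia

lemma exists_list_boundedDerivations_eq_bot
    (hk : Function.Surjective (residue R ∘ algebraMap k R)) {T : Finset R}
    (hTcard : T.card ≤ (maximalIdeal R).height) (hT : boundedDerivations k R κ T = ⊥) :
    ∃ xs : List R, xs.length = (maximalIdeal R).height ∧ (∀ x ∈ xs, x ∈ maximalIdeal R) ∧
      maximalIdeal R ≤ (Ideal.ofList xs).radical ∧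
      boundedDerivations k R κ {x | x ∈ xs} = ⊥ := by
  obtain ⟨_, hrank⟩ := finite_and_finrank_boundedDerivations_le T hT
  obtain ⟨d, hd⟩ := ENat.ne_top_iff_exists.1 (Ideal.height_ne_top_of_isPrime (I := maximalIdeal R))
  obtain ⟨xs, rfl, hxs, hheight, hrank'⟩ :=
    exists_list_finrank_boundedDerivations_le hk (κ := κ) d hd.le
  have : Module.Finite κ (boundedDerivations k R κ {x | x ∈ xs}) :=
    Submodule.finiteDimensional_of_le (boundedDerivations_anti (Set.empty_subset _))
  rw [← hd, Nat.cast_le] at hTcard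
  exact ⟨xs, hd, hxs, maximalIdeal_le_radical_of_height_le (hd ▸ hheight),
    Submodule.finrank_eq_zero.1 (by lia)⟩

end Parameters

/-! ### Annihilation of `Ext` at a regular prime -/

section Annihilation

lemma exists_mem_annihilator_notMem_of_forall_linearMap_eq_zero {R M : Type*} [CommRing R]
    [AddCommGroup M] [Module R M] [Module.Finite R M] (p : Ideal R) [p.IsPrime]
    (h : ∀ f : M →ₗ[R] p.ResidueField, f = 0) : ∃ s ∈ Module.annihilator R M, s ∉ p := by
  have hsupp : (⟨p, inferInstance⟩ : PrimeSpectrum R) ∉ Module.support R M := by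
    rw [Module.mem_support_iff_nontrivial_residueField_tensorProduct,
      not_nontrivial_iff_subsingleton, ← Module.subsingleton_dual_iff p.ResidueField]
    have : Subsingleton (M →ₗ[R] p.ResidueField) := subsingleton_of_forall_eq 0 h
    exact (LinearMap.liftBaseChangeEquiv p.ResidueField).symm.subsingleton
  rw [Module.mem_support_iff_of_finite] at hsupp
  exact Set.not_subset.1 hsupp

open scoped KaehlerDifferential in
lemma exists_mem_annihilator_kaehlerDifferential_notMem {A R : Type*} [CommRing A] [CommRing R]
    [Algebra A R] [Algebra.EssFiniteType A R] (p : Ideal R) [p.IsPrime]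
    (h : ∀ D : Derivation A R p.ResidueField, D = 0) :
    ∃ s ∈ Module.annihilator R Ω[R⁄A], s ∉ p :=
  exists_mem_annihilator_notMem_of_forall_linearMap_eq_zero p fun _ ↦
    Derivation.liftKaehlerDifferential_unique _ _ ((h _).trans (h _).symm)

lemma derivation_eq_zero_of_boundedDerivations_eq_bot {k A R κ : Type*} [CommRing k] [CommRing A]
    [CommRing R] [Algebra k A] [Algebra k R] [Algebra A R] [IsScalarTower k A R]
    [Module.Finite A R] [Field κ] [Algebra R κ] [Algebra k κ] [IsScalarTower k R κ] [Algebra A κ]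
    [IsScalarTower A R κ] {S : Set R} (hS : S ⊆ Set.range (algebraMap A R))
    (hbot : boundedDerivations k R κ S = ⊥) (D : Derivation A R κ) : D = 0 := by
  have : IsScalarTower k A κ := .to₁₂₄ k A R κ
  have hD : D.restrictScalars k ∈ boundedDerivations k R κ S := by
    refine ⟨?_, fun x hx ↦ ?_⟩
    · obtain ⟨s, hs⟩ := Module.Finite.fg_top (R := A) (M := R)
      refine ⟨Submodule.span R (D '' s), Submodule.fg_span (s.finite_toSet.image D), fun r ↦ ?_⟩
      have hle : Submodule.span A (s : Set R) ≤
          ((Submodule.span R (D '' s)).restrictScalars A).comap D.toLinearMap :=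
        Submodule.span_le.2 fun x hx ↦ Submodule.subset_span ⟨x, hx, rfl⟩
      exact hle (hs ▸ Submodule.mem_top)
    · obtain ⟨a, rfl⟩ := hS hx
      exact D.map_algebraMap a
  rw [hbot, Submodule.mem_bot] at hD
  exact Derivation.ext fun r ↦ DFunLike.congr_fun hD r

lemma exists_notMem_mem_annihilator_ext_of_surjective {k R : Type} [Field k] [PerfectField k]
    [CommRing R] [IsNoetherianRing R] [IsLocalRing R] [IsAdicComplete (maximalIdeal R) R]
    [Algebra k R] (hk : Function.Surjective (residue R ∘ algebraMap k R)) (p : Ideal R)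
    [hp : p.IsPrime] [IsRegularLocalRing (Localization.AtPrime p)] :
    ∃ s ∉ p, ∀ M N : ModuleCat.{0} R, MemCM R M →
      ∀ i, s ∈ Module.annihilator R (Abelian.Ext M N (i + 1)) := by
  obtain ⟨T, hTcard, hT⟩ := exists_finset_boundedDerivations_eq_bot hk p
  obtain ⟨xs, hlen, hxs, hrad, hbot⟩ := exists_list_boundedDerivations_eq_bot hk hTcard hT
  have hget : ∀ i, xs.get i ∈ maximalIdeal R := fun i ↦ hxs _ (List.get_mem _ _)
  obtain ⟨_, _, hX⟩ := exists_algebra_mvPowerSeries_algebraMap_X (k := k) hget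
  let A := MvPowerSeries (Fin xs.length) k
  have : Module.Finite A R := by
    refine finite_mvPowerSeries_of_le_radical hk hget hX R (hrad.trans (Ideal.radical_mono ?_))
    rw [Set.range_list_get]
    exact le_sup_left
  have hrange : {x | x ∈ xs} ⊆ Set.range (algebraMap A R) := by
    rw [← Set.range_list_get]
    rintro _ ⟨i, rfl⟩
    exact ⟨_, hX i⟩
  obtain ⟨s, hs, hsp⟩ := exists_mem_annihilator_kaehlerDifferential_notMem (A := A) p
    (derivation_eq_zero_of_boundedDerivations_eq_bot hrange hbot)
  obtain ⟨n, hn⟩ := exists_pow_mem_annihilator_ext_of_projective_restrictScalars A hs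
  refine ⟨s ^ n, fun h ↦ hsp (hp.mem_of_pow_mem n h), fun M N hM i ↦ ?_⟩
  have := hM.1
  let _ : Module A M := Module.compHom M (algebraMap A R)
  have : IsScalarTower A R M := ⟨fun a r m ↦ by rw [Algebra.smul_def, mul_smul]; rfl⟩
  have hdim : ringKrullDim R = (List.ofFn fun i ↦ (.X i : A)).length := by
    rw [List.length_ofFn, ← IsLocalRing.maximalIdeal_height_eq_ringKrullDim, ← hlen]
    rfl
  have := free_of_isMCMModule (ofList_ofFn_X_eq_maximalIdeal k xs.length) hdim hM.2
  exact hn M N i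

theorem exists_notMem_mem_annihilator_ext (R : Type) [CommRing R] [IsNoetherianRing R]
    [IsLocalRing R] [IsAdicComplete (maximalIdeal R) R] (hequi : ∃ F : Subring R, IsField F)
    [PerfectField (ResidueField R)] (p : Ideal R) [p.IsPrime]
    [IsRegularLocalRing (Localization.AtPrime p)] :
    ∃ s ∉ p, ∀ M N : ModuleCat.{0} R, MemCM R M →
      ∀ i, s ∈ Module.annihilator R (Abelian.Ext M N (i + 1)) := by
  obtain ⟨σ, hσ⟩ := exists_section_residue R hequi
  let _ : Algebra (ResidueField R) R := σ.toAlgebra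
  exact exists_notMem_mem_annihilator_ext_of_surjective (k := ResidueField R)
    (fun x ↦ ⟨x, hσ x⟩) p

end Annihilation

theorem stmt9_general (R : Type) [CommRing R] [IsNoetherianRing R] [IsLocalRing R]
    (hCM : IsCMLocalRing R) (hcomp : IsAdicComplete (maximalIdeal R) R)
    (hequi : ∃ F : Subring R, IsField F)
    (hperf : PerfectField (ResidueField R))
    (X Y : Set (ModuleCat.{0} R))
    (hX0 : ∀ M : ModuleCat.{0} R, MemCM0 R M → M ∈ X)
    (hXCM : ∀ M ∈ X, MemCM R M)
    (hY0 : ∀ M : ModuleCat.{0} R, MemCM0 R M → M ∈ Y) :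
    PrimeSpectrum.zeroLocus
        ((⨅ (i : ℕ) (_ : 0 < i) (M : ModuleCat.{0} R) (_ : M ∈ X)
            (N : ModuleCat.{0} R) (_ : N ∈ Y),
            Module.annihilator R (ExtMod R i M N) : Ideal R) : Set R)
      = singularLocus R := by
  ext p
  simp only [PrimeSpectrum.mem_zeroLocus]
  constructor
  · intro h hreg
    have := isRegularLocal_iff.1 hreg
    obtain ⟨s, hs, hsExt⟩ := exists_notMem_mem_annihilator_ext R hequi p.asIdeal
    refine hs (h ?_)
    simp only [SetLike.mem_coe, Submodule.mem_iInf]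
    intro i hi M hM N _
    obtain ⟨j, rfl⟩ := Nat.exists_eq_add_one.2 hi
    rw [annihilator_extMod]
    exact hsExt M N (hXCM M hM) j
  · intro h a ha
    by_contra hap
    refine h (isRegularLocal_iff.2
      (isRegularLocalRing_localization_of_mem_annihilator_ext hCM hap fun M N hM hN ↦ ?_))
    simp only [SetLike.mem_coe, Submodule.mem_iInf] at ha
    rw [← annihilator_extMod]
    exact ha 1 one_pos M (hX0 M hM) N (hY0 N hN)

/-- Let `R` be a Cohen-Macaulay, complete, equicharacteristic noetherian
local ring with perfect residue field. For any class `X` with `CM₀(R) ⊆ X ⊆ CM(R)` and any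
class `Y` of finitely generated modules containing `CM₀(R)`, one has
`V(⋂_{i>0, M ∈ X, N ∈ Y} Ann_R Ext^i(M,N)) = Sing R`. -/
theorem stmt9 (R : Type) [CommRing R] [IsNoetherianRing R] [IsLocalRing R]
    (hCM : IsCMLocalRing R) (hcomp : IsAdicComplete (maximalIdeal R) R)
    (hequi : ∃ F : Subring R, IsField F)
    (hperf : PerfectField (ResidueField R))
    (X Y : Set (ModuleCat.{0} R))
    (hX0 : ∀ M : ModuleCat.{0} R, MemCM0 R M → M ∈ X)
    (hXCM : ∀ M ∈ X, MemCM R M)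
    (hY0 : ∀ M : ModuleCat.{0} R, MemCM0 R M → M ∈ Y)
    (hYfin : ∀ M ∈ Y, Module.Finite R M) :
    PrimeSpectrum.zeroLocus
        ((⨅ (i : ℕ) (_ : 0 < i) (M : ModuleCat.{0} R) (_ : M ∈ X)
            (N : ModuleCat.{0} R) (_ : N ∈ Y),
            Module.annihilator R (ExtMod R i M N) : Ideal R) : Set R)
      = singularLocus R :=
  stmt9_general R hCM hcomp hequi hperf X Y hX0 hXCM hY0

end
end

section
/- Let R be a commutative noetherian local ring of Krull dimension d and let X be any class of finitely generated R-modules. Then one has the inclusions V(⋂_{i>0, M ∈ X, N} Ann_R Tor_i^R(M, Ω^d N)) ⊆ V(⋂_{i>0, M ∈ X, L finite length} Ann_R Tor_i^R(M,L)) ⊆ V(⋂_{i>0, M ∈ X, N} Ann_R Tor_i^R(M,N)), where N ranges over all finitely generated R-modules, L ranges over all finite-length R-modules, and Ω^d N denotes the d-th syzygy of N in a minimal free resolution. -/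
open CategoryTheory IsLocalRing

noncomputable section

/-!
Write `N = F ⧸ K` with `F` finite free. Then `Tor₁(M, N)` is the kernel of `M ⊗ K → M ⊗ F`, and
`F ⧸ (K + mⁿF)` has finite length for every maximal ideal `m`. By Artin–Rees, the map `K → K ⧸ mʲK`
extends to `K + mⁿF` for large `n`. So if `a` kills `Tor₁(M, L)` for all `L` of finite length, then
`a` carries the kernel of `M ⊗ K → M ⊗ F` into `mʲ(M ⊗ K)` for all `m` and `j`, hence to zero by
Krull's intersection theorem. Thus `a` kills `Tor₁(M, N)` for all finitely generated `N`, and by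
dimension shifting it kills all higher `Tor`. In particular it kills `Tor` of `M` with any syzygy
of a finitely generated module.
-/

section Splice

variable {C : Type*} [Category* C] [Abelian C]

/-- If `c` is a cokernel of `T.f`, the homology of `T` is the kernel of the map `j` induced by `T.g`
on that cokernel. -/
def homologyIsoKernel (T : ShortComplex C) {c : Limits.CokernelCofork T.f}
    (hc : Limits.IsColimit c) (j : c.pt ⟶ T.X₃) (hj : c.π ≫ j = T.g) :
    T.homology ≅ Limits.kernel j :=
  have fromOpcycles_comp : T.fromOpcycles ≫ 𝟙 T.X₃ = (T.isoOpcyclesOfIsColimit hc).inv ≫ j := by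
    simp [← cancel_epi T.pOpcycles, hj]
  T.homologyIsKernel.conePointUniqueUpToIso (Limits.limit.isLimit _) ≪≫
    Limits.kernel.mapIso _ _ (T.isoOpcyclesOfIsColimit hc).symm (Iso.refl _) fromOpcycles_comp

variable {S : ShortComplex C}

/-- The chain complex `⋯ ⟶ P₁ ⟶ P₀ ⟶ S.X₂` obtained by splicing a projective resolution `P` of
`S.X₁` onto `S.f`, with `S.X₂` in degree `0` and `P` shifted up by one. -/
def spliceComplex (P : ProjectiveResolution S.X₁) : ChainComplex C ℕ :=
  P.complex.augment (P.π.f 0 ≫ S.f)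
    ((P.complex_d_comp_π_f_zero_assoc S.f).trans Limits.zero_comp)

lemma exact_spliceComplex_one (P : ProjectiveResolution S.X₁) [Mono S.f] :
    (ShortComplex.mk _ _ ((spliceComplex P).d_comp_d 2 1 0)).Exact := by
  let φ : ShortComplex.mk _ _ P.complex_d_comp_π_f_zero ⟶
      .mk _ _ ((spliceComplex P).d_comp_d 2 1 0) :=
    { τ₁ := 𝟙 (P.complex.X 1), τ₂ := 𝟙 (P.complex.X 0), τ₃ := S.f
      comm₁₂ := (Category.id_comp _).trans (Category.comp_id _).symm
      comm₂₃ := Category.id_comp _ }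
  have : Epi φ.τ₁ := inferInstanceAs (Epi (𝟙 (P.complex.X 1)))
  have : IsIso φ.τ₂ := inferInstanceAs (IsIso (𝟙 (P.complex.X 0)))
  have : Mono φ.τ₃ := ‹Mono S.f›
  exact (ShortComplex.exact_iff_of_epi_of_isIso_of_mono φ).1 P.exact₀

lemma exactAt_spliceComplex_succ (P : ProjectiveResolution S.X₁) [Mono S.f] :
    ∀ n : ℕ, (spliceComplex P).ExactAt (n + 1)
  | 0 => (HomologicalComplex.exactAt_iff' _ 2 1 0 (by simp) (by simp)).2 (exact_spliceComplex_one P)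
  | n + 1 => (HomologicalComplex.exactAt_iff' _ (n + 3) (n + 2) (n + 1) (by simp) (by simp)).2
      (P.exact_succ n)

lemma spliceComplex_d_comp_g (P : ProjectiveResolution S.X₁) : (spliceComplex P).d 1 0 ≫ S.g = 0 :=
  (Category.assoc _ _ _).trans <| (congrArg _ S.zero).trans Limits.comp_zero

lemma exact_spliceComplex_zero (P : ProjectiveResolution S.X₁) (hS : S.Exact) :
    (ShortComplex.mk _ _ (spliceComplex_d_comp_g P)).Exact := by
  let φ : ShortComplex.mk _ _ (spliceComplex_d_comp_g P) ⟶ S :=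
    { τ₁ := P.π.f 0, τ₂ := 𝟙 S.X₂, τ₃ := 𝟙 S.X₃
      comm₁₂ := (Category.comp_id _).symm
      comm₂₃ := (Category.id_comp _).trans (Category.comp_id _).symm }
  have : Epi φ.τ₁ := inferInstanceAs (Epi (P.π.f 0))
  have : IsIso φ.τ₂ := inferInstanceAs (IsIso (𝟙 S.X₂))
  have : Mono φ.τ₃ := inferInstanceAs (Mono (𝟙 S.X₃))
  exact (ShortComplex.exact_iff_of_epi_of_isIso_of_mono φ).2 hS

/-- The projective resolution of `S.X₃` spliced from a short exact sequence `S` with projective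
middle term and a projective resolution of `S.X₁`. -/
def spliceResolution (hS : S.ShortExact) [Projective S.X₂] (P : ProjectiveResolution S.X₁) :
    ProjectiveResolution S.X₃ where
  complex := spliceComplex P
  projective
    | 0 => ‹Projective S.X₂›
    | n + 1 => P.projective n
  π := (ChainComplex.toSingle₀Equiv _ _).symm ⟨S.g, spliceComplex_d_comp_g P⟩
  quasiIso := ⟨fun n ↦ by
    have := hS.mono_f
    cases n with
    | zero =>
      have augmentation_f_zero :=
        ChainComplex.toSingle₀Equiv_symm_apply_f_zero (C := spliceComplex P) S.g
          (spliceComplex_d_comp_g P)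
      rw [ChainComplex.quasiIsoAt₀_iff, ShortComplex.quasiIso_iff_of_zeros' _ rfl rfl rfl]
      refine (ShortComplex.exact_and_epi_g_iff_of_iso ?_).2
        ⟨exact_spliceComplex_zero P hS.exact, hS.epi_g⟩
      exact ShortComplex.isoMk (Iso.refl _) (Iso.refl _) (Iso.refl _)
        ((Category.id_comp _).trans (Category.comp_id _).symm)
        ((Category.id_comp _).trans <| augmentation_f_zero.symm.trans (Category.comp_id _).symm)
    | succ n =>
      rw [quasiIsoAt_iff_exactAt' _ _ (ChainComplex.exactAt_succ_single_obj _ _)]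
      exact exactAt_spliceComplex_succ P n⟩

variable {D : Type*} [Category* D] [Abelian D] [HasProjectiveResolutions C]

/-- Dimension shifting for left derived functors along a short exact sequence with projective middle
term. -/
def leftDerivedSuccSuccIso (hS : S.ShortExact) [Projective S.X₂] (F : C ⥤ D) [F.Additive] (i : ℕ) :
    (F.leftDerived (i + 2)).obj S.X₃ ≅ (F.leftDerived (i + 1)).obj S.X₁ :=
  let P := projectiveResolution S.X₁
  let C₁ := (F.mapHomologicalComplex (.down ℕ)).obj P.complex
  let C₃ := (F.mapHomologicalComplex (.down ℕ)).obj (spliceResolution hS P).complex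
  (spliceResolution hS P).isoLeftDerivedObj F (i + 2) ≪≫
    C₃.homologyIsoSc' (i + 3) (i + 2) (i + 1) (by simp) (by simp) ≪≫
    -- In degrees `≥ 1` the spliced complex is definitionally the shift of `P`.
    Iso.refl (C₁.sc' (i + 2) (i + 1) i).homology ≪≫
    (C₁.homologyIsoSc' (i + 2) (i + 1) i (by simp) (by simp)).symm ≪≫
    (P.isoLeftDerivedObj F (i + 1)).symm

/-- The bottom case of dimension shifting: for a right exact functor, the first left derived functor
measures the failure of injectivity of `F.map S.f`. -/
def leftDerivedOneIso (hS : S.ShortExact) [Projective S.X₂] (F : C ⥤ D) [F.Additive]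
    [Limits.PreservesFiniteColimits F] :
    (F.leftDerived 1).obj S.X₃ ≅ Limits.kernel (F.map S.f) :=
  let P := projectiveResolution S.X₁
  let C₃ := (F.mapHomologicalComplex (.down ℕ)).obj (spliceResolution hS P).complex
  (spliceResolution hS P).isoLeftDerivedObj F 1 ≪≫
    C₃.homologyIsoSc' 2 1 0 (by simp) (by simp) ≪≫
    homologyIsoKernel (C₃.sc' 2 1 0)
      (Limits.CokernelCofork.mapIsColimit _ P.isColimitCokernelCofork F) (F.map S.f)
      (F.map_comp _ _).symm

end Splice

section CommutativeAlgebra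

variable {R : Type*} [CommRing R]

lemma eq_zero_of_forall_isMaximal_mem_pow_smul_top [IsNoetherianRing R]
    {E : Type*} [AddCommGroup E] [Module R E] [Module.Finite R E] {x : E}
    (hx : ∀ m : Ideal R, m.IsMaximal → ∀ n : ℕ, x ∈ m ^ n • (⊤ : Submodule R E)) : x = 0 := by
  by_contra hx0
  have torsion_ne_top : Ideal.torsionOf R E x ≠ ⊤ := by simpa [Ideal.torsionOf_eq_top_iff] using hx0
  obtain ⟨m, hm, torsion_le⟩ := Ideal.exists_le_maximal _ torsion_ne_top
  obtain ⟨r, hr⟩ := (m.mem_iInf_smul_pow_eq_bot_iff x).1 (Submodule.mem_iInf _ |>.2 (hx m hm))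
  have one_sub_mem : 1 - (r : R) ∈ m := torsion_le (by simp [sub_smul, hr])
  exact hm.ne_top <| m.eq_top_iff_one.2 <| by simpa using m.add_mem one_sub_mem r.2

lemma isArtinianRing_quotient_maximal_pow [IsNoetherianRing R] (m : Ideal R) [hm : m.IsMaximal]
    (n : ℕ) : IsArtinianRing (R ⧸ m ^ n) := by
  rw [isArtinianRing_iff_krullDimLE_zero, Ring.krullDimLE_zero_iff]
  intro p hp
  have m_pow_le : m ^ n ≤ p.comap (algebraMap R (R ⧸ m ^ n)) :=
    Ideal.mk_ker.ge.trans (Ideal.ker_le_comap _)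
  have m_eq : m = p.comap (algebraMap R (R ⧸ m ^ n)) :=
    hm.eq_of_le (hp.comap _).ne_top ((hp.comap _).le_of_pow_le m_pow_le)
  exact Ideal.isMaximal_of_isIntegral_of_isMaximal_comap p (m_eq ▸ hm)

lemma isFiniteLength_quotient_of_maximal_pow_smul_top_le [IsNoetherianRing R]
    {F : Type*} [AddCommGroup F] [Module R F] [Module.Finite R F] (m : Ideal R) [m.IsMaximal]
    {n : ℕ} {N : Submodule R F} (hN : m ^ n • ⊤ ≤ N) : IsFiniteLength R (F ⧸ N) := by
  have := isArtinianRing_quotient_maximal_pow m n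
  have : Module.Finite (R ⧸ m ^ n) (F ⧸ m ^ n • (⊤ : Submodule R F)) :=
    .of_restrictScalars_finite R _ _
  have : IsArtinian R (F ⧸ m ^ n • (⊤ : Submodule R F)) :=
    isArtinian_of_surjective_algebraMap (Ideal.Quotient.mk_surjective (I := m ^ n))
  exact .of_surjective (isFiniteLength_iff_isNoetherian_isArtinian.2 ⟨inferInstance, this⟩)
    (Submodule.factor_surjective hN)

lemma exists_comap_subtype_pow_smul_top_le [IsNoetherianRing R]
    {F : Type*} [AddCommGroup F] [Module R F] [Module.Finite R F] (I : Ideal R)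
    (K : Submodule R F) (j : ℕ) :
    ∃ n : ℕ, (I ^ n • (⊤ : Submodule R F)).comap K.subtype ≤ I ^ j • ⊤ := by
  obtain ⟨k, hk⟩ := I.exists_pow_inf_eq_pow_smul K
  refine ⟨j + k, ?_⟩
  rw [← Submodule.map_le_map_iff_of_injective K.injective_subtype, Submodule.map_comap_subtype,
    inf_comm, hk _ le_add_self, Nat.add_sub_cancel, Submodule.map_smul'',
    Submodule.map_subtype_top]
  exact Submodule.smul_mono le_rfl inf_le_right

lemma exists_comp_inclusion_sup_eq_mkQ {F : Type*} [AddCommGroup F] [Module R F]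
    (K N : Submodule R F) {C : Submodule R K} (hC : N.comap K.subtype ≤ C) :
    ∃ φ : ↥(K ⊔ N) →ₗ[R] K ⧸ C, φ ∘ₗ Submodule.inclusion le_sup_left = C.mkQ := by
  refine ⟨Submodule.factor (inf_le_right.trans hC) ∘ₗ
    (LinearMap.quotientInfEquivSupQuotient K N).symm.toLinearMap ∘ₗ Submodule.mkQ _, ?_⟩
  ext x
  have := LinearMap.quotientInfEquivSupQuotient_symm_apply_left K N
    (Submodule.inclusion le_sup_left x) x.2
  simp [this]

lemma ker_lTensor_mkQ_smul_top_le (M K : Type*) [AddCommGroup M] [Module R M]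
    [AddCommGroup K] [Module R K] (I : Ideal R) :
    LinearMap.ker (LinearMap.lTensor M (I • ⊤ : Submodule R K).mkQ) ≤ I • ⊤ := by
  rw [lTensor_mkQ, LinearMap.range_le_iff_comap, eq_top_iff, ← TensorProduct.span_tmul_eq_top,
    Submodule.span_le]
  rintro _ ⟨p, c, rfl⟩
  have := Submodule.mem_map_of_mem (f := TensorProduct.mk R M K p) c.2
  rw [Submodule.map_smul''] at this
  exact Submodule.smul_mono le_rfl le_top this

variable {M F : Type*} [AddCommGroup M] [Module R M] [AddCommGroup F] [Module R F]
  {K : Submodule R F} {a : R}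

lemma lTensor_mkQ_smul_eq_zero_of_mem_annihilator_ker_sup {N : Submodule R F} {C : Submodule R K}
    (hC : N.comap K.subtype ≤ C)
    (ha : a ∈ Module.annihilator R (LinearMap.ker (LinearMap.lTensor M (K ⊔ N).subtype)))
    {x : TensorProduct R M K} (hx : LinearMap.lTensor M K.subtype x = 0) :
    LinearMap.lTensor M C.mkQ (a • x) = 0 := by
  obtain ⟨φ, hφ⟩ := exists_comp_inclusion_sup_eq_mkQ K N hC
  let ι : K →ₗ[R] ↥(K ⊔ N) := Submodule.inclusion le_sup_left
  have image_mem_ker : LinearMap.lTensor M (K ⊔ N).subtype (LinearMap.lTensor M ι x) = 0 := by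
    rw [← LinearMap.comp_apply, ← LinearMap.lTensor_comp]
    exact hx
  have smul_image : a • LinearMap.lTensor M ι x = 0 :=
    Submodule.mem_annihilator.1 ha _ image_mem_ker
  rw [← hφ, LinearMap.lTensor_comp, LinearMap.comp_apply, map_smul, smul_image, map_zero]

lemma mem_annihilator_ker_lTensor_subtype_of_sup_pow [IsNoetherianRing R] [Module.Finite R M]
    [Module.Finite R F]
    (ha : ∀ m : Ideal R, m.IsMaximal → ∀ n : ℕ, a ∈ Module.annihilator R
      (LinearMap.ker (LinearMap.lTensor M (K ⊔ m ^ n • ⊤).subtype))) :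
    a ∈ Module.annihilator R (LinearMap.ker (LinearMap.lTensor M K.subtype)) := by
  refine Submodule.mem_annihilator.2 fun x hx ↦
    eq_zero_of_forall_isMaximal_mem_pow_smul_top (R := R) fun m hm j ↦ ?_
  obtain ⟨n, hn⟩ := exists_comap_subtype_pow_smul_top_le m K j
  exact ker_lTensor_mkQ_smul_top_le M K (m ^ j)
    (lTensor_mkQ_smul_eq_zero_of_mem_annihilator_ker_sup hn (ha m hm n) hx)

end CommutativeAlgebra

section Tor

open MonoidalCategory

universe u

variable {R : Type u} [CommRing R] (M : ModuleCat.{u} R) {F N : Type u} [AddCommGroup F]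
  [Module R F] [AddCommGroup N] [Module R N]

lemma annihilator_tor_add_two_eq_annihilator_tor_ker [Module.Projective R F]
    {f : F →ₗ[R] N} (hf : Function.Surjective f) (i : ℕ) :
    Module.annihilator R (((Tor (ModuleCat.{u} R) (i + 2)).obj M).obj (.of R N)) =
      Module.annihilator R (((Tor (ModuleCat.{u} R) (i + 1)).obj M).obj
        (.of R (LinearMap.ker f))) :=
  have : Projective f.shortComplexKer.X₂ := (IsProjective.iff_projective F).1 ‹_›
  (leftDerivedSuccSuccIso (f.shortExact_shortComplexKer hf) ((tensoringLeft _).obj M) i)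
    |>.toLinearEquiv.annihilator_eq

lemma annihilator_tor_one_eq_annihilator_ker_lTensor [Module.Projective R F]
    {f : F →ₗ[R] N} (hf : Function.Surjective f) :
    Module.annihilator R (((Tor (ModuleCat.{u} R) 1).obj M).obj (.of R N)) =
      Module.annihilator R (LinearMap.ker (LinearMap.lTensor M (LinearMap.ker f).subtype)) :=
  have : Projective f.shortComplexKer.X₂ := (IsProjective.iff_projective F).1 ‹_›
  (leftDerivedOneIso (f.shortExact_shortComplexKer hf) ((tensoringLeft _).obj M) ≪≫
    ModuleCat.kernelIsoKer _).toLinearEquiv.annihilator_eq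

variable [IsNoetherianRing R] [Module.Finite R M] {M} {a : R}

lemma mem_annihilator_tor_one_of_isFiniteLength
    (ha : ∀ L : ModuleCat.{u} R, IsFiniteLength R L →
      a ∈ Module.annihilator R (((Tor (ModuleCat.{u} R) 1).obj M).obj L))
    (N : ModuleCat.{u} R) [Module.Finite R N] :
    a ∈ Module.annihilator R (((Tor (ModuleCat.{u} R) 1).obj M).obj N) := by
  obtain ⟨n, f, hf⟩ := Module.Finite.exists_fin' R N
  rw [annihilator_tor_one_eq_annihilator_ker_lTensor M hf]
  refine mem_annihilator_ker_lTensor_subtype_of_sup_pow fun m hm k ↦ ?_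
  let K := LinearMap.ker f ⊔ m ^ k • ⊤
  have := ha (.of R (_ ⧸ K)) (isFiniteLength_quotient_of_maximal_pow_smul_top_le m le_sup_right)
  rwa [annihilator_tor_one_eq_annihilator_ker_lTensor M K.mkQ_surjective, K.ker_mkQ] at this

theorem mem_annihilator_tor_succ_of_isFiniteLength
    (ha : ∀ L : ModuleCat.{u} R, IsFiniteLength R L →
      a ∈ Module.annihilator R (((Tor (ModuleCat.{u} R) 1).obj M).obj L)) (i : ℕ) :
    ∀ (N : ModuleCat.{u} R) [Module.Finite R N],
      a ∈ Module.annihilator R (((Tor (ModuleCat.{u} R) (i + 1)).obj M).obj N) := by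
  induction i with
  | zero => exact mem_annihilator_tor_one_of_isFiniteLength ha
  | succ i ih =>
    intro N _
    obtain ⟨n, f, hf⟩ := Module.Finite.exists_fin' R N
    rw [annihilator_tor_add_two_eq_annihilator_tor_ker M hf]
    exact ih (.of R (LinearMap.ker f))

theorem iInf_annihilator_tor_isFiniteLength_eq_finite {X : Set (ModuleCat.{u} R)}
    (hX : ∀ M ∈ X, Module.Finite R M) :
    ⨅ (i : ℕ) (_ : 0 < i) (M ∈ X) (L : ModuleCat.{u} R) (_ : IsFiniteLength R L),
        Module.annihilator R (((Tor (ModuleCat.{u} R) i).obj M).obj L) =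
      ⨅ (i : ℕ) (_ : 0 < i) (M ∈ X) (N : ModuleCat.{u} R) (_ : Module.Finite R N),
        Module.annihilator R (((Tor (ModuleCat.{u} R) i).obj M).obj N) := by
  ext a
  simp only [Submodule.mem_iInf]
  refine ⟨fun ha i hi M hM N _ ↦ ?_, fun ha i hi M hM L hL ↦ ?_⟩
  · have := hX M hM
    have := mem_annihilator_tor_succ_of_isFiniteLength (ha 1 one_pos M hM) (i - 1) N
    rwa [Nat.sub_add_cancel hi] at this
  · have := (isFiniteLength_iff_isNoetherian_isArtinian.1 hL).1
    exact ha i hi M hM L inferInstance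

end Tor

section Syzygy

variable {R : Type} [CommRing R] [IsNoetherianRing R] [IsLocalRing R]

lemma IsMinimalSyzygy.finite {d : ℕ} {N K : ModuleCat.{0} R} [Module.Finite R N]
    (hK : IsMinimalSyzygy R d N K) : Module.Finite R K := by
  induction d generalizing N with
  | zero =>
    obtain ⟨e⟩ := hK
    exact .equiv e.symm
  | succ d ih =>
    obtain ⟨L, ⟨n, f, -, -, ⟨e⟩⟩, hK⟩ := hK
    have : Module.Finite R L := .equiv e.symm
    exact ih hK

theorem stmt10_general (d : ℕ) {X : Set (ModuleCat.{0} R)} (hX : ∀ M ∈ X, Module.Finite R M) :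
    PrimeSpectrum.zeroLocus
        ((⨅ (i : ℕ) (_ : 0 < i) (M : ModuleCat.{0} R) (_ : M ∈ X)
            (N : ModuleCat.{0} R) (_ : Module.Finite R N)
            (K : ModuleCat.{0} R) (_ : IsMinimalSyzygy R d N K),
            Module.annihilator R (TorMod R i M K) : Ideal R) : Set R) ⊆
      PrimeSpectrum.zeroLocus
        ((⨅ (i : ℕ) (_ : 0 < i) (M : ModuleCat.{0} R) (_ : M ∈ X)
            (L : ModuleCat.{0} R) (_ : IsFiniteLength R L),
            Module.annihilator R (TorMod R i M L) : Ideal R) : Set R) ∧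
    PrimeSpectrum.zeroLocus
        ((⨅ (i : ℕ) (_ : 0 < i) (M : ModuleCat.{0} R) (_ : M ∈ X)
            (L : ModuleCat.{0} R) (_ : IsFiniteLength R L),
            Module.annihilator R (TorMod R i M L) : Ideal R) : Set R) =
      PrimeSpectrum.zeroLocus
        ((⨅ (i : ℕ) (_ : 0 < i) (M : ModuleCat.{0} R) (_ : M ∈ X)
            (N : ModuleCat.{0} R) (_ : Module.Finite R N),
            Module.annihilator R (TorMod R i M N) : Ideal R) : Set R) := by
  have finiteLength_eq_finite := iInf_annihilator_tor_isFiniteLength_eq_finite hX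
  refine ⟨PrimeSpectrum.zeroLocus_anti_mono fun a ha ↦ ?_,
    congrArg (fun I : Ideal R ↦ PrimeSpectrum.zeroLocus (I : Set R)) finiteLength_eq_finite⟩
  have kills_finite := finiteLength_eq_finite.le ha
  simp only [SetLike.mem_coe, Submodule.mem_iInf] at kills_finite ⊢
  exact fun i hi M hM N _ K hK ↦ kills_finite i hi M hM K hK.finite

end Syzygy

/-- Let `R` be a noetherian local ring of Krull dimension `d` and `X` a
class of finitely generated `R`-modules. Then
`V(⋂ Ann Tor_i(M, Ω^d N)) ⊆ V(⋂ Ann Tor_i(M, L)) ⊆ V(⋂ Ann Tor_i(M, N))`, where `i > 0`,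
`M ∈ X`, `N` ranges over finitely generated modules, `L` over finite-length modules, and
`Ω^d N` is the `d`-th syzygy in a minimal free resolution of `N`. -/
theorem stmt10 (R : Type) [CommRing R] [IsNoetherianRing R] [IsLocalRing R]
    (d : ℕ) (hd : ringKrullDim R = (d : WithBot ℕ∞))
    (X : Set (ModuleCat.{0} R)) (hX : ∀ M ∈ X, Module.Finite R M) :
    PrimeSpectrum.zeroLocus
        ((⨅ (i : ℕ) (_ : 0 < i) (M : ModuleCat.{0} R) (_ : M ∈ X)
            (N : ModuleCat.{0} R) (_ : Module.Finite R N)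
            (K : ModuleCat.{0} R) (_ : IsMinimalSyzygy R d N K),
            Module.annihilator R (TorMod R i M K) : Ideal R) : Set R) ⊆
      PrimeSpectrum.zeroLocus
        ((⨅ (i : ℕ) (_ : 0 < i) (M : ModuleCat.{0} R) (_ : M ∈ X)
            (L : ModuleCat.{0} R) (_ : IsFiniteLength R L),
            Module.annihilator R (TorMod R i M L) : Ideal R) : Set R) ∧
    PrimeSpectrum.zeroLocus
        ((⨅ (i : ℕ) (_ : 0 < i) (M : ModuleCat.{0} R) (_ : M ∈ X)
            (L : ModuleCat.{0} R) (_ : IsFiniteLength R L),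
            Module.annihilator R (TorMod R i M L) : Ideal R) : Set R) ⊆
      PrimeSpectrum.zeroLocus
        ((⨅ (i : ℕ) (_ : 0 < i) (M : ModuleCat.{0} R) (_ : M ∈ X)
            (N : ModuleCat.{0} R) (_ : Module.Finite R N),
            Module.annihilator R (TorMod R i M N) : Ideal R) : Set R) :=
  (stmt10_general d hX).imp_right Eq.subset

end
end
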